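/- arXiv:1107.3672 — 2 statements merged into one kernel-verified Lean document; each statement's English description precedes it below -/
import Mathlib

section
/- Let r, s be integers with 2 ≤ r−1 ≤ s ≤ 2r−4, let S ⊂ P^r be an irreducible, reduced, nondegenerate projective surface of degree s, sectional genus π and arithmetic genus p_a(S), and let C ⊂ S be an irreducible, reduced, nondegenerate projective curve of degree d ≥ s⁴/(2(r−2)) and arithmetic genus p_a(C). Then p_a(C) ≤ G*(r,d,s,π,p_a(S)). -/
/-!
The proof works in the function field `F` of the surface. After dehomogenizing by a linear form
`l₀`, the forms of degree `i` become a subspace `U i` of `F` and the forms in the ideal of the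
curve a subspace `V i ≤ U i`; both grow according to the Hilbert polynomials (`exists_chart`,
`exists_frame`, `genus_le`).

*Restriction to a hyperplane section.* Let `z₁ = l₁/l₀` and `K = ℂ(z₁)`. For a saturated filtration the
first difference of the dimensions over `ℂ` equals the dimension over `K` of the `K`-span
(`finrank_span_pencil`). The spans model sections of sheaves on the generic hyperplane section
through `l₀ = l₁ = 0`, a curve of degree `s` and arithmetic genus `π` over `K`. For a suitable
`l₁` the field `K` is algebraically closed in `F` (`exists_closed`), which replaces Bertini's theorem.

*Clifford's inequality.* On such a curve a special space `E` of sections of a rank one sheaf `M`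
multiplies the dual module `Psi M`, defined by a residue pairing, into `Psi U`. Duality in the form of
two inequalities (`finrank_Psi_le`, `le_finrank_Psi`) and Hopf's lemma on products of subspaces
(`hopf`) give `clifford`. Applied to the hyperplane series it shows `2π + 2 ≤ s` when
`s ≤ 2r - 4` (`sectional_genus_le`).

*The count.* Write `d - 1 = ms + ε`. The saturated twist `til U V N₀ i` of the ideal of the curve
vanishes for `i = m` by Bezout; for `i = m + 1` its dimension is bounded by Clifford's inequality, and
for larger `i` its restriction to the curve is nonspecial because `2π + 2 ≤ s`. Summing the
dimensions and comparing with the Hilbert polynomials bounds the genus (`core_bound`).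
-/

open scoped BigOperators

noncomputable section

/-- The homogeneous coordinate ring of `ℙ^{n-1}` over `ℂ`: polynomials in `n` variables. -/
abbrev MPoly (n : ℕ) : Type := MvPolynomial (Fin n) ℂ

/-- An ideal is homogeneous if it contains all homogeneous components of its members. -/
def IsHomogIdeal {n : ℕ} (I : Ideal (MPoly n)) : Prop :=
  ∀ f ∈ I, ∀ k : ℕ, MvPolynomial.homogeneousComponent k f ∈ I

/-- The degree-`k` graded piece of the homogeneous coordinate ring of the subscheme `V(I)`. -/
def degQ {n : ℕ} (I : Ideal (MPoly n)) (k : ℕ) : Submodule ℂ (MPoly n ⧸ I) :=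
  (MvPolynomial.homogeneousSubmodule (Fin n) ℂ k).map (Ideal.Quotient.mkₐ ℂ I).toLinearMap

/-- The graded pieces, indexed by `ℤ` (zero in negative degrees). -/
def degQZ {n : ℕ} (I : Ideal (MPoly n)) (t : ℤ) : Submodule ℂ (MPoly n ⧸ I) :=
  if 0 ≤ t then degQ I t.toNat else ⊥

/-- The Hilbert function of the closed subscheme `V(I) ⊆ ℙ^{n-1}`. -/
def hilbNat {n : ℕ} (I : Ideal (MPoly n)) (t : ℤ) : ℕ :=
  Module.finrank ℂ (degQZ I t)

/-- The Hilbert function, as an integer-valued function. -/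
def hilbZ {n : ℕ} (I : Ideal (MPoly n)) (t : ℤ) : ℤ := (hilbNat I t : ℤ)

/-- The irrelevant maximal ideal `(x_0, …, x_{n-1})`. -/
def mId (n : ℕ) : Ideal (MPoly n) := Ideal.span (Set.range MvPolynomial.X)

/-- The space of degree-`t` graded module homomorphisms `m^k → R/I`. -/
def gradedHomSub {n : ℕ} (I : Ideal (MPoly n)) (k : ℕ) (t : ℤ) :
    Submodule ℂ ((mId n ^ k : Ideal (MPoly n)) →ₗ[MPoly n] (MPoly n ⧸ I)) where
  carrier := {φ | ∀ (j : ℕ) (f : MPoly n) (hf : f ∈ mId n ^ k),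
    f ∈ MvPolynomial.homogeneousSubmodule (Fin n) ℂ j → φ ⟨f, hf⟩ ∈ degQZ I ((j : ℤ) + t)}
  add_mem' := by
    intro a b ha hb j f hf hj
    simpa using Submodule.add_mem _ (ha j f hf hj) (hb j f hf hj)
  zero_mem' := by
    intro j f hf hj
    simpa using Submodule.zero_mem _
  smul_mem' := by
    intro c φ hφ j f hf hj
    simpa using Submodule.smul_mem _ c (hφ j f hf hj)

/-- `h⁰(X, 𝒪_X(t))` for `X = V(I)`: the stable value of the dimensions of the graded Hom
modules `Hom(m^k, R/I)_t` (the Deligne formula for twisted global sections). -/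
def h0Nat {n : ℕ} (I : Ideal (MPoly n)) (t : ℤ) : ℕ :=
  ⨆ k : ℕ, Module.finrank ℂ (gradedHomSub I k t)

/-- `h¹(ℙ^{n-1}, 𝓘_X(t)) = h⁰(X, 𝒪_X(t)) − h_X(t)` (valid for the saturated ideal of `X`). -/
def h1INat {n : ℕ} (I : Ideal (MPoly n)) (t : ℤ) : ℕ := h0Nat I t - hilbNat I t

/-- The dimension over `ℂ` of the Hartshorne–Rao module `M(X) = ⊕_t H¹(ℙ, 𝓘_X(t))`. -/
def raoDim {n : ℕ} (I : Ideal (MPoly n)) : ℕ := ∑ᶠ t : ℤ, h1INat I t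

/-- Arithmetically Cohen–Macaulay (for an integral curve): the Hartshorne–Rao module vanishes. -/
def IsACM {n : ℕ} (I : Ideal (MPoly n)) : Prop := ∀ t : ℤ, h0Nat I t = hilbNat I t

/-- Saturation of an ideal with respect to the irrelevant maximal ideal. -/
def satIdeal {n : ℕ} (I : Ideal (MPoly n)) : Ideal (MPoly n) where
  carrier := {f | ∃ k : ℕ, ∀ j : Fin n, MvPolynomial.X j ^ k * f ∈ I}
  zero_mem' := ⟨0, fun j => by simpa using I.zero_mem⟩
  add_mem' := by
    rintro f g ⟨k, hk⟩ ⟨l, hl⟩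
    refine ⟨k + l, fun j => ?_⟩
    have h1 : MvPolynomial.X (R := ℂ) j ^ (k + l) * (f + g)
        = MvPolynomial.X j ^ l * (MvPolynomial.X j ^ k * f)
          + MvPolynomial.X j ^ k * (MvPolynomial.X j ^ l * g) := by ring
    rw [h1]
    exact I.add_mem (I.mul_mem_left _ (hk j)) (I.mul_mem_left _ (hl j))
  smul_mem' := by
    rintro c f ⟨k, hk⟩
    refine ⟨k, fun j => ?_⟩
    have h1 : MvPolynomial.X (R := ℂ) j ^ k * (c • f) = c * (MvPolynomial.X j ^ k * f) := by
      rw [smul_eq_mul]; ring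
    rw [h1]
    exact I.mul_mem_left _ (hk j)

/-- The hyperplane section of `V(I)` by the hyperplane `{ℓ = 0}`, as a closed subscheme
(its saturated homogeneous ideal). -/
def sect {n : ℕ} (I : Ideal (MPoly n)) (ℓ : MPoly n) : Ideal (MPoly n) :=
  satIdeal (I ⊔ Ideal.span {ℓ})

/-- A property `P` holds for a *general* `k`-tuple of linear forms (hyperplanes): it holds on a
nonempty Zariski-open subset of the space of coefficients. -/
def GenericForms (n k : ℕ) (P : (Fin k → MPoly n) → Prop) : Prop :=
  ∃ Q : MvPolynomial (Fin k × Fin n) ℂ, Q ≠ 0 ∧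
    ∀ c : Fin k → Fin n → ℂ, MvPolynomial.eval (fun p => c p.1 p.2) Q ≠ 0 →
      P fun t => ∑ j : Fin n, MvPolynomial.C (c t j) * MvPolynomial.X j

/-- `V(I) ⊆ ℙ^{n-1}` is nondegenerate: contained in no hyperplane. -/
def Nondeg {n : ℕ} (I : Ideal (MPoly n)) : Prop :=
  ∀ f ∈ MvPolynomial.homogeneousSubmodule (Fin n) ℂ 1, f ∈ I → f = 0

/-- `V(I)` is an integral curve: `I` homogeneous prime, with cone of Krull dimension 2. -/
def IsCurve {n : ℕ} (I : Ideal (MPoly n)) : Prop :=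
  IsHomogIdeal I ∧ I.IsPrime ∧ ringKrullDim (MPoly n ⧸ I) = 2

/-- `V(I)` is an integral surface: `I` homogeneous prime, with cone of Krull dimension 3. -/
def IsSurface {n : ℕ} (I : Ideal (MPoly n)) : Prop :=
  IsHomogIdeal I ∧ I.IsPrime ∧ ringKrullDim (MPoly n ⧸ I) = 3

/-- The curve `V(I)` has degree `d` and arithmetic genus `g`: its Hilbert polynomial is
`d·t + 1 − g`. -/
def CurveInv {n : ℕ} (I : Ideal (MPoly n)) (d g : ℤ) : Prop :=
  ∃ N : ℤ, ∀ t : ℤ, N ≤ t → hilbZ I t = d * t + 1 - g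

/-- The surface `V(I)` has degree `s`, sectional genus `π` and arithmetic genus `pa`:
its Hilbert polynomial is `s·choose(t+1, 2) + (1 − π)·t + 1 + pa`. -/
def SurfInv {n : ℕ} (I : Ideal (MPoly n)) (s π pa : ℤ) : Prop :=
  ∃ N : ℤ, ∀ t : ℤ, N ≤ t → hilbZ I t = s * (t * (t + 1) / 2) + (1 - π) * t + 1 + pa

/-- `V(IC)` is not contained in any integral surface of degree `< s`. -/
def NotInSurfDegLT {n : ℕ} (IC : Ideal (MPoly n)) (s : ℤ) : Prop :=
  ∀ (T : Ideal (MPoly n)) (s' π' pa' : ℤ), IsSurface T → SurfInv T s' π' pa' → s' < s →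
    ¬ T ≤ IC

/-- `V(IC)` is not contained in any integral surface of degree `s` with sectional genus `> π`. -/
def NotInSurfSecGT {n : ℕ} (IC : Ideal (MPoly n)) (s π : ℤ) : Prop :=
  ∀ (T : Ideal (MPoly n)) (π' pa' : ℤ), IsSurface T → SurfInv T s π' pa' → π < π' →
    ¬ T ≤ IC

/-- `V(IC)` is not contained in any integral surface of degree `s` with arithmetic genus `< p`. -/
def NotInSurfGenLT {n : ℕ} (IC : Ideal (MPoly n)) (s p : ℤ) : Prop :=
  ∀ (T : Ideal (MPoly n)) (π' pa' : ℤ), IsSurface T → SurfInv T s π' pa' → pa' < p →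
    ¬ T ≤ IC

/-- `binom2 z = z.choose 2` for integers. -/
def binom2 (z : ℤ) : ℤ := z * (z - 1) / 2

/-- The bound `G*(r,d,s,π,p)` of Di Gennaro–Franco, with `m = (d-1)/s`, `ε = (d-1) % s`. -/
def Gstar (r d s π p : ℤ) : ℤ :=
  binom2 ((d - 1) / s) * s + ((d - 1) / s) * ((d - 1) % s + π) - p
    + max 0 ((2 * π - (s - 1 - (d - 1) % s)) / 2)

/-- The numerical function `h_{r,d,s,π}`. -/
def hF (r d s π : ℤ) (i : ℤ) : ℤ :=
  if 1 ≤ i ∧ i ≤ (d - 1) / s then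
    1 - π + i * s - max 0 ((s - r + 1) - π - i + 1)
  else if i = (d - 1) / s + 1 then
    d - max 0 ((2 * π - (s - 1 - (d - 1) % s)) / 2)
  else if (d - 1) / s + 2 ≤ i then d
  else 0

/-- The threshold `d₀(r)`. -/
def d0 (r : ℤ) : ℤ :=
  if r ≤ 6 then 16 * (r - 2) * (2 * r - 3)
  else if r ≤ 11 then 8 * (r - 2) ^ 3
  else 2 ^ (r.toNat + 1)

end
noncomputable section

/-- The affine cone of `V(I)`: common zeroes of the elements of `I`. -/
def zeroCone {n : ℕ} (I : Ideal (MPoly n)) : Set (Fin n → ℂ) :=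
  {a | ∀ f ∈ I, MvPolynomial.eval a f = 0}

/-- Jacobian-criterion smoothness: at every nonzero point of the affine cone (of dimension `c`)
the gradients of the equations span a subspace of dimension `n - c`. -/
def IsSmooth {n : ℕ} (I : Ideal (MPoly n)) (c : ℕ) : Prop :=
  ∀ a ∈ zeroCone I, a ≠ 0 →
    Module.finrank ℂ (Submodule.span ℂ
      {g : Fin n → ℂ | ∃ f ∈ I, g = fun j => MvPolynomial.eval a (MvPolynomial.pderiv j f)})
      = n - c

/-- Castelnuovo's bound for the genus of a nondegenerate integral curve of degree `d`
in `ℙ^R`. -/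
def castelG (R d : ℤ) : ℤ :=
  binom2 ((d - 1) / (R - 1)) * (R - 1) + ((d - 1) / (R - 1)) * ((d - 1) % (R - 1))

/-- The ideal of the projective cone (from `ℙ^{n-1}` to `ℙ^n`) over `V(I)`. -/
def coneIdeal {n : ℕ} (I : Ideal (MPoly n)) : Ideal (MPoly (n + 1)) :=
  Ideal.map (MvPolynomial.rename (Fin.castSucc : Fin n → Fin (n + 1))) I

/-- `J` is the (saturated homogeneous) ideal of a line in `ℙ^{n-1}`: it is generated by
`n - 2` linearly independent linear forms. -/
def IsLineIdeal {n : ℕ} (J : Ideal (MPoly n)) : Prop :=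
  ∃ V : Submodule ℂ (MPoly n), V ≤ MvPolynomial.homogeneousSubmodule (Fin n) ℂ 1 ∧
    Module.finrank ℂ V = n - 2 ∧ J = Ideal.span (V : Set (MPoly n))

/-- `V(T) ⊆ ℙ^{n-1}` is a smooth rational normal scroll surface: a smooth nondegenerate
integral surface of minimal degree `n - 2` (with sectional and arithmetic genus `0`)
containing a line (which rules out the Veronese surface). -/
def IsSmoothRNScroll {n : ℕ} (T : Ideal (MPoly n)) : Prop :=
  IsSurface T ∧ Nondeg T ∧ IsSmooth T 3 ∧ SurfInv T ((n : ℤ) - 2) 0 0 ∧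
    ∃ J : Ideal (MPoly n), IsLineIdeal J ∧ T ≤ J

/-- The linear projection on points determined by the matrix `L`. -/
def projPt {nb ns : ℕ} (L : Fin ns → Fin nb → ℂ) (a : Fin nb → ℂ) : Fin ns → ℂ :=
  fun t => ∑ j, L t j * a j

/-- The substitution algebra homomorphism determined by the matrix `L` (pullback of the
linear projection `ℙ^{nb-1} ⇢ ℙ^{ns-1}`). -/
def substHom {nb ns : ℕ} (L : Fin ns → Fin nb → ℂ) : MPoly ns →ₐ[ℂ] MPoly nb :=
  MvPolynomial.aeval fun t => ∑ j, MvPolynomial.C (L t j) * MvPolynomial.X j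

/-- The linear projection given by `L` maps `V(I')` isomorphically onto `V(I)`: the center of
projection misses `V(I')`, `V(I)` is the image, and the projection is (projectively) bijective
from `V(I')` onto `V(I)`. -/
def IsIsoProjection {nb ns : ℕ} (L : Fin ns → Fin nb → ℂ)
    (I' : Ideal (MPoly nb)) (I : Ideal (MPoly ns)) : Prop :=
  I = I'.comap (substHom L) ∧
  (∀ a ∈ zeroCone I', a ≠ 0 → projPt L a ≠ 0) ∧
  (∀ a ∈ zeroCone I', ∀ b ∈ zeroCone I', a ≠ 0 → b ≠ 0 →
    (∃ c : ℂ, c ≠ 0 ∧ projPt L a = c • projPt L b) → ∃ c : ℂ, c ≠ 0 ∧ a = c • b) ∧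
  (∀ y ∈ zeroCone I, y ≠ 0 → ∃ a ∈ zeroCone I', a ≠ 0 ∧ ∃ c : ℂ, c ≠ 0 ∧ y = c • projPt L a)

/-- `t` bounds the Castelnuovo–Mumford regularity of the surface `V(I) ⊆ ℙ^{n-1}`:
for every `t' ≥ t`, `H^i(ℙ, 𝓘(t'-i)) = 0` for all `i ≥ 1`, expressed through the standard
inductive characterization by successive general hyperplane sections. -/
def IsRegBound {n : ℕ} (I : Ideal (MPoly n)) (t : ℤ) : Prop :=
  GenericForms n 2 fun L => ∀ t' : ℤ, t ≤ t' →
    h1INat I (t' - 1) = 0 ∧ h1INat (sect I (L 0)) (t' - 1) = 0 ∧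
      h1INat (sect (sect I (L 0)) (L 1)) (t' - 1) = 0

end

/-! ### Products of subspaces of a field -/

namespace CliffordBound
open Module

section Hopf
variable {K F : Type*} [Field K] [Field F] [Algebra K F]

/-- The multiple `e · A` of a `K`-subspace `A` of the field `F`. -/
abbrev sc (e : F) (A : Submodule K F) : Submodule K F := A.map (LinearMap.mulLeft K e)

theorem mem_sc {e x : F} {A : Submodule K F} : x ∈ sc e A ↔ ∃ a ∈ A, e * a = x := by
  simp [sc, Submodule.mem_map]

theorem mul_mem_sc {e a : F} {A : Submodule K F} (ha : a ∈ A) : e * a ∈ sc e A :=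
  mem_sc.2 ⟨a, ha, rfl⟩

theorem sc_le {e : F} {A B : Submodule K F} : sc e A ≤ B ↔ ∀ a ∈ A, e * a ∈ B := by
  simp [sc, SetLike.le_def]

theorem finrank_sc {e : F} (he : e ≠ 0) (A : Submodule K F) :
    finrank K (sc e A) = finrank K A :=
  (LinearEquiv.finrank_eq (Submodule.equivMapOfInjective _
    (fun x y h => mul_left_cancel₀ he (by simpa using h)) A)).symm

/-- An element stabilizing a nonzero finite-dimensional subspace is algebraic. -/
theorem isAlgebraic_of_stable {A : Submodule K F} [FiniteDimensional K A] (hA : A ≠ ⊥) {x : F}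
    (h : ∀ a ∈ A, x * a ∈ A) : IsAlgebraic K x :=
  (isIntegral_of_smul_mem_submodule A hA ((Submodule.fg_iff_finiteDimensional A).2 inferInstance)
    x h).isAlgebraic

/-- Induction on `dim B`. Fix `b ∈ B`. If `(B/b) A ⊆ A`, then `B/b` consists of algebraic elements
and `dim B = 1`. Otherwise some `e = a/b` moves part of `B` outside `A`, and the pair `A, B` is
replaced by `A + eB` and `B ∩ e⁻¹A`, which has the same total dimension and no larger product. -/
theorem hopf_aux (hK : ∀ f : F, IsAlgebraic K f → f ∈ (algebraMap K F).range) (n : ℕ) :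
    ∀ A B : Submodule K F, FiniteDimensional K A → FiniteDimensional K B → A ≠ ⊥ → B ≠ ⊥ →
    finrank K B ≤ n → finrank K A + finrank K B ≤ finrank K (A * B : Submodule K F) + 1 := by
  induction n with
  | zero =>
    intro A B _ _ hA hB hn
    exact absurd (Submodule.finrank_eq_zero.1 (Nat.le_zero.1 hn)) hB
  | succ n ih =>
    intro A B _ _ hA hB hn
    obtain ⟨b, hb, hb0⟩ := B.ne_bot_iff.1 hB
    have fAB : FiniteDimensional K (A * B : Submodule K F) := by
      rw [← Submodule.fg_iff_finiteDimensional] at *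
      exact Submodule.FG.mul ‹_› ‹_›
    by_cases H : ∀ a ∈ A, ∀ b' ∈ B, a / b * b' ∈ A
    · have hB1 : B ≤ Submodule.span K {b} := by
        intro b' hb'
        have : IsAlgebraic K (b' / b) := isAlgebraic_of_stable hA fun a ha => by
          have := H a ha b' hb'
          rwa [show b' / b * a = a / b * b' by ring]
        obtain ⟨c, hc⟩ := hK _ this
        rw [Submodule.mem_span_singleton]
        refine ⟨c, ?_⟩
        rw [Algebra.smul_def, hc]; field_simp
      have h1 : finrank K B ≤ 1 := (Submodule.finrank_mono hB1).trans (finrank_span_singleton hb0).le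
      have h2 : finrank K A ≤ finrank K (A * B : Submodule K F) := by
        rw [← finrank_sc hb0 A]
        exact Submodule.finrank_mono (sc_le.2 fun a ha => by
          rw [mul_comm b a]; exact Submodule.mul_mem_mul ha hb)
      omega
    · push Not at H
      obtain ⟨a, ha, b', hb', hab⟩ := H
      have ha0 : a ≠ 0 := by rintro rfl; simp at hab
      set e := a / b with he
      have he0 : e ≠ 0 := div_ne_zero ha0 hb0
      set B' := B ⊓ A.comap (LinearMap.mulLeft K e)
      have hsc : sc e B' = sc e B ⊓ A := by
        ext x; simp only [mem_sc, Submodule.mem_inf, B', Submodule.mem_comap,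
          LinearMap.mulLeft_apply]
        constructor
        · rintro ⟨c, ⟨h1, h2⟩, rfl⟩; exact ⟨⟨c, h1, rfl⟩, h2⟩
        · rintro ⟨⟨c, h1, rfl⟩, h2⟩; exact ⟨c, ⟨h1, h2⟩, rfl⟩
      have hB' : B' ≤ B := inf_le_left
      have fB' : FiniteDimensional K B' := Submodule.finiteDimensional_of_le hB'
      have hlt : finrank K B' < finrank K B := by
        apply Submodule.finrank_lt_finrank_of_lt
        refine lt_of_le_of_ne hB' fun h => hab ?_
        rw [← h] at hb'
        exact hb'.2
      have hne : B' ≠ ⊥ := by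
        rw [Submodule.ne_bot_iff]
        refine ⟨b, ⟨hb, ?_⟩, hb0⟩
        change e * b ∈ A
        rw [he]; field_simp; exact ha
      have := ih (A ⊔ sc e B) B' inferInstance fB' (fun h => hA (by
        rw [eq_bot_iff, ← h]; exact le_sup_left)) hne (by omega)
      have hsub : (A ⊔ sc e B) * B' ≤ A * B := by
        rw [Submodule.sup_mul]
        refine sup_le (mul_le_mul' le_rfl hB') ?_
        rw [Submodule.mul_le]
        intro x hx y hy
        obtain ⟨c, hc, rfl⟩ := mem_sc.1 hx
        rw [show e * c * y = (e * y) * c by ring]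
        exact Submodule.mul_mem_mul hy.2 hc
      have h3 := Submodule.finrank_mono hsub
      have h4 := Submodule.finrank_sup_add_finrank_inf_eq A (sc e B)
      rw [inf_comm, ← hsc, finrank_sc he0, finrank_sc he0] at h4
      omega

/-- The linear analogue of the Cauchy–Davenport inequality (Hopf's lemma): if `K` is algebraically
closed in `F`, then `dim A + dim B ≤ dim AB + 1` for nonzero finite-dimensional subspaces. The
proof replaces `(A, B)` by its linear Dyson transform `(A + eB, B ∩ e⁻¹A)`. -/
theorem hopf (hK : ∀ f : F, IsAlgebraic K f → f ∈ (algebraMap K F).range)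
    (A B : Submodule K F) [FiniteDimensional K A] [FiniteDimensional K B]
    (hA : A ≠ ⊥) (hB : B ≠ ⊥) :
    finrank K A + finrank K B ≤ finrank K (A * B : Submodule K F) + 1 :=
  hopf_aux hK _ A B inferInstance inferInstance hA hB le_rfl

end Hopf
end CliffordBound

/-! ### Filtrations modelling sheaves on a curve -/

namespace CliffordBound
open Module

section Good
variable {K F : Type*} [Field K] [Field F] [Algebra K F]

/-- A filtration of `K`-subspaces of `F` that, from degree `N₀` on, is generated by its first
step under multiplication by `1` and `z` and has linearly growing dimension `s·k + χ`. It models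
the twists `H⁰(L(k))` of a torsion-free rank one sheaf on a curve with a degree `s` polarization,
the pencil being given by the sections `1` and `z`. -/
structure GoodSeq (z : F) (N₀ : ℕ) (s χ : ℤ) (M : ℕ → Submodule K F) : Prop where
  fd : ∀ k, FiniteDimensional K (M k)
  mono : ∀ k, M k ≤ M (k + 1)
  zmul : ∀ k, ∀ x ∈ M k, z * x ∈ M (k + 1)
  gen : ∀ k, N₀ ≤ k → M (k + 1) ≤ M k ⊔ sc z (M k)
  dim : ∀ k, N₀ ≤ k → (finrank K (M k) : ℤ) = s * k + χ

namespace GoodSeq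
variable {z : F} {N₀ : ℕ} {s χ : ℤ} {M : ℕ → Submodule K F}

theorem le (h : GoodSeq z N₀ s χ M) {i j : ℕ} (hij : i ≤ j) : M i ≤ M j :=
  monotone_nat_of_le_succ h.mono hij

theorem zpow_mul (h : GoodSeq z N₀ s χ M) (i k : ℕ) {x : F} (hx : x ∈ M k) :
    z ^ i * x ∈ M (k + i) := by
  induction i with
  | zero => simpa
  | succ i ih => rw [pow_succ', mul_assoc]; exact h.zmul _ _ ih

/-- Dimension counting turns generation into saturation. -/
theorem sat1 (h : GoodSeq z N₀ s χ M) (hz : z ≠ 0) {j : ℕ} (hj : N₀ ≤ j) {f : F}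
    (h1 : f ∈ M (j + 1)) (h2 : z * f ∈ M (j + 1)) : f ∈ M j := by
  have := h.fd
  have e1 : M (j + 1) ⊔ sc z (M (j + 1)) = M (j + 2) :=
    le_antisymm (sup_le (h.mono _) (sc_le.2 (h.zmul _))) (h.gen _ (by omega))
  have e2 := Submodule.finrank_sup_add_finrank_inf_eq (M (j + 1)) (sc z (M (j + 1)))
  rw [e1, finrank_sc hz] at e2
  have d0 := h.dim j hj
  have d1 := h.dim (j + 1) (by omega)
  have d2 := h.dim (j + 2) (by omega)
  have hle : sc z (M j) ≤ M (j + 1) ⊓ sc z (M (j + 1)) :=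
    le_inf (sc_le.2 (h.zmul _)) (Submodule.map_mono (h.mono _))
  have heq : sc z (M j) = M (j + 1) ⊓ sc z (M (j + 1)) := by
    apply Submodule.eq_of_le_of_finrank_eq hle
    rw [finrank_sc hz]
    push_cast at *
    have : (finrank K (M (j + 2)) : ℤ) + finrank K (M (j + 1) ⊓ sc z (M (j + 1)) : Submodule K F)
      = finrank K (M (j + 1)) + finrank K (M (j + 1)) := by exact_mod_cast e2
    zify
    linarith
  have : z * f ∈ sc z (M j) := by
    rw [heq]; exact ⟨h2, mul_mem_sc h1⟩
  obtain ⟨a, ha, hza⟩ := mem_sc.1 this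
  rwa [← mul_left_cancel₀ hz hza]

end GoodSeq

/-- Saturation in one step propagates to several steps. -/
theorem sat_pow {k : Type*} [Field k] [Algebra k F] {z : F} {N₀ : ℕ} {M : ℕ → Submodule k F}
    (mono : ∀ k, M k ≤ M (k + 1)) (zmul : ∀ k, ∀ x ∈ M k, z * x ∈ M (k + 1))
    (sat : ∀ j, N₀ ≤ j → ∀ f, f ∈ M (j + 1) → z * f ∈ M (j + 1) → f ∈ M j)
    (k : ℕ) : ∀ j, N₀ ≤ j → ∀ f, f ∈ M (j + k) → z ^ k * f ∈ M (j + k) → f ∈ M j := by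
  have le : ∀ {i j : ℕ}, i ≤ j → M i ≤ M j := fun hij => monotone_nat_of_le_succ mono hij
  have desc : ∀ i j, N₀ ≤ j → ∀ f, f ∈ M (j + i) → z * f ∈ M (j + 1) → f ∈ M j := by
    intro i
    induction i with
    | zero => intro j _ f hf _; exact hf
    | succ i ih =>
      intro j hj f hf hzf
      exact ih j hj f (sat (j + i) (by omega) f hf (le (by omega) hzf)) hzf
  induction k with
  | zero => intro j _ f hf _; exact hf
  | succ k ih =>
    intro j hj f hf hzf
    rcases Nat.eq_zero_or_pos k with rfl | hk
    · exact sat j hj f hf (by simpa using hzf)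
    have hzf' : z ^ k * (z * f) ∈ M (j + (k + 1)) := by
      rwa [← mul_assoc, ← pow_succ]
    have g2 : z * f ∈ M (j + 2) := ih (j + 2) (by omega) _
      (by have := zmul _ _ hf; exact le (by omega) this) (le (by omega) hzf')
    have f1 : f ∈ M (j + 1) := desc k (j + 1) (by omega) f (by convert hf using 2; omega) g2
    have g1 : z * f ∈ M (j + 1) := ih (j + 1) (by omega) _ (le (by omega) g2)
      (le (by omega) hzf')
    exact sat j hj f f1 g1

namespace GoodSeq
variable {z : F} {N₀ : ℕ} {s χ : ℤ} {M : ℕ → Submodule K F}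

theorem sat (h : GoodSeq z N₀ s χ M) (hz : z ≠ 0) (k : ℕ) {j : ℕ} (hj : N₀ ≤ j) {f : F}
    (h1 : f ∈ M (j + k)) (h2 : z ^ k * f ∈ M (j + k)) : f ∈ M j :=
  sat_pow h.mono h.zmul (fun _ hj _ h1 h2 => h.sat1 hz hj h1 h2) k j hj f h1 h2

theorem not_mem_range (h : GoodSeq z N₀ s χ M) (hs : 0 < s) : z ∉ (algebraMap K F).range := by
  rintro ⟨c, rfl⟩
  have := h.fd
  have h1 : M (N₀ + 1) ≤ M N₀ := (h.gen N₀ le_rfl).trans (sup_le le_rfl (sc_le.2 fun a ha => by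
    rw [← Algebra.smul_def]; exact (M N₀).smul_mem c ha))
  have h2 := Submodule.finrank_mono h1
  have d0 := h.dim N₀ le_rfl
  have d1 := h.dim (N₀ + 1) (by omega)
  push_cast at d1
  have : (finrank K (M (N₀ + 1)) : ℤ) ≤ finrank K (M N₀) := by exact_mod_cast h2
  linarith

end GoodSeq
end Good

section Clifford
variable {K C F : Type*} [Field K] [Field C] [Field F] [Algebra K C] [Algebra C F] [Algebra K F]
  [IsScalarTower K C F]

/-- The field `C` generated over `K` by `t`, with a `K`-linear residue functional whose associated pairing
is nondegenerate; for `C = K(t)` it is the coefficient of `t⁻¹` in the Laurent expansion. -/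
structure IsResidue (t : C) (res : C →ₗ[K] K) : Prop where
  pow : ∀ n : ℤ, res (t ^ n) = if n = -1 then 1 else 0
  nondeg : ∀ c, (∀ n : ℤ, res (t ^ n * c) = 0) → c = 0
  van : ∀ c, ∃ n₀ : ℤ, ∀ n, n₀ ≤ n → res (t ^ n * c) = 0
  frac : ∀ c : C, ∃ p q : Polynomial K, q ≠ 0 ∧ Polynomial.aeval t q * c = Polynomial.aeval t p

variable {t : C} {res : C →ₗ[K] K} {N₀ : ℕ} {s χ : ℤ} {M U : ℕ → Submodule K F}

theorem IsResidue.ne_zero (hres : IsResidue t res) : t ≠ 0 := by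
  rintro rfl
  have := hres.pow (-1)
  simp at this

theorem GoodSeq.mem_span (h : GoodSeq (algebraMap C F t) N₀ s χ M) {N : ℕ} (hN : N₀ ≤ N) (k : ℕ)
    {x : F} (hx : x ∈ M k) : x ∈ Submodule.span C (M N : Set F) := by
  have key : ∀ i, ∀ x ∈ M (N + i), x ∈ Submodule.span C (M N : Set F) := by
    intro i
    induction i with
    | zero => intro x hx; exact Submodule.subset_span hx
    | succ i ih =>
      intro x hx
      obtain ⟨a, ha, b, hb, rfl⟩ := Submodule.mem_sup.1 (h.gen (N + i) (by omega) hx)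
      obtain ⟨c, hc, rfl⟩ := mem_sc.1 hb
      refine Submodule.add_mem _ (ih _ ha) ?_
      rw [← Algebra.smul_def]
      exact Submodule.smul_mem _ _ (ih _ hc)
  exact key k x (h.le (by omega) hx)

/-- The `C`-span of `U N` is a finite-dimensional `C`-subalgebra of `F` containing every `U k`, hence
a subfield, hence all of `F`. -/
theorem span_U_eq_top (h : GoodSeq (algebraMap C F t) N₀ s χ U) (h1 : (1 : F) ∈ U 0)
    (hmul : ∀ i j, ∀ x ∈ U i, ∀ y ∈ U j, x * y ∈ U (i + j))
    (hgen : ∀ L : IntermediateField K F, (∀ k, ∀ x ∈ U k, x ∈ L) → L = ⊤)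
    {N : ℕ} (hN : N₀ ≤ N) : Submodule.span C (U N : Set F) = ⊤ := by
  set R := Submodule.span C (U N : Set F) with hR
  have := h.fd N
  have hfg : R.FG := by
    obtain ⟨S, hS⟩ := (Submodule.fg_iff_finiteDimensional (U N)).2 inferInstance
    refine ⟨S, le_antisymm (Submodule.span_mono ?_) (Submodule.span_le.2 ?_)⟩
    · rw [← hS]; exact Submodule.subset_span
    · rw [← hS]; exact Submodule.span_subset_span K C _
  have hmulR : ∀ x ∈ R, ∀ y ∈ R, x * y ∈ R := by
    intro x hx y hy
    have : x * y ∈ R * R := Submodule.mul_mem_mul hx hy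
    rw [hR, Submodule.span_mul_span] at this
    refine Submodule.span_le.2 ?_ this
    rintro _ ⟨a, ha, b, hb, rfl⟩
    exact h.mem_span hN _ (hmul _ _ _ ha _ hb)
  have h1R : (1 : F) ∈ R := h.mem_span hN 0 h1
  let A : Subalgebra C F :=
    { carrier := R
      mul_mem' := fun {a b} ha hb => hmulR a ha b hb
      add_mem' := fun ha hb => R.add_mem ha hb
      algebraMap_mem' := fun c => by
        rw [Algebra.algebraMap_eq_smul_one]; exact R.smul_mem c h1R }
  have hinv : ∀ x ∈ R, x⁻¹ ∈ R := by
    intro x hx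
    have hx' : IsIntegral C x := isIntegral_of_smul_mem_submodule R
      (fun h0 => one_ne_zero (α := F) (by rw [h0] at h1R; simpa using h1R)) hfg x
      (fun n hn => hmulR x hx n hn)
    exact A.inv_mem_of_algebraic (x := ⟨x, hx⟩) hx'.isAlgebraic
  let L : IntermediateField K F :=
    { carrier := R
      mul_mem' := fun {a b} ha hb => hmulR a ha b hb
      add_mem' := fun ha hb => R.add_mem ha hb
      algebraMap_mem' := fun c => by
        rw [IsScalarTower.algebraMap_apply K C F, Algebra.algebraMap_eq_smul_one]
        exact R.smul_mem _ h1R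
      inv_mem' := hinv }
  have hL := hgen L fun k x hx => h.mem_span hN k hx
  rw [eq_top_iff]
  intro x _
  have : x ∈ L := by rw [hL]; trivial
  exact this

theorem span_M_eq_top (h : GoodSeq (algebraMap C F t) N₀ s χ U) (h1 : (1 : F) ∈ U 0)
    (hmul : ∀ i j, ∀ x ∈ U i, ∀ y ∈ U j, x * y ∈ U (i + j))
    (hgen : ∀ L : IntermediateField K F, (∀ k, ∀ x ∈ U k, x ∈ L) → L = ⊤)
    {χ' : ℤ} (hM : GoodSeq (algebraMap C F t) N₀ s χ' M)
    (hUM : ∀ i j, ∀ x ∈ U i, ∀ y ∈ M j, x * y ∈ M (i + j))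
    {N : ℕ} (hN : N₀ ≤ N) {m : F} {k : ℕ} (hm : m ∈ M k) (hm0 : m ≠ 0) :
    Submodule.span C (M N : Set F) = ⊤ := by
  rw [eq_top_iff]
  intro x _
  have hx : m⁻¹ * x ∈ Submodule.span C (U N : Set F) := by
    rw [span_U_eq_top h h1 hmul hgen hN]; trivial
  have : Submodule.span C (U N : Set F) ≤
      (Submodule.span C (M N : Set F)).comap (LinearMap.mulLeft C m) := by
    rw [Submodule.span_le]
    intro u hu
    simp only [Submodule.comap_coe, Set.mem_preimage, LinearMap.mulLeft_apply, SetLike.mem_coe]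
    rw [mul_comm]
    exact hM.mem_span hN _ (hUM _ _ _ hu _ hm)
  have h2 := this hx
  simp only [Submodule.mem_comap, LinearMap.mulLeft_apply] at h2
  rwa [mul_inv_cancel_left₀ hm0] at h2

end Clifford
end CliffordBound

/-! ### Duality pairings -/

namespace CliffordBound
open Module

section Dual
variable {K F : Type*} [Field K] [Field F] [Algebra K F]

/-- Restriction to `X` of the functionals `x ↦ ρ (y x)`, `y ∈ Ψ`. -/
noncomputable def restr (ρ : F →ₗ[K] K) (Ψ X : Submodule K F) : Ψ →ₗ[K] Dual K X :=
  LinearMap.mk₂ K (fun (y : Ψ) (x : X) => ρ (y * x))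
    (by intros; simp [add_mul]) (by intros; simp) (by intros; simp [mul_add]) (by intros; simp)

@[simp] theorem restr_apply (ρ : F →ₗ[K] K) (Ψ X : Submodule K F) (y : Ψ) (x : X) :
    restr ρ Ψ X y x = ρ (y * x) := rfl

theorem finrank_comap_subtype {X Y : Submodule K F} (hY : Y ≤ X) :
    finrank K (Y.comap X.subtype) = finrank K Y :=
  LinearEquiv.finrank_eq (Submodule.comapSubtypeEquivOfLe hY)

theorem finrank_le_of_restr_inj (ρ : F →ₗ[K] K) {Ψ X Y : Submodule K F} [FiniteDimensional K X]
    (hY : Y ≤ X) (h0 : ∀ y ∈ Ψ, ∀ x ∈ Y, ρ (y * x) = 0)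
    (hinj : ∀ y ∈ Ψ, (∀ x ∈ X, ρ (y * x) = 0) → y = 0) :
    FiniteDimensional K Ψ ∧ finrank K Ψ + finrank K Y ≤ finrank K X := by
  have hi : Function.Injective (restr ρ Ψ X) := by
    rw [← LinearMap.ker_eq_bot, LinearMap.ker_eq_bot']
    intro y hy
    ext
    refine hinj y y.2 fun x hx => ?_
    have := LinearMap.congr_fun hy ⟨x, hx⟩
    simpa using this
  refine ⟨FiniteDimensional.of_injective _ hi, ?_⟩
  have hr : LinearMap.range (restr ρ Ψ X) ≤ (Y.comap X.subtype).dualAnnihilator := by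
    rintro _ ⟨y, rfl⟩
    rw [Submodule.mem_dualAnnihilator]
    intro x hx
    exact h0 y y.2 x hx
  have h1 := Submodule.finrank_mono hr
  rw [LinearMap.finrank_range_of_inj hi] at h1
  have h2 := Subspace.finrank_add_finrank_dualAnnihilator_eq (Y.comap X.subtype)
  rw [finrank_comap_subtype hY] at h2
  omega

theorem finrank_ge_of_restr_surj (ρ : F →ₗ[K] K) {Ψ X Y : Submodule K F} [FiniteDimensional K X]
    [FiniteDimensional K Ψ] (hY : Y ≤ X)
    (hsurj : ∀ φ : Dual K X, (∀ x : X, (x : F) ∈ Y → φ x = 0) →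
      ∃ y ∈ Ψ, ∀ x : X, ρ (y * x) = φ x) :
    finrank K X ≤ finrank K Ψ + finrank K Y := by
  have hr : (Y.comap X.subtype).dualAnnihilator ≤ LinearMap.range (restr ρ Ψ X) := by
    intro φ hφ
    rw [Submodule.mem_dualAnnihilator] at hφ
    obtain ⟨y, hy, h⟩ := hsurj φ fun x hx => hφ x hx
    exact ⟨⟨y, hy⟩, by ext x; exact h x⟩
  have h1 := (Submodule.finrank_mono hr).trans (LinearMap.finrank_range_le _)
  have h2 := Subspace.finrank_add_finrank_dualAnnihilator_eq (Y.comap X.subtype)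
  rw [finrank_comap_subtype hY] at h2
  omega

theorem exists_extend_vanish {X Y S : Submodule K F} (hXS : X ⊓ S ≤ Y) (φ : Dual K X)
    (hφ : ∀ x : X, (x : F) ∈ Y → φ x = 0) :
    ∃ ψ : F →ₗ[K] K, (∀ x : X, ψ x = φ x) ∧ ∀ x ∈ S, ψ x = 0 := by
  let f : X →ₗ[K] F ⧸ S := S.mkQ ∘ₗ X.subtype
  have : φ ∈ LinearMap.range f.dualMap := by
    rw [LinearMap.range_dualMap_eq_dualAnnihilator_ker, Submodule.mem_dualAnnihilator]
    intro x hx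
    refine hφ x (hXS ⟨x.2, ?_⟩)
    simpa [f] using hx
  obtain ⟨g, hg⟩ := this
  refine ⟨g ∘ₗ S.mkQ, fun x => ?_, fun x hx => ?_⟩
  · rw [← hg]; rfl
  · simp [(Submodule.Quotient.mk_eq_zero S).2 hx]

/-- A solution of a linear recurrence that vanishes eventually vanishes everywhere. -/
theorem shift_eq_zero {Δ : ℤ → K} {q : Polynomial K} (hq : q ≠ 0)
    (h : ∀ n : ℤ, q.sum (fun j a => a * Δ (n + j)) = 0) {n₀ : ℤ} (hv : ∀ n, n₀ ≤ n → Δ n = 0)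
    (n : ℤ) : Δ n = 0 := by
  have key : ∀ i : ℕ, ∀ n : ℤ, n₀ - i ≤ n → Δ n = 0 := by
    intro i
    induction i with
    | zero => intro n hn; exact hv n (by simpa using hn)
    | succ i ih =>
      intro n hn
      have h1 := h (n - q.natTrailingDegree)
      rw [Polynomial.sum_def, Finset.sum_eq_single q.natTrailingDegree] at h1
      · rw [sub_add_cancel] at h1
        exact (mul_eq_zero.1 h1).resolve_left (by simpa [Polynomial.trailingCoeff] using
          (Polynomial.trailingCoeff_nonzero_iff_nonzero.2 hq))
      · intro b hb hne
        have hlt : q.natTrailingDegree < b := lt_of_le_of_ne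
          (Polynomial.natTrailingDegree_le_of_mem_supp b hb) (Ne.symm hne)
        rw [ih _ (by push_cast at hn ⊢; omega), mul_zero]
      · intro hnot
        rw [Polynomial.notMem_support_iff.1 hnot, zero_mul]
  exact key (n₀ - n).toNat n (by omega)

/-- The annihilator of all `M k` and `z⁻ᵏ M k` under the pairing `ρ (x y)`; it plays the role of
the global sections of the dualizing twist. -/
def Psi (ρ : F →ₗ[K] K) (z : F) (M : ℕ → Submodule K F) : Submodule K F where
  carrier := {y | ∀ k, ∀ x ∈ M k, ρ (y * x) = 0 ∧ ρ (y * ((z ^ k)⁻¹ * x)) = 0}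
  add_mem' := by
    intro a b ha hb k x hx
    simp [add_mul, (ha k x hx).1, (hb k x hx).1, (ha k x hx).2, (hb k x hx).2]
  zero_mem' := by intro k x hx; simp
  smul_mem' := by
    intro c a ha k x hx
    simp [(ha k x hx).1, (ha k x hx).2]

variable {ρ : F →ₗ[K] K} {z : F} {M U : ℕ → Submodule K F}

theorem mul_mem_Psi (hz : z ≠ 0) (hUM : ∀ i j, ∀ x ∈ U i, ∀ y ∈ M j, x * y ∈ M (i + j))
    {n : ℕ} {e y : F} (he : e ∈ M n) (hze : z ^ n * e ∈ M n) (hy : y ∈ Psi ρ z M) :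
    e * y ∈ Psi ρ z U := by
  intro k x hx
  constructor
  · rw [show e * y * x = y * (x * e) by ring]
    exact (hy _ _ (hUM _ _ _ hx _ he)).1
  · have := (hy _ _ (hUM _ _ _ hx _ hze)).2
    rw [show e * y * ((z ^ k)⁻¹ * x) = y * ((z ^ (k + n))⁻¹ * (x * (z ^ n * e))) by
      rw [pow_add]; field_simp]
    exact this

end Dual
end CliffordBound

/-! ### An upper bound for the dual module of the structure sheaf -/

namespace CliffordBound
open Module

section Clifford2
variable {K C F : Type*} [Field K] [Field C] [Field F] [Algebra K C] [Algebra C F] [Algebra K F]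
  [IsScalarTower K C F]
variable {t : C} {res : C →ₗ[K] K} {N₀ : ℕ} {s χ : ℤ} {M U : ℕ → Submodule K F}

theorem pairing_eq_zero (hres : IsResidue t res) (lam : F →ₗ[C] C) {ρ : F →ₗ[K] K}
    (hρ : ∀ x, ρ x = res (lam x)) {y x : F}
    (h : ∀ n : ℤ, ρ (y * ((algebraMap C F t) ^ n * x)) = 0) : lam (y * x) = 0 := by
  apply hres.nondeg
  intro n
  have := h n
  rw [hρ] at this
  rwa [show y * ((algebraMap C F t) ^ n * x) = (t ^ n) • (y * x) by
    rw [Algebra.smul_def, map_zpow₀]; ring, map_smul, smul_eq_mul] at this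

/-- An element of `Psi` that annihilates `z⁻ᴺ M (2N)` annihilates all `zⁿ M N`, `n ∈ ℤ`. -/
theorem Psi_zpow_zero {ρ : F →ₗ[K] K} {z : F} (hz : z ≠ 0) (hM : GoodSeq z N₀ s χ M) {y : F}
    (hy : y ∈ Psi ρ z M)
    {N : ℕ} (hX : ∀ x ∈ sc (z ^ N)⁻¹ (M (2 * N)), ρ (y * x) = 0) {x : F} (hx : x ∈ M N)
    (n : ℤ) : ρ (y * (z ^ n * x)) = 0 := by
  rcases le_or_gt 0 n with hn | hn
  · lift n to ℕ using hn
    rw [zpow_natCast]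
    exact (hy _ _ (hM.zpow_mul n N hx)).1
  · obtain ⟨j, rfl⟩ : ∃ j : ℕ, n = -j := ⟨n.natAbs, by omega⟩
    rw [zpow_neg, zpow_natCast]
    rcases le_or_gt N j with hj | hj
    · exact (hy j x (hM.le hj hx)).2
    · apply hX
      rw [mem_sc]
      refine ⟨z ^ (N - j) * x, hM.le (by omega) (hM.zpow_mul (N - j) N hx), ?_⟩
      have : z ^ N = z ^ (N - j) * z ^ j := by rw [← pow_add]; congr 1; omega
      rw [this]; field_simp

/-- The two-chart Čech complex `M N ⊕ z⁻ᴺ M N → z⁻ᴺ M (2N)` of the sheaf and its Euler characteristic. -/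
theorem finrank_Y0 {z : F} (hz : z ≠ 0) (hM : GoodSeq z N₀ s χ M) {N : ℕ} (hN : N₀ ≤ N) :
    M N ⊔ sc (z ^ N)⁻¹ (M N) ≤ sc (z ^ N)⁻¹ (M (2 * N)) ∧
    (finrank K (sc (z ^ N)⁻¹ (M (2 * N))) : ℤ) = s * (2 * N) + χ ∧
    (finrank K (M N ⊔ sc (z ^ N)⁻¹ (M N) : Submodule K F) : ℤ) +
      finrank K (M N ⊓ sc (z ^ N)⁻¹ (M N) : Submodule K F) = 2 * (s * N + χ) := by
  have := hM.fd
  have hzN : (z ^ N)⁻¹ ≠ 0 := inv_ne_zero (pow_ne_zero _ hz)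
  refine ⟨sup_le (fun x hx => ?_) (Submodule.map_mono (hM.le (by omega))), ?_, ?_⟩
  · rw [mem_sc]
    refine ⟨z ^ N * x, hM.le (by omega) (hM.zpow_mul N N hx), ?_⟩
    field_simp
  · rw [finrank_sc hzN, hM.dim _ (by omega)]; push_cast; ring
  · have h := Submodule.finrank_sup_add_finrank_inf_eq (M N) (sc (z ^ N)⁻¹ (M N))
    rw [finrank_sc hzN] at h
    have d := hM.dim N hN
    zify at h
    rw [h, d]; ring

theorem mem_sc_inv {z : F} (hz : z ≠ 0) {N : ℕ} {A : Submodule K F} {x : F} :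
    x ∈ sc (z ^ N)⁻¹ A ↔ z ^ N * x ∈ A := by
  rw [mem_sc]
  constructor
  · rintro ⟨a, ha, rfl⟩
    rwa [mul_inv_cancel_left₀ (pow_ne_zero _ hz)]
  · intro h
    exact ⟨_, h, inv_mul_cancel_left₀ (pow_ne_zero _ hz) _⟩

/-- The dual module of the structure sheaf has dimension at most `π = 1 - χ`: it embeds in the
dual of the cokernel of the Čech complex, whose kernel consists of constants. -/
theorem finrank_Psi_le (hK : ∀ f : F, IsAlgebraic K f → f ∈ (algebraMap K F).range)
    (hres : IsResidue t res) {lam : F →ₗ[C] C} (hlam : lam ≠ 0) {ρ : F →ₗ[K] K}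
    (hρ : ∀ x, ρ x = res (lam x))
    (h : GoodSeq (algebraMap C F t) N₀ s χ U) (h1 : (1 : F) ∈ U 0)
    (hmul : ∀ i j, ∀ x ∈ U i, ∀ y ∈ U j, x * y ∈ U (i + j))
    (hgen : ∀ L : IntermediateField K F, (∀ k, ∀ x ∈ U k, x ∈ L) → L = ⊤) :
    FiniteDimensional K (Psi ρ (algebraMap C F t) U) ∧
      (finrank K (Psi ρ (algebraMap C F t) U) : ℤ) ≤ 1 - χ := by
  have hz : algebraMap C F t ≠ 0 := by simpa using hres.ne_zero
  set z := algebraMap C F t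
  have := h.fd
  set N := N₀
  obtain ⟨hYX, hX, hY⟩ := finrank_Y0 hz h (le_refl N)
  have hcap : finrank K (U N ⊓ sc (z ^ N)⁻¹ (U N) : Submodule K F) ≤ 1 := by
    have : U N ⊓ sc (z ^ N)⁻¹ (U N) ≤ Submodule.span K {(1 : F)} := by
      rintro f ⟨hf1, hf2⟩
      rw [SetLike.mem_coe, mem_sc_inv hz] at hf2
      have halg : IsAlgebraic K f := isAlgebraic_of_stable (A := U N) (by
        rw [Submodule.ne_bot_iff]; exact ⟨1, h.le (Nat.zero_le _) h1, one_ne_zero⟩) (by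
        intro a ha
        refine h.sat hz N le_rfl (hmul _ _ _ hf1 _ ha) ?_
        rw [← mul_assoc]
        exact hmul _ _ _ hf2 _ ha)
      obtain ⟨c, rfl⟩ := hK f halg
      exact Submodule.mem_span_singleton.2 ⟨c, by rw [Algebra.algebraMap_eq_smul_one]⟩
    exact (Submodule.finrank_mono this).trans (finrank_span_singleton one_ne_zero).le
  have c1 : ∀ y ∈ Psi ρ z U, ∀ x ∈ U N ⊔ sc (z ^ N)⁻¹ (U N), ρ (y * x) = 0 := by
    intro y hy x hx
    obtain ⟨a, ha, b, hb, rfl⟩ := Submodule.mem_sup.1 hx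
    obtain ⟨c, hc, rfl⟩ := mem_sc.1 hb
    rw [mul_add, map_add, (hy _ _ ha).1, (hy _ _ hc).2, add_zero]
  have c2 : ∀ y ∈ Psi ρ z U, (∀ x ∈ sc (z ^ N)⁻¹ (U (2 * N)), ρ (y * x) = 0) → y = 0 := by
    intro y hy hyX
    by_contra hy0
    apply hlam
    have hsp := span_U_eq_top h h1 hmul hgen (le_refl N)
    have hle : Submodule.span C (U N : Set F) ≤
        LinearMap.ker (lam ∘ₗ LinearMap.mulLeft C y) := by
      rw [Submodule.span_le]
      intro x hx
      simp only [SetLike.mem_coe, LinearMap.mem_ker, LinearMap.comp_apply,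
        LinearMap.mulLeft_apply]
      exact pairing_eq_zero hres lam hρ fun n => Psi_zpow_zero hz h hy hyX hx n
    rw [hsp] at hle
    ext x
    have hx : y⁻¹ * x ∈ LinearMap.ker (lam ∘ₗ LinearMap.mulLeft C y) := hle trivial
    simpa [mul_inv_cancel_left₀ hy0] using hx
  obtain ⟨i1, i2⟩ := finrank_le_of_restr_inj ρ hYX c1 c2
  refine ⟨i1, ?_⟩
  zify at i2 hcap
  linarith

end Clifford2
end CliffordBound

/-! ### Representing functionals -/

namespace CliffordBound
open Module

section Clifford3
variable {K C F : Type*} [Field K] [Field C] [Field F] [Algebra K C] [Algebra C F] [Algebra K F]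
  [IsScalarTower K C F]
variable {t : C} {res : C →ₗ[K] K} {N₀ : ℕ} {s χ : ℤ} {M U : ℕ → Submodule K F}

/-- The dual of the finite extension `F/C` is one-dimensional over `F`. -/
theorem exists_mul_eq [FiniteDimensional C F] {lam : F →ₗ[C] C} (hlam : lam ≠ 0) (Φ : F →ₗ[C] C) :
    ∃ y : F, ∀ x, lam (y * x) = Φ x := by
  let T : F →ₗ[C] Dual C F := LinearMap.mk₂ C (fun y x => lam (y * x))
    (by intros; simp [add_mul]) (by intros; simp) (by intros; simp [mul_add]) (by intros; simp)
  have hT : ∀ y x, T y x = lam (y * x) := fun _ _ => rfl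
  have hi : Function.Injective T := by
    rw [← LinearMap.ker_eq_bot, LinearMap.ker_eq_bot']
    intro y hy
    by_contra hy0
    apply hlam
    ext x
    have := LinearMap.congr_fun hy (y⁻¹ * x)
    rwa [hT, mul_inv_cancel_left₀ hy0] at this
  have hs : Function.Surjective T :=
    (LinearMap.injective_iff_surjective_of_finrank_eq_finrank
      (Subspace.dual_finrank_eq (K := C) (V := F)).symm).1 hi
  obtain ⟨y, hy⟩ := hs Φ
  exact ⟨y, fun x => by rw [← hT, hy]⟩

/-- Every functional on `F` that vanishes on all `M k` and `z⁻ᵏ M k` agrees with some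
`x ↦ ρ (y x)` on the `K[z, z⁻¹]`-module generated by the `M k`. -/
theorem exists_represent (hres : IsResidue t res) [FiniteDimensional C F]
    {lam : F →ₗ[C] C} (hlam : lam ≠ 0) {ρ : F →ₗ[K] K}
    (hρ : ∀ x, ρ x = res (lam x)) {N : ℕ}
    (hspan : Submodule.span C (M N : Set F) = ⊤) (ψ : F →ₗ[K] K)
    (hψ1 : ∀ k, ∀ m ∈ M k, ∀ n : ℕ, ψ ((algebraMap C F t) ^ n * m) = 0)
    (hψ2 : ∀ k, ∀ m ∈ M k, ∀ n : ℕ, k ≤ n → ψ (((algebraMap C F t) ^ n)⁻¹ * m) = 0) :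
    ∃ y : F, ∀ k, ∀ m ∈ M k, ∀ n : ℤ,
      ρ (y * ((algebraMap C F t) ^ n * m)) = ψ ((algebraMap C F t) ^ n * m) := by
  have hz : algebraMap C F t ≠ 0 := by simpa using hres.ne_zero
  set z := algebraMap C F t with hzdef
  have ht := hres.ne_zero
  obtain ⟨b, hbM, hbspan, hbli⟩ := exists_linearIndependent C (M N : Set F)
  let B : Basis b C F := Basis.mk hbli (by rw [Subtype.range_coe, hbspan, hspan])
  let Φ : F →ₗ[C] C := B.constr C fun e =>
    ∑ j ∈ Finset.range N, algebraMap K C (ψ (z ^ (-(j : ℤ) - 1) * e)) * t ^ j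
  obtain ⟨y, hy⟩ := exists_mul_eq hlam Φ
  refine ⟨y, ?_⟩
  have hyz : ∀ (n : ℤ) x, ρ (y * (z ^ n * x)) = res (t ^ n * Φ x) := by
    intro n x
    rw [hρ, ← hy, show y * (z ^ n * x) = (t ^ n) • (y * x) by
      rw [Algebra.smul_def, map_zpow₀]; ring, map_smul, smul_eq_mul]
  -- the `K[z, z⁻¹]`-module on which the two functionals agree
  let W : Submodule K F :=
    { carrier := {x | ∀ n : ℤ, ρ (y * (z ^ n * x)) = ψ (z ^ n * x)}
      add_mem' := by intro a c ha hc n; simp only [mul_add, map_add, ha n, hc n]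
      zero_mem' := by intro n; simp
      smul_mem' := by
        intro c a ha n
        simp only [mul_smul_comm, map_smul, ha n] }
  have hWz : ∀ x ∈ W, ∀ j : ℕ, z ^ j * x ∈ W := by
    intro x hx j n
    have := hx (n + j)
    rw [zpow_add₀ hz, zpow_natCast, mul_assoc] at this
    exact this
  have hWp : ∀ p : Polynomial K, ∀ x ∈ W, Polynomial.aeval z p * x ∈ W := by
    intro p x hx
    rw [Polynomial.aeval_eq_sum_range, Finset.sum_mul]
    refine Submodule.sum_mem _ fun j _ => ?_
    rw [smul_mul_assoc]
    exact W.smul_mem _ (hWz x hx j)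
  have hbW : ∀ e ∈ b, e ∈ W := by
    intro e he n
    have he' := hbM he
    rw [hyz]
    have hΦ : Φ e = ∑ j ∈ Finset.range N,
        algebraMap K C (ψ (z ^ (-(j : ℤ) - 1) * e)) * t ^ j := by
      have : e = B ⟨e, he⟩ := by simp [B]
      conv_lhs => rw [this]
      rw [Basis.constr_basis]
    rw [hΦ, Finset.mul_sum, map_sum]
    have hterm : ∀ j ∈ Finset.range N,
        res (t ^ n * (algebraMap K C (ψ (z ^ (-(j : ℤ) - 1) * e)) * t ^ j)) =
        if n + j = -1 then ψ (z ^ n * e) else 0 := by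
      intro j _
      rw [show t ^ n * (algebraMap K C (ψ (z ^ (-(j : ℤ) - 1) * e)) * t ^ j) =
        (ψ (z ^ (-(j : ℤ) - 1) * e)) • t ^ (n + j) by
          rw [Algebra.smul_def, zpow_add₀ ht, zpow_natCast]; ring, map_smul, hres.pow]
      split_ifs with h
      · rw [smul_eq_mul, mul_one, show -(j : ℤ) - 1 = n by omega]
      · simp
    rw [Finset.sum_congr rfl hterm]
    by_cases hn : 0 ≤ n
    · rw [Finset.sum_eq_zero fun (j : ℕ) _ => if_neg (by omega)]
      lift n to ℕ using hn
      rw [zpow_natCast, hψ1 N e he']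
    · by_cases hn2 : n < -N
      · have h0 : ∀ j ∈ Finset.range N, (if n + (j : ℤ) = -1 then ψ (z ^ n * e) else 0) = 0 := by
          intro j hj
          have := Finset.mem_range.1 hj
          rw [if_neg (by omega)]
        rw [Finset.sum_eq_zero h0]
        obtain ⟨l, rfl⟩ : ∃ l : ℕ, n = -l := ⟨n.natAbs, by omega⟩
        rw [zpow_neg, zpow_natCast, hψ2 N e he' l (by omega)]
      · rw [Finset.sum_eq_single (-1 - n).toNat]
        · rw [if_pos (by omega)]
        · intro j _ hj; rw [if_neg (by omega)]
        · intro h; simp at h; omega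
  have hq : ∀ x : F, ∃ q : Polynomial K, q ≠ 0 ∧ Polynomial.aeval z q * x ∈ W := by
    intro x
    have hx : x ∈ Submodule.span C b := by rw [hbspan, hspan]; trivial
    induction hx using Submodule.span_induction with
    | mem x hx => exact ⟨1, one_ne_zero, by simpa using hbW x hx⟩
    | zero => exact ⟨1, one_ne_zero, by simp⟩
    | add x x' _ _ h1 h2 =>
      obtain ⟨q1, h10, h1⟩ := h1
      obtain ⟨q2, h20, h2⟩ := h2
      refine ⟨q1 * q2, mul_ne_zero h10 h20, ?_⟩
      rw [map_mul, mul_add]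
      refine W.add_mem ?_ ?_
      · rw [mul_comm (Polynomial.aeval z q1), mul_assoc]; exact hWp _ _ h1
      · rw [mul_assoc]; exact hWp _ _ h2
    | smul c x _ h =>
      obtain ⟨q, h0, h⟩ := h
      obtain ⟨p', q', hq', hc⟩ := hres.frac c
      refine ⟨q' * q, mul_ne_zero hq' h0, ?_⟩
      have hc' : Polynomial.aeval z q' * algebraMap C F c = Polynomial.aeval z p' := by
        rw [hzdef, Polynomial.aeval_algebraMap_apply, Polynomial.aeval_algebraMap_apply,
          ← map_mul, hc]
      rw [map_mul, Algebra.smul_def, show Polynomial.aeval z q' * Polynomial.aeval z q *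
        (algebraMap C F c * x) = (Polynomial.aeval z q' * algebraMap C F c) *
          (Polynomial.aeval z q * x) by ring, hc']
      exact hWp _ _ h
  intro k m hm n
  obtain ⟨q, hq0, hqm⟩ := hq m
  obtain ⟨n₀, hn₀⟩ := hres.van (Φ m)
  have key := shift_eq_zero (Δ := fun n => ρ (y * (z ^ n * m)) - ψ (z ^ n * m)) hq0 ?_
    (n₀ := max n₀ 0) ?_ n
  · exact sub_eq_zero.1 key
  · intro n
    have h1 := hqm n
    rw [← sub_eq_zero] at h1
    rw [← h1, Polynomial.aeval_eq_sum_range, Polynomial.sum_over_range]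
    · simp only [Finset.sum_mul, Finset.mul_sum, map_sum, ← Finset.sum_sub_distrib]
      refine Finset.sum_congr rfl fun j _ => ?_
      rw [mul_sub, zpow_add₀ hz, zpow_natCast, smul_mul_assoc, mul_smul_comm, mul_smul_comm,
        map_smul, map_smul, mul_assoc]
      rfl
    · simp
  · intro n hn
    have h1 : 0 ≤ n := le_trans (le_max_right _ _) hn
    have h2 := hn₀ n (le_trans (le_max_left _ _) hn)
    rw [hyz, h2]
    lift n to ℕ using h1
    rw [zpow_natCast, hψ1 k m hm, sub_zero]

end Clifford3
end CliffordBound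

/-! ### The residue of a rational function -/

namespace CliffordBound
open Module

section Residue
open RatFunc LaurentSeries
variable (K : Type*) [Field K]

/-- The coefficient of `X⁻¹` in the Laurent expansion at `0` of a rational function. -/
noncomputable def ratRes : RatFunc K →ₗ[K] K where
  toFun c := (algebraMap (RatFunc K) K⸨X⸩ c).coeff (-1)
  map_add' := by intros; simp
  map_smul' := by
    intro a c
    have h : algebraMap (RatFunc K) K⸨X⸩ (algebraMap K (RatFunc K) a) = HahnSeries.C a := by
      rw [IsScalarTower.algebraMap_apply K (Polynomial K) (RatFunc K),
        ← IsScalarTower.algebraMap_apply (Polynomial K) (RatFunc K) K⸨X⸩]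
      simp
    rw [Algebra.smul_def, map_mul, h, HahnSeries.C_mul_eq_smul]
    simp

theorem coe_X_zpow (n : ℤ) : algebraMap (RatFunc K) K⸨X⸩ (RatFunc.X ^ n) = HahnSeries.single n 1 := by
  rw [map_zpow₀, RatFunc.coe_X, ← RatFunc.single_zpow]

theorem ratRes_zpow_mul (n : ℤ) (c : RatFunc K) :
    ratRes K (RatFunc.X ^ n * c) = (algebraMap (RatFunc K) K⸨X⸩ c).coeff (-1 - n) := by
  change (algebraMap (RatFunc K) K⸨X⸩ (RatFunc.X ^ n * c)).coeff (-1) = _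
  rw [map_mul, coe_X_zpow]
  have := HahnSeries.coeff_single_mul_add (r := (1 : K)) (x := algebraMap (RatFunc K) K⸨X⸩ c)
    (a := -1 - n) (b := n)
  rw [one_mul, sub_add_cancel] at this
  exact this

theorem isResidue_ratRes : IsResidue (RatFunc.X : RatFunc K) (ratRes K) where
  pow n := by
    have := ratRes_zpow_mul K n 1
    rw [mul_one, map_one] at this
    rw [this, HahnSeries.coeff_one]
    congr 1
    simp only [eq_iff_iff]
    omega
  nondeg c h := by
    have : algebraMap (RatFunc K) K⸨X⸩ c = 0 := by
      ext n
      have := h (-1 - n)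
      rw [ratRes_zpow_mul] at this
      simpa using this
    simpa using this
  van c := by
    by_cases hc : algebraMap (RatFunc K) K⸨X⸩ c = 0
    · exact ⟨0, fun n _ => by rw [ratRes_zpow_mul, hc]; simp⟩
    · refine ⟨-(algebraMap (RatFunc K) K⸨X⸩ c).order, fun n hn => ?_⟩
      rw [ratRes_zpow_mul]
      exact HahnSeries.coeff_eq_zero_of_lt_order (by omega)
  frac c := by
    refine ⟨c.num, c.denom, c.denom_ne_zero, ?_⟩
    have h : ∀ p : Polynomial K, Polynomial.aeval (RatFunc.X : RatFunc K) p =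
        algebraMap (Polynomial K) (RatFunc K) p := by
      intro p
      rw [← RatFunc.algebraMap_X, Polynomial.aeval_algebraMap_apply, Polynomial.aeval_X_left_apply]
    rw [h, h]
    have hd : algebraMap (Polynomial K) (RatFunc K) c.denom ≠ 0 := by
      simpa using c.denom_ne_zero
    have := RatFunc.num_div_denom c
    rw [div_eq_iff hd] at this
    rw [this, mul_comm]
end Residue
end CliffordBound

/-! ### Clifford's inequality -/

namespace CliffordBound
open Module

section Clifford4
variable {K C F : Type*} [Field K] [Field C] [Field F] [Algebra K C] [Algebra C F] [Algebra K F]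
  [IsScalarTower K C F]
variable {t : C} {res : C →ₗ[K] K} {N₀ : ℕ} {s χ : ℤ} {M U : ℕ → Submodule K F}

/-- The duality inequality `h⁰ - χ ≤ dim Psi`: functionals on the cokernel of the Čech complex are
represented by elements of `Psi`. -/
theorem le_finrank_Psi (hres : IsResidue t res) [FiniteDimensional C F]
    {lam : F →ₗ[C] C} (hlam : lam ≠ 0) {ρ : F →ₗ[K] K}
    (hρ : ∀ x, ρ x = res (lam x)) (hM : GoodSeq (algebraMap C F t) N₀ s χ M)
    (hspan : ∀ N, N₀ ≤ N → Submodule.span C (M N : Set F) = ⊤)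
    [FiniteDimensional K (Psi ρ (algebraMap C F t) M)]
    (E : Submodule K F) {n : ℕ} (hE1 : ∀ e ∈ E, e ∈ M n)
    (hE2 : ∀ e ∈ E, (algebraMap C F t) ^ n * e ∈ M n) :
    (finrank K E : ℤ) - χ ≤ finrank K (Psi ρ (algebraMap C F t) M) := by
  have hz : algebraMap C F t ≠ 0 := by simpa using hres.ne_zero
  set z := algebraMap C F t
  have := hM.fd
  obtain ⟨N, hN, hnN⟩ : ∃ N, N₀ ≤ N ∧ n ≤ N := ⟨max N₀ n, le_max_left _ _, le_max_right _ _⟩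
  obtain ⟨hYX, hX, hY⟩ := finrank_Y0 hz hM hN
  have hEle : E ≤ M N ⊓ sc (z ^ N)⁻¹ (M N) := by
    intro e he
    refine ⟨hM.le hnN (hE1 e he), ?_⟩
    rw [SetLike.mem_coe, mem_sc_inv hz]
    have h1 := hM.zpow_mul (N - n) n (hE2 e he)
    rw [← mul_assoc, ← pow_add] at h1
    rwa [show N - n + n = N by omega, show n + (N - n) = N by omega] at h1
  have hEd := Submodule.finrank_mono hEle
  have hs := finrank_ge_of_restr_surj ρ (Ψ := Psi ρ z M) hYX (by
    intro φ hφ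
    have hdir : Monotone fun k => M k ⊔ sc (z ^ k)⁻¹ (M k) := by
      refine monotone_nat_of_le_succ fun k => sup_le_sup (hM.mono k) fun x hx => ?_
      rw [mem_sc_inv hz] at hx ⊢
      rw [pow_succ', mul_assoc]
      exact hM.zmul _ _ hx
    set S : Submodule K F := ⨆ k, M k ⊔ sc (z ^ k)⁻¹ (M k) with hS
    have hXS : sc (z ^ N)⁻¹ (M (2 * N)) ⊓ S ≤ M N ⊔ sc (z ^ N)⁻¹ (M N) := by
      rintro x ⟨hx1, hx2⟩
      rw [SetLike.mem_coe, mem_sc_inv hz] at hx1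
      obtain ⟨k₀, hk₀⟩ := (Submodule.mem_iSup_of_directed _ hdir.directed_le).1 hx2
      have hk := hdir (le_max_left k₀ N) hk₀
      have hNk : N ≤ max k₀ N := le_max_right _ _
      set k := max k₀ N
      obtain ⟨a, ha, b, hb, rfl⟩ := Submodule.mem_sup.1 hk
      rw [mem_sc_inv hz] at hb
      obtain ⟨l, hl⟩ : ∃ l, k = N + l := ⟨k - N, by omega⟩
      rw [hl] at ha hb
      refine Submodule.add_mem_sup ?_ ?_
      · refine hM.sat hz (N + l) hN (hM.le (by omega) ha) ?_
        have h1 : z ^ (N + l) * a = z ^ l * (z ^ N * (a + b)) - z ^ (N + l) * b := by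
          rw [pow_add]; ring
        rw [h1]
        exact Submodule.sub_mem _ (hM.le (by omega) (hM.zpow_mul l _ hx1)) (hM.le (by omega) hb)
      · rw [mem_sc_inv hz]
        refine hM.sat hz (N + l) hN ?_ ?_
        · have h1 : z ^ N * b = z ^ N * (a + b) - z ^ N * a := by ring
          rw [h1]
          exact Submodule.sub_mem _ (hM.le (by omega) hx1)
            (hM.le (by omega) (hM.zpow_mul N _ ha))
        · have h1 : z ^ (N + l) * (z ^ N * b) = z ^ N * (z ^ (N + l) * b) := by ring
          rw [h1]
          exact hM.le (by omega) (hM.zpow_mul N _ hb)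
    obtain ⟨ψ, hψX, hψS⟩ := exists_extend_vanish hXS φ hφ
    have hle : ∀ k, M k ⊔ sc (z ^ k)⁻¹ (M k) ≤ S :=
      fun k => le_iSup (fun k => M k ⊔ sc (z ^ k)⁻¹ (M k)) k
    obtain ⟨y, hy⟩ := exists_represent hres hlam hρ (hspan N hN) ψ
      (fun k m hm n => hψS _ (hle _ (Submodule.mem_sup_left (hM.zpow_mul n k hm))))
      (fun k m hm n hn => hψS _ (hle n (Submodule.mem_sup_right (mul_mem_sc (hM.le hn hm)))))
    refine ⟨y, fun k x hx => ⟨?_, ?_⟩, fun x => ?_⟩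
    · have := hy k x hx 0
      rw [zpow_zero, one_mul] at this
      rw [this]
      exact hψS _ (hle k (Submodule.mem_sup_left hx))
    · have := hy k x hx (-k)
      rw [zpow_neg, zpow_natCast] at this
      rw [this]
      exact hψS _ (hle k (Submodule.mem_sup_right (mul_mem_sc hx)))
    · obtain ⟨m, hm, hx⟩ := mem_sc.1 x.2
      have := hy _ m hm (-N)
      rw [zpow_neg, zpow_natCast, hx] at this
      rw [this, hψX])
  zify at hs hEd
  linarith

/-- If `E` is special, then `E` and `Psi M` are nonzero and `E · Psi M ⊆ Psi U`, so Hopf's lemma gives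
`dim E + dim Psi M ≤ dim Psi U + 1`. -/
theorem clifford_aux (hK : ∀ f : F, IsAlgebraic K f → f ∈ (algebraMap K F).range)
    (hres : IsResidue t res) {χ₀ : ℤ}
    (h : GoodSeq (algebraMap C F t) N₀ s χ₀ U) (h1 : (1 : F) ∈ U 0)
    (hmul : ∀ i j, ∀ x ∈ U i, ∀ y ∈ U j, x * y ∈ U (i + j))
    (hgen : ∀ L : IntermediateField K F, (∀ k, ∀ x ∈ U k, x ∈ L) → L = ⊤)
    (hM : GoodSeq (algebraMap C F t) N₀ s χ M)
    (hUM : ∀ i j, ∀ x ∈ U i, ∀ y ∈ M j, x * y ∈ M (i + j))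
    (E : Submodule K F) (hE0 : E ≠ ⊥) {n : ℕ} (hE1 : ∀ e ∈ E, e ∈ M n)
    (hE2 : ∀ e ∈ E, (algebraMap C F t) ^ n * e ∈ M n) (hD : χ < finrank K E) :
    2 * (finrank K E : ℤ) - χ ≤ 2 - χ₀ := by
  have hz : algebraMap C F t ≠ 0 := by simpa using hres.ne_zero
  have := hM.fd
  obtain ⟨e, he, he0⟩ := E.ne_bot_iff.1 hE0
  have hfin : FiniteDimensional C F := by
    have hfg := span_U_eq_top h h1 hmul hgen (le_refl N₀)
    have := h.fd N₀
    obtain ⟨S, hS⟩ := (Submodule.fg_iff_finiteDimensional (U N₀)).2 inferInstance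
    refine ⟨⟨S, ?_⟩⟩
    rw [eq_top_iff, ← hfg, Submodule.span_le, ← hS]
    exact Submodule.span_subset_span K C _
  have hspan : ∀ N, N₀ ≤ N → Submodule.span C (M N : Set F) = ⊤ := fun N hN =>
    span_M_eq_top h h1 hmul hgen hM hUM hN (hE1 e he) he0
  obtain ⟨lam, hlam⟩ : ∃ lam : F →ₗ[C] C, lam ≠ 0 := by
    by_contra hcon
    push Not at hcon
    exact one_ne_zero (α := F) ((Module.forall_dual_apply_eq_zero_iff C (1 : F)).1
      fun φ => by rw [hcon φ]; rfl)
  set ρ : F →ₗ[K] K := res ∘ₗ lam.restrictScalars K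
  have hρ : ∀ x, ρ x = res (lam x) := fun _ => rfl
  obtain ⟨fU, dU⟩ := finrank_Psi_le hK hres hlam hρ h h1 hmul hgen
  set z := algebraMap C F t
  have fM : FiniteDimensional K (Psi ρ z M) := by
    have hle : sc e (Psi ρ z M) ≤ Psi ρ z U :=
      sc_le.2 fun y hy => mul_mem_Psi hz hUM (hE1 e he) (hE2 e he) hy
    have : FiniteDimensional K (sc e (Psi ρ z M)) := Submodule.finiteDimensional_of_le hle
    exact LinearEquiv.finiteDimensional (Submodule.equivMapOfInjective (LinearMap.mulLeft K e)
      (fun x y h => mul_left_cancel₀ he0 (by simpa using h)) (Psi ρ z M)).symm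
  have hlow := le_finrank_Psi hres hlam hρ hM hspan E hE1 hE2
  have fE : FiniteDimensional K E := Submodule.finiteDimensional_of_le (S₂ := M n) hE1
  have hne : Psi ρ z M ≠ ⊥ := by
    intro h0
    rw [h0, finrank_bot] at hlow
    push_cast at hlow
    linarith
  have h2 := hopf hK E (Psi ρ z M) hE0 hne
  have hle : E * Psi ρ z M ≤ Psi ρ z U := Submodule.mul_le.2 fun a ha y hy =>
    mul_mem_Psi hz hUM (hE1 a ha) (hE2 a ha) hy
  have h3 := Submodule.finrank_mono hle
  zify at h2 h3
  linarith

/-- Clifford's inequality: a special space `E` of sections of a torsion-free rank one sheaf with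
Euler characteristic `χ`, on a curve with Euler characteristic `χ₀ = 1 - π`, has
`dim E + (dim E - χ) ≤ π + 1`. -/
theorem clifford {K F : Type*} [Field K] [Field F] [Algebra K F]
    {N₀ : ℕ} {s χ : ℤ} {M U : ℕ → Submodule K F} {z : F}
    (hK : ∀ f : F, IsAlgebraic K f → f ∈ (algebraMap K F).range) {χ₀ : ℤ} (hs : 0 < s)
    (h : GoodSeq z N₀ s χ₀ U) (h1 : (1 : F) ∈ U 0)
    (hmul : ∀ i j, ∀ x ∈ U i, ∀ y ∈ U j, x * y ∈ U (i + j))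
    (hgen : ∀ L : IntermediateField K F, (∀ k, ∀ x ∈ U k, x ∈ L) → L = ⊤)
    (hM : GoodSeq z N₀ s χ M)
    (hUM : ∀ i j, ∀ x ∈ U i, ∀ y ∈ M j, x * y ∈ M (i + j))
    (E : Submodule K F) (hE0 : E ≠ ⊥) {n : ℕ} (hE1 : ∀ e ∈ E, e ∈ M n)
    (hE2 : ∀ e ∈ E, z ^ n * e ∈ M n) (hD : χ < finrank K E) :
    2 * (finrank K E : ℤ) - χ ≤ 2 - χ₀ := by
  have htr : Transcendental K z := fun ha => h.not_mem_range hs (hK z ha)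
  have hinj : Function.Injective (Polynomial.aeval z : Polynomial K →ₐ[K] F) :=
    transcendental_iff_injective.1 htr
  let φ : RatFunc K →ₐ[K] F := RatFunc.liftAlgHom (Polynomial.aeval z)
    (nonZeroDivisors_le_comap_nonZeroDivisors_of_injective _ hinj)
  have hφX : φ RatFunc.X = z := by
    change RatFunc.liftAlgHom _ _ _ = _
    rw [RatFunc.liftAlgHom_apply]; simp
  let _ : Algebra (RatFunc K) F := φ.toRingHom.toAlgebra
  have : IsScalarTower K (RatFunc K) F := IsScalarTower.of_algebraMap_eq fun x => (φ.commutes x).symm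
  have hzX : algebraMap (RatFunc K) F RatFunc.X = z := hφX
  rw [← hzX] at h hM
  simp only [← hzX] at hE2
  exact clifford_aux hK (isResidue_ratRes K) h h1 hmul hgen hM hUM E hE0 hE1 hE2 hD

end Clifford4
end CliffordBound

/-! ### Dimensions over the field of a pencil -/

namespace CliffordBound
open Module

section Pencil
open Polynomial
variable {k K F : Type*} [Field k] [Field K] [Field F] [Algebra k K] [Algebra K F] [Algebra k F]
  [IsScalarTower k K F] {t : K}

theorem common_denom (hfrac : ∀ c : K, ∃ p q : k[X], q ≠ 0 ∧ aeval t q * c = aeval t p)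
    {ι : Type*} [Fintype ι] (c : ι → K) :
    ∃ Q : k[X], Q ≠ 0 ∧ ∃ P : ι → k[X], ∀ j, aeval t Q * c j = aeval t (P j) := by
  classical
  choose p q hq h using fun j => hfrac (c j)
  refine ⟨∏ j, q j, Finset.prod_ne_zero_iff.2 fun j _ => hq j,
    fun j => p j * ∏ i ∈ Finset.univ.erase j, q i, fun j => ?_⟩
  rw [← Finset.mul_prod_erase _ _ (Finset.mem_univ j), map_mul, map_mul, ← h j]
  ring

theorem sum_repr_coe {Z : Submodule k F} {ι : Type*} [Fintype ι] (w : Basis ι k Z) {x : F}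
    (hx : x ∈ Z) : ∑ l, w.repr ⟨x, hx⟩ l • (w l : F) = x := by
  have := congrArg (Submodule.subtype Z) (w.sum_repr ⟨x, hx⟩)
  simpa only [map_sum, map_smul, Submodule.subtype_apply] using this

/-- A polynomial over `F` with coefficients in the subspace `Z`, expressed in a basis of `Z`. -/
theorem exists_coords {Z : Submodule k F} {q : ℕ} (w : Basis (Fin q) k Z) (α : F[X])
    (hα : ∀ n, α.coeff n ∈ Z) :
    ∃ R : Fin q → k[X], ∀ n, α.coeff n = ∑ l, (R l).coeff n • (w l : F) := by
  refine ⟨fun l => ∑ n ∈ α.support, monomial n (w.repr ⟨α.coeff n, hα n⟩ l), fun n => ?_⟩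
  have h1 : ∀ l, (∑ m ∈ α.support, monomial m (w.repr ⟨α.coeff m, hα m⟩ l)).coeff n
      = w.repr ⟨α.coeff n, hα n⟩ l := by
    intro l
    rw [finsetSum_coeff]
    simp only [coeff_monomial]
    rw [Finset.sum_ite_eq']
    split_ifs with h
    · rfl
    · rw [Polynomial.mem_support_iff, not_not] at h
      have : (⟨α.coeff n, hα n⟩ : Z) = 0 := by ext; exact h
      rw [this]; simp
  simp only [h1]
  exact (sum_repr_coe w (hα n)).symm

/-- The pencil lemma: with `K = k(z)`, the only `K`-linear relations among elements of `Y` are those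
coming from `z · w - (z w) = 0` with `w ∈ Z`. -/
theorem finrank_span_pencil (ht : Transcendental k t)
    (hfrac : ∀ c : K, ∃ p q : k[X], q ≠ 0 ∧ aeval t q * c = aeval t p)
    {Y Z : Submodule k F} [FiniteDimensional k Y] (hZY : Z ≤ Y)
    (hzZ : ∀ x ∈ Z, algebraMap K F t * x ∈ Y)
    (hpen : ∀ α : F[X], (∀ n, ((X - C (algebraMap K F t)) * α).coeff n ∈ Y) →
      ∀ n, α.coeff n ∈ Z) :
    finrank K (Submodule.span K (Y : Set F)) + finrank k Z = finrank k Y := by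
  have : FiniteDimensional k Z := Submodule.finiteDimensional_of_le hZY
  set z := algebraMap K F t with hz
  set p := finrank k Y
  set q := finrank k Z
  let y : Basis (Fin p) k Y := finBasis k Y
  let w : Basis (Fin q) k Z := finBasis k Z
  have hinj : ∀ P : k[X], aeval t P = 0 → P = 0 := fun P h => by
    by_contra hP; exact ht ⟨P, hP, h⟩
  have yli : LinearIndependent k (fun j => (y j : F)) :=
    y.linearIndependent.map' Y.subtype (Submodule.ker_subtype _)
  have wli : LinearIndependent k (fun j => (w j : F)) :=
    w.linearIndependent.map' Z.subtype (Submodule.ker_subtype _)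
  let a : Fin q → Fin p → k := fun l j => y.repr ⟨w l, hZY (w l).2⟩ j
  let b : Fin q → Fin p → k := fun l j => y.repr ⟨z * w l, hzZ _ (w l).2⟩ j
  have ha : ∀ l, ∑ j, a l j • (y j : F) = w l := by
    intro l
    exact sum_repr_coe y (hZY (w l).2)
  have hb : ∀ l, ∑ j, b l j • (y j : F) = z * w l := by
    intro l
    exact sum_repr_coe y (hzZ _ (w l).2)
  let φ : (Fin p → K) →ₗ[K] F := Fintype.linearCombination K fun j => (y j : F)
  let κ : Fin q → Fin p → K := fun l j => t * algebraMap k K (a l j) - algebraMap k K (b l j)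
  let ψ : (Fin q → K) →ₗ[K] (Fin p → K) := Fintype.linearCombination K κ
  have hφ : ∀ c, φ c = ∑ j, c j • (y j : F) := fun c => rfl
  have hψ : ∀ c j, ψ c j = ∑ l, c l * κ l j := by
    intro c j
    simp [ψ, Fintype.linearCombination_apply, Finset.sum_apply]
  let D : Fin q → Fin p → k[X] := fun l j => X * C (a l j) - C (b l j)
  have hDκ : ∀ l j, aeval t (D l j) = κ l j := by
    intro l j; simp only [D, κ, map_sub, map_mul, aeval_X, aeval_C]
  -- polynomial identity behind the relations
  have hpoly : ∀ R : Fin q → k[X], ∑ j, (∑ l, R l * D l j).map (algebraMap k F) * C (y j : F) =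
      (X - C z) * ∑ l, (R l).map (algebraMap k F) * C (w l : F) := by
    intro R
    have h1 : ∀ l, ∑ j, (D l j).map (algebraMap k F) * C (y j : F) = (X - C z) * C (w l : F) := by
      intro l
      simp only [D, Polynomial.map_sub, Polynomial.map_mul, map_X, map_C, sub_mul,
        Finset.sum_sub_distrib, mul_assoc, ← C_mul]
      rw [← Finset.mul_sum, ← map_sum, ← map_sum, ← hb, ← ha]
      simp only [Algebra.smul_def]
    simp only [Polynomial.map_sum, Polynomial.map_mul, Finset.sum_mul, Finset.mul_sum]
    rw [Finset.sum_comm]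
    refine Finset.sum_congr rfl fun l _ => ?_
    rw [show (X - C z) * ((R l).map (algebraMap k F) * C (w l : F)) =
      (R l).map (algebraMap k F) * ((X - C z) * C (w l : F)) by ring, ← h1, Finset.mul_sum]
    refine Finset.sum_congr rfl fun j _ => by ring
  have hcoef : ∀ {ι : Type} [Fintype ι] (P : ι → k[X]) (v : ι → F) (n : ℕ),
      (∑ j, (P j).map (algebraMap k F) * C (v j)).coeff n = ∑ j, (P j).coeff n • v j := by
    intro ι _ P v n
    simp only [finsetSum_coeff, coeff_mul_C, coeff_map, Algebra.smul_def]
  have huniq : ∀ {ι : Type} [Fintype ι] (P : ι → k[X]) (v : ι → F), LinearIndependent k v →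
      ∑ j, (P j).map (algebraMap k F) * C (v j) = 0 → ∀ j, P j = 0 := by
    intro ι _ P v hv h j
    ext n
    have := hcoef P v n
    rw [h, coeff_zero] at this
    exact (Fintype.linearIndependent_iff.1 hv _ this.symm) j
  have hψinj : Function.Injective ψ := by
    rw [← LinearMap.ker_eq_bot, LinearMap.ker_eq_bot']
    intro c hc
    obtain ⟨Q, hQ, R, hR⟩ := common_denom hfrac c
    have h1 : ∀ j, ∑ l, R l * D l j = 0 := by
      intro j
      apply hinj
      have := congrFun hc j
      rw [hψ] at this
      rw [map_sum]
      simp only [map_mul, hDκ, ← hR, mul_assoc, ← Finset.mul_sum]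
      rw [this]; simp
    have h2 := hpoly R
    simp only [h1, Polynomial.map_zero, zero_mul, Finset.sum_const_zero] at h2
    have h3 := (mul_eq_zero.1 h2.symm).resolve_left (X_sub_C_ne_zero z)
    have h4 := huniq R _ wli h3
    ext l
    have := hR l
    rw [h4 l, map_zero] at this
    exact (mul_eq_zero.1 this).resolve_left fun h => hQ (hinj _ h)
  have hker : LinearMap.ker φ = LinearMap.range ψ := by
    apply le_antisymm
    · intro c hc
      rw [LinearMap.mem_ker, hφ] at hc
      obtain ⟨Q, hQ, P, hP⟩ := common_denom hfrac c
      set G : F[X] := ∑ j, (P j).map (algebraMap k F) * C (y j : F) with hG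
      have hroot : G.IsRoot z := by
        rw [IsRoot.def, hG, eval_finsetSum]
        have : ∀ j, eval z ((P j).map (algebraMap k F) * C (y j : F)) =
            algebraMap K F (aeval t Q) * (c j • (y j : F)) := by
          intro j
          rw [eval_mul, eval_C, Algebra.smul_def, ← mul_assoc, ← map_mul, hP,
            eval_map_algebraMap, hz, aeval_algebraMap_apply]
        simp only [this]
        rw [← Finset.mul_sum, hc, mul_zero]
      obtain ⟨α, hα⟩ := dvd_iff_isRoot.2 hroot
      have hαZ := hpen α fun n => by
        rw [← hα, hG, hcoef]
        exact Submodule.sum_mem _ fun j _ => Y.smul_mem _ (y j).2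
      obtain ⟨R, hR⟩ := exists_coords w α hαZ
      have hαR : α = ∑ l, (R l).map (algebraMap k F) * C (w l : F) := by
        ext n; rw [hcoef, hR]
      have h5 := hpoly R
      rw [← hαR, ← hα, hG, ← sub_eq_zero, ← Finset.sum_sub_distrib] at h5
      simp only [← sub_mul, ← Polynomial.map_sub] at h5
      have h6 := huniq _ _ yli h5
      have hQ' : aeval t Q ≠ 0 := fun h => hQ (hinj _ h)
      refine ⟨fun l => (aeval t Q)⁻¹ * aeval t (R l), ?_⟩
      ext j
      rw [hψ]
      apply mul_left_cancel₀ hQ'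
      rw [hP, ← sub_eq_zero.1 (h6 j), map_sum, Finset.mul_sum]
      refine Finset.sum_congr rfl fun l _ => ?_
      rw [map_mul, hDκ]; field_simp
    · rintro _ ⟨c, rfl⟩
      rw [LinearMap.mem_ker, hφ]
      simp only [hψ, Finset.sum_smul]
      rw [Finset.sum_comm]
      refine Finset.sum_eq_zero fun l _ => ?_
      simp only [mul_smul, ← Finset.smul_sum]
      have : ∑ j, κ l j • (y j : F) = 0 := by
        simp only [κ, sub_smul, mul_smul, Finset.sum_sub_distrib, algebraMap_smul,
          ← Finset.smul_sum]
        rw [ha, hb, Algebra.smul_def, sub_self]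
      rw [this, smul_zero]
  have hrange : LinearMap.range φ = Submodule.span K (Y : Set F) := by
    rw [Fintype.range_linearCombination]
    apply le_antisymm
    · rw [Submodule.span_le]
      rintro _ ⟨j, rfl⟩
      exact Submodule.subset_span (y j).2
    · rw [Submodule.span_le]
      intro v hv
      have := congrArg (Submodule.subtype Y) (y.sum_repr ⟨v, hv⟩)
      simp only [map_sum, map_smul, Submodule.subtype_apply] at this
      rw [← this]
      refine Submodule.sum_mem _ fun j _ => ?_
      rw [← algebraMap_smul K]
      exact Submodule.smul_mem _ _ (Submodule.subset_span ⟨j, rfl⟩)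
  have h7 := LinearMap.finrank_range_add_finrank_ker φ
  rw [hker, LinearMap.finrank_range_of_inj hψinj, hrange] at h7
  simpa using h7

end Pencil
end CliffordBound

/-! ### Saturation and simple transcendental extensions -/

namespace CliffordBound
open Module

section Pencil2
open Polynomial
variable {k F : Type*} [Field k] [Field F] [Algebra k F]

/-- Saturation with respect to powers of `z` gives the division property required by the pencil lemma. -/
theorem pencil_of_sat {z : F} {Y : ℕ → Submodule k F} (mono : ∀ k, Y k ≤ Y (k + 1))
    (zmul : ∀ k, ∀ x ∈ Y k, z * x ∈ Y (k + 1)) {j : ℕ}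
    (sat : ∀ m f, f ∈ Y (j + m) → z ^ m * f ∈ Y (j + m) → f ∈ Y j)
    (α : F[X]) (h : ∀ n, ((X - C z) * α).coeff n ∈ Y (j + 1)) (n : ℕ) : α.coeff n ∈ Y j := by
  have le : ∀ {i j : ℕ}, i ≤ j → Y i ≤ Y j := fun hij => monotone_nat_of_le_succ mono hij
  have zpow : ∀ (i k : ℕ) (x : F), x ∈ Y k → z ^ i * x ∈ Y (k + i) := by
    intro i k x hx
    induction i with
    | zero => simpa
    | succ i ih => rw [pow_succ', mul_assoc]; exact zmul _ _ ih
  have h0 : z * α.coeff 0 ∈ Y (j + 1) := by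
    have := h 0
    rw [sub_mul, coeff_sub, coeff_X_mul_zero, coeff_C_mul, zero_sub] at this
    simpa using this
  have hs : ∀ n, α.coeff n - z * α.coeff (n + 1) ∈ Y (j + 1) := by
    intro n
    have := h (n + 1)
    rwa [sub_mul, coeff_sub, coeff_X_mul, coeff_C_mul] at this
  have up : ∀ n, z ^ (n + 1) * α.coeff n ∈ Y (j + 1 + n) := by
    intro n
    induction n with
    | zero => simpa using h0
    | succ n ih =>
      have h1 : z ^ (n + 1 + 1) * α.coeff (n + 1) = z ^ (n + 1) * α.coeff n -
        z ^ (n + 1) * (α.coeff n - z * α.coeff (n + 1)) := by ring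
      rw [h1]
      exact Submodule.sub_mem _ (le (by omega) ih) (zpow (n + 1) (j + 1) _ (hs n))
  have down : ∀ m n, α.natDegree ≤ n + m → α.coeff n ∈ Y (j + 1 + m) := by
    intro m
    induction m with
    | zero =>
      intro n hn
      have h1 := hs n
      rwa [coeff_eq_zero_of_natDegree_lt (by omega : α.natDegree < n + 1), mul_zero, sub_zero] at h1
    | succ m ih =>
      intro n hn
      have h1 : α.coeff n = (α.coeff n - z * α.coeff (n + 1)) + z * α.coeff (n + 1) := by ring
      rw [h1]
      exact Submodule.add_mem _ (le (by omega) (hs n)) (zmul _ _ (ih (n + 1) (by omega)))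
  refine sat (α.natDegree + n + 1) _ (le (by omega) (down α.natDegree n (by omega))) ?_
  have h2 := zpow α.natDegree _ _ (up n)
  rw [← mul_assoc, ← pow_add, ← add_assoc] at h2
  exact le (by omega) h2

end Pencil2

section SimpleAdjoin
open Polynomial IntermediateField
variable {k F : Type*} [Field k] [Field F] [Algebra k F]

theorem adjoin_frac {z : F} (hz : Transcendental k z) (c : k⟮z⟯) :
    ∃ p q : k[X], q ≠ 0 ∧ aeval (AdjoinSimple.gen k z) q * c = aeval (AdjoinSimple.gen k z) p := by
  obtain ⟨p, q, hpq⟩ := (mem_adjoin_simple_iff k (c : F)).1 c.2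
  have hinj : Function.Injective (algebraMap k⟮z⟯ F) := (algebraMap k⟮z⟯ F).injective
  have hev : ∀ p : k[X], algebraMap k⟮z⟯ F (aeval (AdjoinSimple.gen k z) p) = aeval z p := by
    intro p
    rw [← aeval_algebraMap_apply, AdjoinSimple.algebraMap_gen]
  by_cases hq : aeval z q = 0
  · refine ⟨0, 1, one_ne_zero, hinj ?_⟩
    rw [hq, div_zero] at hpq
    have : c = 0 := by ext; simpa using hpq
    rw [this]; simp
  · refine ⟨p, q, fun h => hq (by rw [h, map_zero]), hinj ?_⟩
    rw [map_mul, hev, hev]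
    change _ * (c : F) = _
    rw [hpq]
    field_simp

theorem adjoin_gen_transcendental {z : F} (hz : Transcendental k z) :
    Transcendental k (AdjoinSimple.gen k z) := by
  rw [← transcendental_algebraMap_iff (FaithfulSMul.algebraMap_injective k⟮z⟯ F)]
  exact hz

end SimpleAdjoin
end CliffordBound

/-! ### Filtrations on a surface and the dimension count -/

namespace CliffordBound
open Module

section Surface
open IntermediateField
variable {k F : Type*} [Field k] [Field F] [Algebra k F]

/-- A filtration of `k`-subspaces of `F` modelling the graded pieces of a torsion-free rank one
sheaf on a surface of degree `s`, dehomogenized by a linear form: the other two sections of a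
general net are `z₁` and `z₂`, and the first difference of the Hilbert function is
`s·(i+1) + χ`. The condition `sat` says that the first two forms of the net are a regular
sequence in large degree, and `gen` that the net generates in large degree. -/
structure PencilSeq (z₁ z₂ : F) (N₀ : ℕ) (s χ : ℤ) (Y : ℕ → Submodule k F) : Prop where
  fd : ∀ i, FiniteDimensional k (Y i)
  mono : ∀ i, Y i ≤ Y (i + 1)
  z₁mul : ∀ i, ∀ x ∈ Y i, z₁ * x ∈ Y (i + 1)
  z₂mul : ∀ i, ∀ x ∈ Y i, z₂ * x ∈ Y (i + 1)
  sat : ∀ i, N₀ ≤ i → ∀ f, f ∈ Y (i + 1) → z₁ * f ∈ Y (i + 1) → f ∈ Y i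
  gen : ∀ i, N₀ ≤ i → Y (i + 1) ≤ Y i ⊔ sc z₁ (Y i) ⊔ sc z₂ (Y i)
  diff : ∀ i, N₀ ≤ i → (finrank k (Y (i + 1)) : ℤ) = finrank k (Y i) + s * ((i : ℤ) + 1) + χ

theorem GoodSeq.shift {z : F} {N₀ : ℕ} {s χ : ℤ} {M : ℕ → Submodule k F}
    (h : GoodSeq z N₀ s χ M) (n : ℕ) : GoodSeq z N₀ s (s * n + χ) (fun i => M (n + i)) where
  fd i := h.fd _
  mono i := h.mono _
  zmul i := h.zmul _
  gen i hi := h.gen (n + i) (by omega)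
  dim i hi := by rw [h.dim (n + i) (by omega)]; push_cast; ring

theorem span_mul_mem {K : Type*} [Field K] [Algebra K F] {A B C : Set F}
    (h : ∀ x ∈ A, ∀ y ∈ B, x * y ∈ C) {x y : F} (hx : x ∈ Submodule.span K A)
    (hy : y ∈ Submodule.span K B) : x * y ∈ Submodule.span K C := by
  have h1 := Submodule.mul_mem_mul hx hy
  rw [Submodule.span_mul_span] at h1
  refine Submodule.span_mono ?_ h1
  rintro _ ⟨a, ha, b, hb, rfl⟩
  exact h a ha b hb

/-- The difference of consecutive dimensions over `k` is a dimension over `k(z)`. -/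
theorem finrank_span_adjoin {z : F} (hz : Transcendental k z) {Y : ℕ → Submodule k F}
    (fd : ∀ i, FiniteDimensional k (Y i)) (mono : ∀ k, Y k ≤ Y (k + 1))
    (zmul : ∀ k, ∀ x ∈ Y k, z * x ∈ Y (k + 1)) {j : ℕ}
    (sat : ∀ m f, f ∈ Y (j + m) → z ^ m * f ∈ Y (j + m) → f ∈ Y j) :
    finrank k⟮z⟯ (Submodule.span k⟮z⟯ (Y (j + 1) : Set F)) + finrank k (Y j)
      = finrank k (Y (j + 1)) := by
  have := fd (j + 1)
  refine finrank_span_pencil (t := AdjoinSimple.gen k z) (adjoin_gen_transcendental hz)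
    (adjoin_frac hz) (mono j) ?_ ?_
  · rw [AdjoinSimple.algebraMap_gen]; exact zmul j
  · rw [AdjoinSimple.algebraMap_gen]; exact pencil_of_sat mono zmul sat

/-- The span of a finite-dimensional space over a larger field is finite-dimensional. -/
theorem finite_span_of_finite (K : Type*) [Field K] [Algebra k K] [Algebra K F]
    [IsScalarTower k K F]
    (Y : Submodule k F) [FiniteDimensional k Y] :
    FiniteDimensional K (Submodule.span K (Y : Set F)) := by
  obtain ⟨S, hS⟩ := (Submodule.fg_iff_finiteDimensional Y).2 inferInstance
  have : Submodule.span K (Y : Set F) = Submodule.span K (S : Set F) := by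
    rw [← hS, Submodule.span_span_of_tower]
  rw [this]
  exact FiniteDimensional.span_finset K S

theorem mem_range_of_isAlgebraic [IsAlgClosed k] {x : F} (h : IsAlgebraic k x) :
    x ∈ (algebraMap k F).range :=
  minpoly.mem_range_of_degree_eq_one k x
    (IsAlgClosed.degree_eq_one_of_irreducible k (minpoly.irreducible h.isIntegral))

theorem gen_smul_eq {z : F} (x : F) : AdjoinSimple.gen k z • x = z * x := by
  rw [Algebra.smul_def, AdjoinSimple.algebraMap_gen]

namespace PencilSeq
variable {z₁ z₂ : F} {N₀ : ℕ} {s χ : ℤ} {Y : ℕ → Submodule k F}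

theorem sat_pow (h : PencilSeq z₁ z₂ N₀ s χ Y) {j : ℕ} (hj : N₀ ≤ j) (m : ℕ) (f : F)
    (h1 : f ∈ Y (j + m)) (h2 : z₁ ^ m * f ∈ Y (j + m)) : f ∈ Y j :=
  CliffordBound.sat_pow h.mono h.z₁mul (fun i hi f h1 h2 => h.sat i hi f h1 h2) m j hj f h1 h2

theorem goodSeq (h : PencilSeq z₁ z₂ N₀ s χ Y) (hz : Transcendental k z₁) :
    GoodSeq z₂ (N₀ + 1) s χ (fun i => Submodule.span k⟮z₁⟯ (Y i : Set F)) where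
  fd i := by
    have := h.fd i
    exact finite_span_of_finite _ _
  mono i := Submodule.span_mono (h.mono i)
  zmul i x hx := by
    have : z₂ ∈ Submodule.span k⟮z₁⟯ ({z₂} : Set F) := Submodule.mem_span_singleton_self _
    exact span_mul_mem (by rintro _ rfl y hy; exact h.z₂mul i y hy) this hx
  gen i hi := by
    rw [Submodule.span_le]
    intro x hx
    obtain ⟨y, hy, c', hc', rfl⟩ := Submodule.mem_sup.1 (h.gen i (by omega) hx)
    obtain ⟨a, ha, b', hb', rfl⟩ := Submodule.mem_sup.1 hy
    obtain ⟨b, hb, rfl⟩ := mem_sc.1 hb'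
    obtain ⟨c, hc, rfl⟩ := mem_sc.1 hc'
    refine Submodule.add_mem_sup (Submodule.add_mem _ (Submodule.subset_span ha) ?_)
      (mul_mem_sc (Submodule.subset_span hc))
    rw [← gen_smul_eq (k := k)]
    exact Submodule.smul_mem _ _ (Submodule.subset_span hb)
  dim i hi := by
    obtain ⟨j, rfl⟩ : ∃ j, i = j + 1 := ⟨i - 1, by omega⟩
    have h1 := finrank_span_adjoin hz h.fd h.mono h.z₁mul (j := j)
      (fun m f h1 h2 => h.sat_pow (by omega) m f h1 h2)
    have h2 := h.diff j (by omega)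
    push_cast
    zify at h1
    linarith

/-- The pencil parameter of a growing filtration is transcendental. -/
theorem transcendental [IsAlgClosed k] (h : PencilSeq z₁ z₂ N₀ s χ Y) (hs : 0 < s) :
    Transcendental k z₁ := by
  intro halg
  obtain ⟨c, rfl⟩ := mem_range_of_isAlgebraic halg
  obtain ⟨i, hi1, hi2⟩ : ∃ i : ℕ, N₀ ≤ i ∧ -χ < i :=
    ⟨N₀ + χ.natAbs + 1, by omega, by omega⟩
  have hle : Y (i + 1) ≤ Y i := fun f hf => h.sat i hi1 f hf (by
    rw [← Algebra.smul_def]; exact Submodule.smul_mem _ _ hf)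
  have := h.fd i
  have h1 := Submodule.finrank_mono hle
  have h2 := h.diff i hi1
  zify at h1
  nlinarith

end PencilSeq

/-- The degree `i` piece of `Y` saturated with respect to multiplication by `U κ`. -/
def til (U Y : ℕ → Submodule k F) (κ i : ℕ) : Submodule k F where
  carrier := {f | ∀ u ∈ U κ, f * u ∈ Y (i + κ)}
  zero_mem' u _ := by rw [zero_mul]; exact zero_mem _
  add_mem' ha hb u hu := by rw [add_mul]; exact add_mem (ha u hu) (hb u hu)
  smul_mem' c f hf u hu := by rw [smul_mul_assoc]; exact Submodule.smul_mem _ c (hf u hu)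

theorem mem_til {U Y : ℕ → Submodule k F} {κ i : ℕ} {f : F} :
    f ∈ til U Y κ i ↔ ∀ u ∈ U κ, f * u ∈ Y (i + κ) := Iff.rfl

/-- The filtration `U` of the function field of a surface by the graded pieces of its
dehomogenized coordinate ring. -/
structure SurfaceSeq (z₁ z₂ : F) (N₀ : ℕ) (s χ₀ : ℤ) (U : ℕ → Submodule k F) : Prop where
  seq : PencilSeq z₁ z₂ N₀ s χ₀ U
  one_mem : ∀ i, (1 : F) ∈ U i
  mul_mem : ∀ i j, ∀ x ∈ U i, ∀ y ∈ U j, x * y ∈ U (i + j)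
  top : ∀ L : IntermediateField k F, (∀ i, ∀ x ∈ U i, x ∈ L) → L = ⊤
  closed : ∀ f : F, IsAlgebraic k⟮z₁⟯ f → f ∈ (algebraMap k⟮z₁⟯ F).range

section Til
variable {z₁ z₂ : F} {N₀ : ℕ} {s χ χ₀ : ℤ} {U Y : ℕ → Submodule k F} {κ : ℕ}

theorem til_le (h : SurfaceSeq z₁ z₂ N₀ s χ₀ U) (i : ℕ) : til U Y κ i ≤ Y (i + κ) := by
  intro f hf
  simpa using mem_til.1 hf 1 (h.one_mem κ)

theorem z₂_pow_mem (h : SurfaceSeq z₁ z₂ N₀ s χ₀ U) (i : ℕ) : z₂ ^ i ∈ U i := by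
  induction i with
  | zero => simpa using h.one_mem 0
  | succ i ih => rw [pow_succ']; exact h.seq.z₂mul _ _ ih

theorem til_z₂ (h : SurfaceSeq z₁ z₂ N₀ s χ₀ U) {i : ℕ} {f : F} (hf : f ∈ til U Y κ i) :
    z₂ ^ κ * f ∈ Y (i + κ) := by
  rw [mul_comm]; exact hf _ (z₂_pow_mem h κ)

theorem til_fd (h : SurfaceSeq z₁ z₂ N₀ s χ₀ U) (hY : PencilSeq z₁ z₂ N₀ s χ Y) (i : ℕ) :
    FiniteDimensional k (til U Y κ i) := by
  have := hY.fd (i + κ)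
  exact Submodule.finiteDimensional_of_le (til_le h i)

/-- Restriction of the saturated twists to the generic member of the pencil. -/
theorem finrank_til (h : SurfaceSeq z₁ z₂ N₀ s χ₀ U) (hY : PencilSeq z₁ z₂ N₀ s χ Y)
    (hz : Transcendental k z₁) (hκ : N₀ ≤ κ) (i : ℕ) :
    finrank k⟮z₁⟯ (Submodule.span k⟮z₁⟯ (til U Y κ (i + 1) : Set F)) + finrank k (til U Y κ i)
      = finrank k (til U Y κ (i + 1)) := by
  have reind : ∀ a : ℕ, i + κ + a = i + a + κ := fun a => by omega
  refine finrank_span_adjoin hz (Y := til U Y κ) (til_fd h hY) ?_ ?_ ?_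
  · intro j f hf u hu
    rw [show j + 1 + κ = j + κ + 1 by omega]
    exact hY.mono _ (hf u hu)
  · intro j f hf u hu
    rw [show j + 1 + κ = j + κ + 1 by omega, mul_assoc]
    exact hY.z₁mul _ _ (hf u hu)
  · intro m f h1 h2 u hu
    have h1' := h1 u hu
    have h2' := h2 u hu
    rw [← reind, mul_assoc] at h2'
    rw [← reind] at h1'
    exact hY.sat_pow (by omega) m _ h1' h2'

/-- The Clifford estimate for the restriction of a saturated twist to a general member of the
pencil. -/
theorem clifford_til (h : SurfaceSeq z₁ z₂ N₀ s χ₀ U) (hY : PencilSeq z₁ z₂ N₀ s χ Y)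
    (hUY : ∀ i j, ∀ x ∈ U i, ∀ y ∈ Y j, x * y ∈ Y (i + j))
    (hz : Transcendental k z₁) (hs : 0 < s) (i : ℕ)
    (h0 : til U Y κ i ≠ ⊥)
    (hD : s * i + χ < finrank k⟮z₁⟯ (Submodule.span k⟮z₁⟯ (til U Y κ i : Set F))) :
    2 * (finrank k⟮z₁⟯ (Submodule.span k⟮z₁⟯ (til U Y κ i : Set F)) : ℤ) - (s * i + χ)
      ≤ 2 - χ₀ := by
  refine clifford h.closed hs (h.seq.goodSeq hz) (Submodule.subset_span (h.one_mem 0)) ?_ ?_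
    ((hY.goodSeq hz).shift i) ?_ _ ?_ (n := κ) ?_ ?_ hD
  · intro a b x hx y hy
    exact span_mul_mem (h.mul_mem a b) hx hy
  · intro L hL
    have := h.top (L.restrictScalars k) (fun j x hx => hL j x (Submodule.subset_span hx))
    rw [eq_top_iff]
    intro x _
    have hx : x ∈ L.restrictScalars k := by rw [this]; exact IntermediateField.mem_top
    exact hx
  · intro a b x hx y hy
    change x * y ∈ Submodule.span k⟮z₁⟯ (Y (i + (a + b)) : Set F)
    rw [show i + (a + b) = a + (i + b) by omega]
    exact span_mul_mem (hUY a (i + b)) hx hy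
  · obtain ⟨f, hf, hf0⟩ := (Submodule.ne_bot_iff _).1 h0
    exact (Submodule.ne_bot_iff _).2 ⟨f, Submodule.subset_span hf, hf0⟩
  · intro e he
    exact Submodule.span_mono (til_le h i) he
  · intro e he
    have : z₂ ^ κ ∈ Submodule.span k⟮z₁⟯ ({z₂ ^ κ} : Set F) :=
      Submodule.mem_span_singleton_self _
    exact span_mul_mem (by rintro _ rfl y hy; exact til_z₂ h hy) this he

/-- A nonzero section of a saturated twist of `Y` embeds `U` into the corresponding twist of `Y`. -/
theorem mul_mem_of_til (h : SurfaceSeq z₁ z₂ N₀ s χ₀ U) (hY : PencilSeq z₁ z₂ N₀ s χ Y)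
    (hκ : N₀ ≤ κ) {i : ℕ} {f : F} (hf : f ∈ til U Y κ i) (j : ℕ) :
    ∀ u ∈ U (κ + j), f * u ∈ Y (i + κ + j) := by
  induction j with
  | zero => exact hf
  | succ j ih =>
    intro u hu
    obtain ⟨y, hy, c', hc', rfl⟩ := Submodule.mem_sup.1 (h.seq.gen (κ + j) (by omega) hu)
    obtain ⟨a, ha, b', hb', rfl⟩ := Submodule.mem_sup.1 hy
    obtain ⟨b, hb, rfl⟩ := mem_sc.1 hb'
    obtain ⟨c, hc, rfl⟩ := mem_sc.1 hc'
    rw [mul_add, mul_add, mul_left_comm f z₁, mul_left_comm f z₂]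
    exact add_mem (add_mem (hY.mono _ (ih a ha)) (hY.z₁mul _ _ (ih b hb)))
      (hY.z₂mul _ _ (ih c hc))

/-- On a surface of degree `s ≤ 2r - 4` spanning `ℙ^r`, Clifford's inequality excludes that the
hyperplane series of the sectional curve is special, so `r ≤ s + χ₀ = s + 1 - π`. -/
theorem sectional_genus_le [IsAlgClosed k] (h : SurfaceSeq z₁ z₂ N₀ s χ₀ U) (hs : 0 < s) {r : ℤ}
    (hr : (finrank k (U 1) : ℤ) = r + 1) (hs2 : s ≤ 2 * r - 4) : r ≤ s + χ₀ := by
  have hz := h.seq.transcendental hs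
  have hfin := finrank_til h h.seq hz le_rfl 0
  have hfd := h.seq.fd
  have h0 : finrank k (til U U N₀ 0) ≤ 1 := by
    have hle : til U U N₀ 0 ≤ Submodule.span k {(1 : F)} := by
      intro f hf
      have hne : U N₀ ≠ ⊥ := (Submodule.ne_bot_iff _).2 ⟨1, h.one_mem _, one_ne_zero⟩
      obtain ⟨c, rfl⟩ := mem_range_of_isAlgebraic (isAlgebraic_of_stable hne (x := f)
        (by simpa [mem_til] using hf))
      rw [Algebra.algebraMap_eq_smul_one]
      exact Submodule.smul_mem _ _ (Submodule.mem_span_singleton_self _)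
    exact (Submodule.finrank_mono hle).trans (finrank_span_singleton (K := k) one_ne_zero).le
  have hU1 : U 1 ≤ til U U N₀ 1 := fun f hf u hu => h.mul_mem 1 N₀ f hf u hu
  have hfd1 : FiniteDimensional k (til U U N₀ 1) := til_fd h h.seq 1
  have h1 := Submodule.finrank_mono hU1
  have hne : til U U N₀ 1 ≠ ⊥ :=
    (Submodule.ne_bot_iff _).2 ⟨1, hU1 (h.one_mem _), one_ne_zero⟩
  have hcl := clifford_til (κ := N₀) h h.seq h.mul_mem hz hs 1 hne
  rw [zero_add] at hfin
  zify at hfin h0 h1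
  push_cast at hcl
  by_contra hcon
  have := hcl (by linarith)
  linarith

end Til

/-- The numerical core: the dimension count for the ideal of a curve on a surface. -/
theorem core_bound [IsAlgClosed k] {z₁ z₂ : F} {N₀ : ℕ} {s d g π pa r : ℤ}
    {U V : ℕ → Submodule k F}
    (h : SurfaceSeq z₁ z₂ N₀ s (1 - π) U) (hV : PencilSeq z₁ z₂ N₀ s (1 - π - d) V)
    (hUV : ∀ i j, ∀ x ∈ U i, ∀ y ∈ V j, x * y ∈ V (i + j))
    (hdU : ∀ i : ℕ, N₀ ≤ i → 2 * (finrank k (U i) : ℤ) =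
      s * (i * (i + 1)) + 2 * (1 - π) * i + 2 * (1 + pa))
    (hdV : ∀ i : ℕ, N₀ ≤ i → (finrank k (V i) : ℤ) = finrank k (U i) - (d * i + 1 - g))
    (hs : 0 < s) (hd : 0 < d)
    (hr : (finrank k (U 1) : ℤ) = r + 1) (hs2 : s ≤ 2 * r - 4) :
    g ≤ (((d - 1) / s) * ((d - 1) / s - 1) / 2) * s + ((d - 1) / s) * ((d - 1) % s + π) - pa
      + max 0 ((2 * π - (s - 1 - (d - 1) % s)) / 2) := by
  have hz := h.seq.transcendental hs
  have hsec := sectional_genus_le h hs hr hs2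
  have hdm := Int.mul_ediv_add_emod (d - 1) s
  have he0 := Int.emod_nonneg (d - 1) hs.ne'
  have he1 := Int.emod_lt_of_pos (d - 1) hs
  have hm0 : 0 ≤ (d - 1) / s := Int.ediv_nonneg (by omega) hs.le
  set m' := (d - 1) / s
  set ε := (d - 1) % s
  obtain ⟨m, hm⟩ := Int.eq_ofNat_of_zero_le hm0
  clear_value m' ε
  subst hm
  have hfdV := hV.fd
  -- a section of the ideal in degree `m` would violate Bezout
  have hbot : til U V N₀ m = ⊥ := by
    by_contra hne
    obtain ⟨f, hf, hf0⟩ := (Submodule.ne_bot_iff _).1 hne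
    have hdim : ∀ T : ℕ, N₀ ≤ T → finrank k (U T) ≤ finrank k (V (m + T)) := by
      intro T hT
      obtain ⟨j, rfl⟩ := Nat.exists_eq_add_of_le hT
      rw [← finrank_sc hf0, ← add_assoc]
      exact Submodule.finrank_mono (sc_le.2 (mul_mem_of_til h hV le_rfl hf j))
    obtain ⟨c, hc⟩ : ∃ c : ℤ, c = s * (m * (m + 1)) + 2 * (1 - π) * m - 2 * (1 - g) - 2 * d * m :=
      ⟨_, rfl⟩
    obtain ⟨T, hT, hTc⟩ : ∃ T : ℕ, N₀ ≤ T ∧ c < T := ⟨N₀ + c.natAbs + 1, by omega, by omega⟩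
    have h1 := hdim T hT
    have h2 := hdU T hT
    have h3 := hdV (m + T) (by omega)
    have h4 := hdU (m + T) (by omega)
    zify at h1
    push_cast at h2 h3 h4
    have hd' : d = s * m + ε + 1 := by linarith
    have h5 : 2 * (T : ℤ) * (ε + 1) ≤ c := by
      rw [hc]
      have : s * (((m : ℤ) + T) * (m + T + 1)) = s * (T * (T + 1)) + 2 * T * (s * m)
        + s * (m * (m + 1)) := by ring
      have : d * ((m : ℤ) + T) = T * (s * m) + T * (ε + 1) + d * m := by rw [hd']; ring
      linarith
    have h6 : (0 : ℤ) ≤ T * ε := by positivity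
    have : (0 : ℤ) ≤ T := by positivity
    linarith
  have hes : 2 * π + 2 ≤ s := by linarith
  have hd' : d = s * m + ε + 1 := by linarith
  -- dimension bound in degree `m + 1`
  have hJ : finrank k (til U V N₀ (m + 1)) = finrank k⟮z₁⟯ (Submodule.span k⟮z₁⟯
      (til U V N₀ (m + 1) : Set F)) := by
    have := finrank_til h hV hz le_rfl m
    rw [hbot, finrank_bot] at this
    omega
  have hJ1 : (finrank k (til U V N₀ (m + 1)) : ℤ) ≤ max (s - 1 - ε + 1 - π)
      ((s - 1 - ε) / 2 + 1) := by
    by_cases h0 : til U V N₀ (m + 1) = ⊥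
    · rw [h0, finrank_bot]
      push_cast
      omega
    · have hcl := clifford_til (κ := N₀) h hV hUV hz hs (m + 1) h0
      rw [← hJ] at hcl
      have he : s * ((m + 1 : ℕ) : ℤ) + (1 - π - d) = s - 1 - ε + 1 - π := by
        push_cast; rw [hd']; ring
      rw [he] at hcl
      by_contra hcon
      rw [not_le, max_lt_iff] at hcon
      have := hcl hcon.1
      omega
  -- growth in higher degrees
  have hgrow : ∀ j : ℕ, 2 * (finrank k (til U V N₀ (m + 1 + j)) : ℤ) ≤
      2 * finrank k (til U V N₀ (m + 1)) +
      (s * ((m + 1 + j) * (m + 2 + j)) + 2 * (1 - π - d) * (m + 1 + j)) -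
      (s * ((m + 1) * (m + 2)) + 2 * (1 - π - d) * (m + 1)) := by
    intro j
    induction j with
    | zero => push_cast; ring_nf; rfl
    | succ j ih =>
      have hst := finrank_til h hV hz le_rfl (m + 1 + j)
      have he : s * ((m + 1 + j + 1 : ℕ) : ℤ) + (1 - π - d) = s * j + (2 * s - ε - π) := by
        push_cast; rw [hd']; ring
      have hsj : 0 ≤ s * j := by positivity
      have hJ2 : (finrank k⟮z₁⟯ (Submodule.span k⟮z₁⟯ (til U V N₀ (m + 1 + j + 1) : Set F)) : ℤ)
          ≤ s * ((m + 1 + j + 1 : ℕ) : ℤ) + (1 - π - d) := by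
        by_cases h0 : til U V N₀ (m + 1 + j + 1) = ⊥
        · rw [h0, he, Submodule.bot_coe, Submodule.span_zero_singleton, finrank_bot]
          push_cast
          linarith
        · by_contra hcon
          rw [not_le] at hcon
          have hcl := clifford_til (κ := N₀) h hV hUV hz hs _ h0 hcon
          rw [he] at hcl hcon
          linarith
      zify at hst
      rw [← add_assoc]
      push_cast at *
      have : s * (((m : ℤ) + 1 + (j + 1)) * (m + 2 + (j + 1))) =
        s * ((m + 1 + j) * (m + 2 + j)) + 2 * (s * (m + 1 + j + 1)) := by ring
      linarith
  -- comparison with the actual ideal in large degree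
  have hfin : s * (((m : ℤ) + 1) * (m + 2)) + 2 * (1 - π - d) * (m + 1) + 2 * pa + 2 * g ≤
      2 * finrank k (til U V N₀ (m + 1)) := by
    have hle : V (m + 1 + N₀) ≤ til U V N₀ (m + 1 + N₀) := fun f hf u hu => by
      rw [mul_comm, add_comm _ N₀]; exact hUV N₀ _ u hu f hf
    have hfd' : FiniteDimensional k (til U V N₀ (m + 1 + N₀)) := til_fd h hV _
    have h1 := Submodule.finrank_mono hle
    have h2 := hgrow N₀
    have h3 := hdV (m + 1 + N₀) (by omega)
    have h4 := hdU (m + 1 + N₀) (by omega)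
    zify at h1
    push_cast at h2 h3 h4
    have : s * (((m : ℤ) + 1 + N₀) * (m + 1 + N₀ + 1)) = s * ((m + 1 + N₀) * (m + 2 + N₀)) := by
      ring
    linarith
  have heven : 2 * ((m : ℤ) * (m - 1) / 2) = m * (m - 1) := by
    refine Int.mul_ediv_cancel' ?_
    have := Int.even_mul_pred_self (m : ℤ)
    exact this.two_dvd
  have hkey : 2 * g ≤ 2 * finrank k (til U V N₀ (m + 1)) - 2 * (s - 1 - ε + 1 - π)
      + 2 * ((m : ℤ) * (m - 1) / 2 * s + m * (ε + π) - pa) := by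
    have e1 : 2 * ((m : ℤ) * (m - 1) / 2 * s + m * (ε + π) - pa) =
      m * (m - 1) * s + 2 * m * (ε + π) - 2 * pa := by linear_combination s * heven
    rw [e1]
    rw [hd'] at hfin
    linarith
  rw [max_def] at hJ1 ⊢
  split_ifs at hJ1 ⊢ <;> omega

end Surface
end CliffordBound

/-! ### Fields generated by general members of a pencil -/

namespace CliffordBound
open Module

section Bertini
open IntermediateField Polynomial
variable {k F : Type*} [Field k] [Field F] [Algebra k F]

/-- Weak Nullstellensatz: a nonzero finitely generated algebra over an algebraically closed
field has a rational point. -/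
theorem exists_algHom [IsAlgClosed k] (A : Type*) [CommRing A] [Nontrivial A] [Algebra k A]
    [Algebra.FiniteType k A] : Nonempty (A →ₐ[k] k) := by
  obtain ⟨m, hm⟩ := Ideal.exists_maximal A
  let _ : Field (A ⧸ m) := Ideal.Quotient.field m
  have : Module.Finite k (A ⧸ m) := finite_of_finite_type_of_isJacobsonRing k (A ⧸ m)
  have hb := IsAlgClosed.algebraMap_bijective_of_isIntegral (k := k) (K := A ⧸ m)
  let e := AlgEquiv.ofBijective (Algebra.ofId k (A ⧸ m)) hb
  exact ⟨e.symm.toAlgHom.comp (Ideal.Quotient.mkₐ k m)⟩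

/-- If `θ` is transcendental over an extension `E` of the algebraically closed field `k`, then
`k(θ)` is algebraically closed in `E(θ)`: an algebraic equation over `k(θ)` with a root in `E(θ)`
has a root in `k(θ)`, by specializing the coefficients of the root. -/
theorem mem_range_of_mem_adjoin [IsAlgClosed k] {E : IntermediateField k F} {θ f : F}
    (hθ : Transcendental E θ) (hf : f ∈ E⟮θ⟯) (halg : IsAlgebraic k⟮θ⟯ f) :
    f ∈ (algebraMap k⟮θ⟯ F).range := by
  classical
  have hθk : Transcendental k θ := fun h => hθ (h.tower_top E)
  have hinjE : Function.Injective (aeval θ : E[X] →ₐ[E] F) := transcendental_iff_injective.1 hθ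
  obtain ⟨p, q, hq, hpq⟩ : ∃ p q : E[X], q.Monic ∧ aeval θ q * f = aeval θ p := by
    obtain ⟨p, q, hpq⟩ := (mem_adjoin_simple_iff E f).1 hf
    by_cases hq : q = 0
    · exact ⟨0, 1, monic_one, by rw [hpq, hq]; simp⟩
    · have hq' : aeval θ q ≠ 0 := fun h => hq (hinjE (by rw [h, map_zero]))
      refine ⟨C q.leadingCoeff⁻¹ * p, q * C q.leadingCoeff⁻¹, monic_mul_leadingCoeff_inv hq, ?_⟩
      rw [hpq, map_mul, map_mul]
      field_simp
  set t := AdjoinSimple.gen k θ with ht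
  set μ := minpoly k⟮θ⟯ f with hμ
  set n := μ.natDegree
  obtain ⟨b, hb, P, hP⟩ := common_denom (t := t) (adjoin_frac hθk)
    (fun i : Fin (n + 1) => μ.coeff i)
  have hμsum : ∀ {R : Type _} [Field R] [Algebra k⟮θ⟯ R] (x y z : R), y * x = z →
      algebraMap k⟮θ⟯ R (aeval t b) * y ^ n * aeval x μ =
      ∑ i : Fin (n + 1), algebraMap k⟮θ⟯ R (aeval t (P i)) * z ^ (i : ℕ) * y ^ (n - i) := by
    intro R _ _ x y z hxy
    rw [aeval_eq_sum_range (p := μ), ← Fin.sum_univ_eq_sum_range (fun i => μ.coeff i • x ^ i),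
      Finset.mul_sum]
    refine Finset.sum_congr rfl fun i _ => ?_
    rw [← hP i, ← hxy, Algebra.smul_def, map_mul, mul_pow]
    have : y ^ n = y ^ (i : ℕ) * y ^ (n - i) := by rw [← pow_add]; congr 1; omega
    rw [this]; ring
  have hev : ∀ p : k[X], algebraMap k⟮θ⟯ F (aeval t p) = aeval θ p := by
    intro p
    rw [← aeval_algebraMap_apply, AdjoinSimple.algebraMap_gen]
  -- the polynomial identity over `E`
  have hE : ∑ i : Fin (n + 1), (P i).map (algebraMap k E) * p ^ (i : ℕ) * q ^ (n - i) = 0 := by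
    apply hinjE
    rw [map_zero, map_sum]
    have h1 := hμsum f (aeval θ q) (aeval θ p) hpq
    rw [minpoly.aeval, mul_zero] at h1
    rw [h1]
    refine Finset.sum_congr rfl fun i _ => ?_
    rw [map_mul, map_mul, map_pow, map_pow, hev, aeval_map_algebraMap]
  -- descend to a finitely generated subalgebra
  let S : Set E := ((p.coeffs ∪ q.coeffs : Finset E) : Set E)
  let A : Subalgebra k E := Algebra.adjoin k S
  have hAft : Algebra.FiniteType k A :=
    (Subalgebra.fg_iff_finiteType A).1 ⟨p.coeffs ∪ q.coeffs, rfl⟩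
  have hmem : ∀ x ∈ S, x ∈ Set.range (algebraMap A E) := fun x hx =>
    ⟨⟨x, Algebra.subset_adjoin hx⟩, rfl⟩
  have hinjA : Function.Injective (algebraMap A E) := Subtype.val_injective
  have lift : ∀ w : E[X], (w.coeffs : Set E) ⊆ S → w ∈ lifts (algebraMap A E) := by
    intro w hw
    rw [lifts_iff_coeffs_subset_range]
    exact fun x hx => hmem x (hw hx)
  obtain ⟨p', hp'⟩ := (mem_lifts p).1 (lift p (by simp [S]))
  obtain ⟨q', hq'⟩ := (mem_lifts q).1 (lift q (by simp [S]))
  have hq'm : q'.Monic := by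
    rw [← hq'] at hq
    exact monic_of_injective hinjA hq
  have hA : ∑ i : Fin (n + 1), (P i).map (algebraMap k A) * p' ^ (i : ℕ) * q' ^ (n - i) = 0 := by
    apply map_injective _ hinjA
    rw [Polynomial.map_zero, ← hE, Polynomial.map_sum]
    refine Finset.sum_congr rfl fun i _ => ?_
    rw [Polynomial.map_mul, Polynomial.map_mul, Polynomial.map_pow, Polynomial.map_pow, hp', hq',
      Polynomial.map_map, ← IsScalarTower.algebraMap_eq]
  obtain ⟨φ⟩ := exists_algHom (k := k) A
  have hk : ∑ i : Fin (n + 1), P i * (p'.map φ.toRingHom) ^ (i : ℕ)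
      * (q'.map φ.toRingHom) ^ (n - i) = 0 := by
    have := congrArg (Polynomial.map φ.toRingHom) hA
    rw [Polynomial.map_zero, Polynomial.map_sum] at this
    rw [← this]
    refine Finset.sum_congr rfl fun i _ => ?_
    rw [Polynomial.map_mul, Polynomial.map_mul, Polynomial.map_pow, Polynomial.map_pow,
      Polynomial.map_map]
    congr 2
    have : φ.toRingHom.comp (algebraMap k A) = RingHom.id k := by
      ext x; simp
    rw [this, Polynomial.map_id]
  have htinj : Function.Injective (aeval t : k[X] →ₐ[k] k⟮θ⟯) :=
    transcendental_iff_injective.1 (adjoin_gen_transcendental hθk)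
  have hne : ∀ w : k[X], w ≠ 0 → aeval t w ≠ 0 := fun w hw h => hw (htinj (by rw [h, map_zero]))
  have hq0 := hne _ (hq'm.map φ.toRingHom).ne_zero
  have hroot : aeval (aeval t (p'.map φ.toRingHom) / aeval t (q'.map φ.toRingHom)) μ = 0 := by
    have h1 := hμsum (R := k⟮θ⟯) (aeval t (p'.map φ.toRingHom) / aeval t (q'.map φ.toRingHom))
      (aeval t (q'.map φ.toRingHom)) (aeval t (p'.map φ.toRingHom)) (by field_simp)
    have h2 : ∑ i : Fin (n + 1), algebraMap k⟮θ⟯ k⟮θ⟯ (aeval t (P i)) *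
        (aeval t (p'.map φ.toRingHom)) ^ (i : ℕ) * (aeval t (q'.map φ.toRingHom)) ^ (n - i)
        = 0 := by
      rw [← map_zero (aeval t : k[X] →ₐ[k] k⟮θ⟯), ← hk, map_sum]
      refine Finset.sum_congr rfl fun i _ => ?_
      rw [map_mul, map_mul, map_pow, map_pow]; rfl
    rw [h2] at h1
    refine (mul_eq_zero.1 h1).resolve_left (mul_ne_zero ?_ (pow_ne_zero _ hq0))
    exact hne b hb
  refine minpoly.mem_range_of_degree_eq_one _ f ?_
  exact degree_eq_one_of_irreducible_of_root (minpoly.irreducible halg.isIntegral)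
    (by rwa [coe_aeval_eq_eval] at hroot)

/-- A Zariski-type theorem: any infinite family of members `x + c y` of the pencil contains one for
which `k(x + c y)` is algebraically closed in `F`. There are only finitely many fields between
`k(x, y)` and `F`, so the algebraic closures of
two distinct `k(x + c y)` generate the same field over `k(x, y)`. -/
theorem exists_closed [IsAlgClosed k] [CharZero k] {x y : F}
    [FiniteDimensional (IntermediateField.adjoin k {x, y}) F]
    (htr : ∀ t : F, ¬ Algebra.IsAlgebraic k⟮t⟯ F) {S : Set k} (hS : S.Infinite) :
    ∃ c ∈ S, ∀ f : F, IsAlgebraic k⟮x + algebraMap k F c * y⟯ f →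
      f ∈ (algebraMap k⟮x + algebraMap k F c * y⟯ F).range := by
  set B := IntermediateField.adjoin k {x, y} with hB
  have hchar : CharZero F := charZero_of_injective_algebraMap (algebraMap k F).injective
  have hcharB : CharZero B := charZero_of_injective_algebraMap (algebraMap k B).injective
  have hfinite : Finite (IntermediateField B F) :=
    Field.finite_intermediateField_of_exists_primitive_element B F
      (Field.exists_primitive_element B F)
  let θ : k → F := fun c => x + algebraMap k F c * y
  let K' : k → IntermediateField k F := fun c =>
    (algebraicClosure k⟮θ c⟯ F).restrictScalars k
  have hK' : ∀ c f, f ∈ K' c ↔ IsAlgebraic k⟮θ c⟯ f := fun c f => mem_algebraicClosure_iff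
  have hk' : ∀ c, θ c ∈ K' c := fun c => (hK' c _).2
    (isAlgebraic_algebraMap (AdjoinSimple.gen k (θ c)))
  have hKalg : ∀ c w, IsAlgebraic (K' c) w → w ∈ K' c := by
    intro c w hw
    rw [hK']
    have h1 : IsAlgebraic (algebraicClosure k⟮θ c⟯ F) w := hw
    exact h1.restrictScalars k⟮θ c⟯
  clear_value K'
  have := hS.to_subtype
  obtain ⟨c, c', hne, heq⟩ := Finite.exists_ne_map_eq_of_infinite (fun c : S =>
    IntermediateField.extendScalars (show B ≤ K' c ⊔ B from le_sup_right))
  refine ⟨c, c.2, fun f hf => ?_⟩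
  have heq' : K' c ⊔ B = K' c' ⊔ B := by
    have := congrArg (IntermediateField.restrictScalars k) heq
    simpa using this
  have hcc : (c : k) - c' ≠ 0 := sub_ne_zero.2 fun h => hne (Subtype.ext h)
  have hcc' : algebraMap k F c - algebraMap k F c' ≠ 0 := by
    rw [← map_sub]; exact (_root_.map_ne_zero _).2 hcc
  -- `x` and `y` are combinations of two distinct members of the pencil
  have hBle : ∀ L : IntermediateField k F, θ c ∈ L → θ c' ∈ L → B ≤ L := by
    intro L h1 h2
    have hy : y ∈ L := by
      have : y = algebraMap k F (c - c')⁻¹ * (θ c - θ c') := by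
        rw [map_inv₀, map_sub]
        simp only [θ]
        field_simp
        ring
      rw [this]
      exact mul_mem (L.algebraMap_mem _) (sub_mem h1 h2)
    have hx : x ∈ L := by
      have : x = θ c - algebraMap k F c * y := by simp [θ]
      rw [this]
      exact sub_mem h1 (mul_mem (L.algebraMap_mem _) hy)
    rw [hB, IntermediateField.adjoin_le_iff]
    rintro _ (rfl | rfl)
    exacts [hx, hy]
  have htrans : Transcendental (K' c') (θ c) := by
    intro halg
    have hBK := hBle _ (hKalg _ _ halg) (hk' c')
    refine htr (θ c') ⟨fun w => ?_⟩
    obtain ⟨P, hP0, hP⟩ : IsAlgebraic B w := Algebra.IsAlgebraic.isAlgebraic w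
    refine (hK' _ _).1 (hKalg _ _ ⟨P.map (IntermediateField.inclusion hBK).toRingHom, ?_, ?_⟩)
    · exact (Polynomial.map_ne_zero_iff (RingHom.injective _)).2 hP0
    · rw [aeval_def] at hP ⊢
      rw [eval₂_map]
      exact hP
  refine mem_range_of_mem_adjoin htrans ?_ hf
  have h1 : f ∈ K' c' ⊔ B := by
    rw [← heq']
    exact le_sup_left (a := K' c) ((hK' c f).2 hf)
  have h2 : K' c' ⊔ B ≤ ((K' c')⟮θ c⟯).restrictScalars k := by
    have h3 : K' c' ≤ ((K' c')⟮θ c⟯).restrictScalars k := fun w hw =>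
      ((K' c')⟮θ c⟯).algebraMap_mem (⟨w, hw⟩ : K' c')
    have h4 : θ c ∈ ((K' c')⟮θ c⟯).restrictScalars k := mem_adjoin_simple_self (K' c') (θ c)
    exact sup_le h3 (hBle _ h4 (h3 (hk' c')))
  exact h2 h1

/-- Two algebraically independent elements prevent `F` from having transcendence degree one. -/
theorem not_isAlgebraic_simple {z w : F} (hz : Transcendental k z) (hw : Transcendental k⟮z⟯ w)
    (t : F) : ¬ Algebra.IsAlgebraic k⟮t⟯ F := by
  intro halg
  have h1 : Algebra.trdeg k k⟮z⟯ + Algebra.trdeg k⟮z⟯ F = Algebra.trdeg k F := by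
    simpa using lift_trdeg_add_eq k k⟮z⟯ F
  have h2 : Algebra.trdeg k F ≤ 1 := by
    have : Algebra.IsAlgebraic (Algebra.adjoin k {t}) F := isAlgebraic_adjoin_iff_top.1 halg
    simpa using Algebra.IsAlgebraic.trdeg_le_cardinalMk k ({t} : Set F)
  have h4 : 1 ≤ Algebra.trdeg k k⟮z⟯ := by
    rw [Cardinal.one_le_iff_pos]
    have : Algebra.Transcendental k k⟮z⟯ := ⟨_, adjoin_gen_transcendental hz⟩
    exact trdeg_pos _ _
  have h5 : 1 ≤ Algebra.trdeg k⟮z⟯ F := by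
    rw [Cardinal.one_le_iff_pos]
    have : Algebra.Transcendental k⟮z⟯ F := ⟨_, hw⟩
    exact trdeg_pos _ _
  have h6 : (2 : Cardinal) ≤ 1 := by
    calc (2 : Cardinal) = 1 + 1 := by norm_num
      _ ≤ _ := add_le_add h4 h5
      _ = _ := h1
      _ ≤ 1 := h2
  exact absurd h6 (by norm_num)

end Bertini
end CliffordBound

/-! ### The function field of a surface over a net -/

namespace CliffordBound
open Module

section Glue
open IntermediateField
variable {k F : Type*} [Field k] [Field F] [Algebra k F]
variable {z₁ z₂ : F} {N₀ : ℕ} {s χ : ℤ} {U : ℕ → Submodule k F}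

/-- The second parameter is transcendental over the first, since otherwise the dimensions over
`k(z₁)` would stay bounded. -/
theorem PencilSeq.transcendental₂ [IsAlgClosed k] (h : PencilSeq z₁ z₂ N₀ s χ U) (hs : 0 < s) :
    Transcendental k⟮z₁⟯ z₂ := by
  intro halg
  have hg := h.goodSeq (h.transcendental hs)
  set M : ℕ → Submodule k⟮z₁⟯ F := fun i => Submodule.span k⟮z₁⟯ (U i : Set F) with hM
  have hg' : GoodSeq (algebraMap k⟮z₁⟯⟮z₂⟯ F (AdjoinSimple.gen k⟮z₁⟯ z₂)) (N₀ + 1) s χ M := by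
    rw [AdjoinSimple.algebraMap_gen]; exact hg
  clear_value M
  have f1 : FiniteDimensional k⟮z₁⟯ k⟮z₁⟯⟮z₂⟯ := adjoin.finiteDimensional halg.isIntegral
  have := hg.fd (N₀ + 1)
  have f2 : FiniteDimensional k⟮z₁⟯⟮z₂⟯
    (Submodule.span k⟮z₁⟯⟮z₂⟯ (M (N₀ + 1) : Set F)) := finite_span_of_finite _ _
  set T := (Submodule.span k⟮z₁⟯⟮z₂⟯ (M (N₀ + 1) : Set F)).restrictScalars k⟮z₁⟯ with hT
  have f3 : FiniteDimensional k⟮z₁⟯ T :=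
    Module.Finite.trans (R := k⟮z₁⟯) k⟮z₁⟯⟮z₂⟯
      (Submodule.span k⟮z₁⟯⟮z₂⟯ (M (N₀ + 1) : Set F))
  obtain ⟨i, hi1, hi2⟩ : ∃ i : ℕ, N₀ + 1 ≤ i ∧ -χ + finrank k⟮z₁⟯ T < i :=
    ⟨N₀ + χ.natAbs + 1 + finrank k⟮z₁⟯ T, by omega, by omega⟩
  have hle : M i ≤ T := fun x hx => hg'.mem_span le_rfl i hx
  have h1 := Submodule.finrank_mono hle
  have h2 := hg.dim i hi1
  zify at h1
  nlinarith

/-- The function field is finite over the field generated by the two parameters. -/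
theorem PencilSeq.finite_adjoin (h : PencilSeq z₁ z₂ N₀ s χ U) (h1 : (1 : F) ∈ U 0)
    (hmul : ∀ i j, ∀ x ∈ U i, ∀ y ∈ U j, x * y ∈ U (i + j))
    (hgen : ∀ L : IntermediateField k F, (∀ i, ∀ x ∈ U i, x ∈ L) → L = ⊤) :
    FiniteDimensional (IntermediateField.adjoin k {z₁, z₂}) F := by
  set B := IntermediateField.adjoin k {z₁, z₂} with hB
  have hz1 : z₁ ∈ B := subset_adjoin k _ (by simp)
  have hz2 : z₂ ∈ B := subset_adjoin k _ (by simp)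
  clear_value B
  set R := Submodule.span B (U N₀ : Set F) with hR
  have hmem : ∀ i, ∀ x ∈ U i, x ∈ R := by
    have key : ∀ i, ∀ x ∈ U (N₀ + i), x ∈ R := by
      intro i
      induction i with
      | zero => intro x hx; exact Submodule.subset_span hx
      | succ i ih =>
        intro x hx
        obtain ⟨y, hy, c', hc', rfl⟩ := Submodule.mem_sup.1 (h.gen (N₀ + i) (by omega) hx)
        obtain ⟨a, ha, b', hb', rfl⟩ := Submodule.mem_sup.1 hy
        obtain ⟨b, hb, rfl⟩ := mem_sc.1 hb'
        obtain ⟨c, hc, rfl⟩ := mem_sc.1 hc'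
        exact add_mem (add_mem (ih _ ha) (R.smul_mem ⟨z₁, hz1⟩ (ih _ hb)))
          (R.smul_mem ⟨z₂, hz2⟩ (ih _ hc))
    intro i x hx
    exact key i x (monotone_nat_of_le_succ h.mono (by omega) hx)
  have := h.fd N₀
  have fR : FiniteDimensional B R := finite_span_of_finite _ _
  have hfg : R.FG := (Submodule.fg_iff_finiteDimensional R).2 fR
  have hmulR : ∀ x ∈ R, ∀ y ∈ R, x * y ∈ R := by
    intro x hx y hy
    have : x * y ∈ R * R := Submodule.mul_mem_mul hx hy
    rw [hR, Submodule.span_mul_span] at this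
    refine Submodule.span_le.2 ?_ this
    rintro _ ⟨a, ha, b, hb, rfl⟩
    exact hmem _ _ (hmul _ _ _ ha _ hb)
  have h1R : (1 : F) ∈ R := hmem 0 _ h1
  let A : Subalgebra B F :=
    { carrier := R
      mul_mem' := fun {a b} ha hb => hmulR a ha b hb
      add_mem' := fun ha hb => R.add_mem ha hb
      algebraMap_mem' := fun c => by
        rw [Algebra.algebraMap_eq_smul_one]; exact R.smul_mem c h1R }
  have hinv : ∀ x ∈ R, x⁻¹ ∈ R := by
    intro x hx
    have hx' : IsIntegral B x := isIntegral_of_smul_mem_submodule R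
      (fun h0 => one_ne_zero (α := F) (by rw [h0] at h1R; simpa using h1R)) hfg x
      (fun n hn => hmulR x hx n hn)
    exact A.inv_mem_of_algebraic (x := ⟨x, hx⟩) hx'.isAlgebraic
  let L : IntermediateField k F :=
    { carrier := R
      mul_mem' := fun {a b} ha hb => hmulR a ha b hb
      add_mem' := fun ha hb => R.add_mem ha hb
      algebraMap_mem' := fun c => by
        rw [IsScalarTower.algebraMap_apply k B F, Algebra.algebraMap_eq_smul_one]
        exact R.smul_mem _ h1R
      inv_mem' := hinv }
  have hL := hgen L hmem
  have hRt : R = ⊤ := by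
    rw [eq_top_iff]
    intro x _
    have : x ∈ L := by rw [hL]; trivial
    exact this
  exact ⟨hRt ▸ hfg⟩

/-- In a growing filtration satisfying the multiplicative axioms of a surface, any
infinite family of members `z₁ + c z₂` contains one whose field `k(z₁ + c z₂)` is algebraically closed
in `F`. -/
theorem PencilSeq.exists_closed [IsAlgClosed k] [CharZero k] (h : PencilSeq z₁ z₂ N₀ s χ U)
    (hs : 0 < s) (h1 : (1 : F) ∈ U 0)
    (hmul : ∀ i j, ∀ x ∈ U i, ∀ y ∈ U j, x * y ∈ U (i + j))
    (hgen : ∀ L : IntermediateField k F, (∀ i, ∀ x ∈ U i, x ∈ L) → L = ⊤)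
    {S : Set k} (hS : S.Infinite) :
    ∃ c ∈ S, ∀ f : F, IsAlgebraic k⟮z₁ + algebraMap k F c * z₂⟯ f →
      f ∈ (algebraMap k⟮z₁ + algebraMap k F c * z₂⟯ F).range := by
  have := h.finite_adjoin h1 hmul hgen
  exact CliffordBound.exists_closed
    (not_isAlgebraic_simple (h.transcendental hs) (h.transcendental₂ hs)) hS

end Glue
end CliffordBound

/-! ### Forms and general linear forms -/

namespace CliffordBound
open Module

section Forms
open MvPolynomial
variable {n : ℕ}

/-- The space of forms of degree `i`. -/
abbrev Fm (n i : ℕ) : Submodule ℂ (MPoly n) := homogeneousSubmodule (Fin n) ℂ i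

theorem finite_Fm (n i : ℕ) : FiniteDimensional ℂ (Fm n i) :=
  (Submodule.fg_iff_finiteDimensional _).1 (homogeneousSubmodule_fg (Fin n) ℂ i)

theorem Fm_mul {i j : ℕ} {f g : MPoly n} (hf : f ∈ Fm n i) (hg : g ∈ Fm n j) :
    f * g ∈ Fm n (i + j) := IsHomogeneous.mul hf hg

theorem Fm_lin_mul {i : ℕ} {l f : MPoly n} (hl : l ∈ Fm n 1) (hf : f ∈ Fm n i) :
    l * f ∈ Fm n (i + 1) := by rw [add_comm]; exact Fm_mul hl hf

theorem Fm_le_pow (i : ℕ) {f : MPoly n} (hf : f ∈ Fm n i) :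
    f ∈ Ideal.span (Fm n 1 : Set (MPoly n)) ^ i := by
  have hf' : f ∈ Fm n 1 ^ i := by rw [homogeneousSubmodule_one_pow]; exact hf
  induction i generalizing f with
  | zero => simp
  | succ i ih =>
    rw [pow_succ] at hf'
    refine Submodule.mul_induction_on hf' ?_ ?_
    · intro a ha b hb
      rw [pow_succ]
      refine Ideal.mul_mem_mul (ih ?_ ha) (Ideal.subset_span hb)
      rwa [homogeneousSubmodule_one_pow] at ha
    · intro a b ha hb
      exact add_mem ha hb

/-- The associated primes of `I` other than those containing every linear form: avoiding them
makes a linear form a nonzerodivisor modulo `I` in large degrees. -/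
def bad (I : Ideal (MPoly n)) : Set (Ideal (MPoly n)) :=
  {p | p ∈ associatedPrimes (MPoly n) (MPoly n ⧸ I) ∧ ∃ f ∈ Fm n 1, f ∉ p}

theorem finite_bad (I : Ideal (MPoly n)) : (bad I).Finite :=
  (associatedPrimes.finite (MPoly n) (MPoly n ⧸ I)).subset fun _ hp => hp.1

/-- The module `(I : l)/I` is annihilated by `l`, so its associated primes contain the irrelevant
ideal `m`, and a power of `m` kills it. By the Artin–Rees lemma, forms of large degree in `(I : l)` lie in that
power of `m` times `(I : l)`, hence in `I`. -/
theorem regular_of_avoid (I : Ideal (MPoly n)) {l : MPoly n} (h : ∀ p ∈ bad I, l ∉ p) :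
    ∃ N, ∀ i, N ≤ i → ∀ f ∈ Fm n i, l * f ∈ I → f ∈ I := by
  set m := Ideal.span (Fm n 1 : Set (MPoly n)) with hm
  -- the colon ideal `(I : l)` and its image in the quotient
  let J : Ideal (MPoly n) := Submodule.comap (LinearMap.mulLeft (MPoly n) l) I
  let K₀ : Submodule (MPoly n) (MPoly n ⧸ I) := Submodule.map (Submodule.mkQ I) J
  have hlann : l ∈ Module.annihilator (MPoly n) K₀ := by
    rw [Module.mem_annihilator]
    rintro ⟨_, a, ha, rfl⟩
    ext
    show l • Submodule.mkQ I a = 0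
    rw [← map_smul]
    exact (Submodule.Quotient.mk_eq_zero I).2 ha
  have hrad : m ≤ (Module.annihilator (MPoly n) K₀).radical := by
    rw [← Ideal.sInf_minimalPrimes]
    refine le_sInf fun q hq => ?_
    have h1 : q ∈ associatedPrimes (MPoly n) (MPoly n ⧸ I) :=
      associatedPrimes.subset_of_injective (f := K₀.subtype) K₀.injective_subtype
        (Module.associatedPrimes.minimalPrimes_annihilator_subset_associatedPrimes (MPoly n) K₀ hq)
    have h2 : l ∈ q := hq.1.2 hlann
    by_contra h3
    refine h q ⟨h1, ?_⟩ h2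
    by_contra h4
    push Not at h4
    exact h3 (Ideal.span_le.2 h4)
  obtain ⟨k, hk⟩ := Ideal.exists_pow_le_of_le_radical_of_fg hrad m.fg_of_isNoetherianRing
  obtain ⟨c, hc⟩ := Ideal.exists_pow_inf_eq_pow_smul m (J : Submodule (MPoly n) (MPoly n))
  refine ⟨c + k, fun i hi f hf hlf => ?_⟩
  have h1 : f ∈ (m ^ i • ⊤ ⊓ J : Submodule (MPoly n) (MPoly n)) :=
    ⟨by simpa using Fm_le_pow i hf, hlf⟩
  rw [hc i (by omega)] at h1
  have h2 : f ∈ m ^ k • J := by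
    refine Submodule.smul_mono (Ideal.pow_le_pow_right (by omega)) inf_le_right h1
  refine Submodule.smul_induction_on h2 ?_ (fun a b ha hb => add_mem ha hb)
  intro a ha b hb
  have h3 := Module.mem_annihilator.1 (hk ha) ⟨_, b, hb, rfl⟩
  have h4 : a • Submodule.mkQ I b = 0 := congrArg Subtype.val h3
  rw [← map_smul] at h4
  exact (Submodule.Quotient.mk_eq_zero I).1 h4

/-- A vector space over `ℂ` is not a finite union of proper subspaces. -/
theorem exists_avoid {T : Set (Ideal (MPoly n))} (hT : T.Finite)
    (h : ∀ p ∈ T, ∃ f ∈ Fm n 1, f ∉ p) : ∃ l ∈ Fm n 1, ∀ p ∈ T, l ∉ p := by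
  classical
  let φ : Ideal (MPoly n) → Submodule ℂ (Fm n 1) := fun p =>
    (p.restrictScalars ℂ).comap (Fm n 1).subtype
  have h1 := Subspace.biUnion_ne_univ_of_top_notMem (s := hT.toFinset.image φ) (by
    intro h2
    obtain ⟨p, hp, hp2⟩ := Finset.mem_image.1 h2
    obtain ⟨f, hf, hfp⟩ := h p (hT.mem_toFinset.1 hp)
    have : (⟨f, hf⟩ : Fm n 1) ∈ φ p := by rw [hp2]; trivial
    exact hfp this)
  obtain ⟨l, hl⟩ := (Set.ne_univ_iff_exists_notMem _).1 h1
  refine ⟨l, l.2, fun p hp hlp => hl ?_⟩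
  simp only [Set.mem_iUnion]
  exact ⟨φ p, Finset.mem_image.2 ⟨p, hT.mem_toFinset.2 hp, rfl⟩, hlp⟩

theorem hc_lin_mul {l : MPoly n} (hl : l ∈ Fm n 1) (b : MPoly n) (i : ℕ) :
    homogeneousComponent (i + 1) (l * b) = l * homogeneousComponent i b := by
  conv_lhs => rw [← sum_homogeneousComponent b, Finset.mul_sum, map_sum]
  have : ∀ j, homogeneousComponent (i + 1) (l * homogeneousComponent j b)
      = if i = j then l * homogeneousComponent j b else 0 := by
    intro j
    rw [homogeneousComponent_of_mem (Fm_lin_mul hl (homogeneousComponent_mem j b))]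
    simp
  simp only [this, Finset.sum_ite_eq, Finset.mem_range]
  split_ifs with h
  · rfl
  · rw [homogeneousComponent_eq_zero _ _ (by omega), mul_zero]

theorem hc_zero_lin_mul {l : MPoly n} (hl : l ∈ Fm n 1) (b : MPoly n) :
    homogeneousComponent 0 (l * b) = 0 := by
  conv_lhs => rw [← sum_homogeneousComponent b, Finset.mul_sum, map_sum]
  refine Finset.sum_eq_zero fun j _ => ?_
  rw [homogeneousComponent_of_mem (Fm_lin_mul hl (homogeneousComponent_mem j b))]
  simp

theorem mem_sup_span {I : Ideal (MPoly n)} {l f : MPoly n} :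
    f ∈ I ⊔ Ideal.span {l} ↔ ∃ a ∈ I, ∃ b, a + l * b = f := by
  rw [Submodule.mem_sup]
  constructor
  · rintro ⟨a, ha, y, hy, rfl⟩
    obtain ⟨b, rfl⟩ := Ideal.mem_span_singleton'.1 hy
    exact ⟨a, ha, b, by rw [mul_comm l]⟩
  · rintro ⟨a, ha, b, rfl⟩
    exact ⟨a, ha, l * b, Ideal.mul_mem_right _ _ (Ideal.mem_span_singleton_self l), rfl⟩

theorem homog_sup {I : Ideal (MPoly n)} (hI : IsHomogIdeal I) {l : MPoly n} (hl : l ∈ Fm n 1) :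
    IsHomogIdeal (I ⊔ Ideal.span {l}) := by
  intro f hf k
  obtain ⟨a, ha, b, rfl⟩ := mem_sup_span.1 hf
  rw [map_add]
  refine add_mem (Ideal.mem_sup_left (hI a ha k)) ?_
  cases k with
  | zero => rw [hc_zero_lin_mul hl]; exact zero_mem _
  | succ k =>
    rw [hc_lin_mul hl]
    exact Ideal.mem_sup_right (Ideal.mul_mem_right _ _ (Ideal.mem_span_singleton_self l))

/-- A form of `I + (l)` decomposes homogeneously. -/
theorem decomp {I : Ideal (MPoly n)} (hI : IsHomogIdeal I) {l : MPoly n} (hl : l ∈ Fm n 1)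
    {i : ℕ} {f : MPoly n} (hf : f ∈ Fm n (i + 1)) (h : f ∈ I ⊔ Ideal.span {l}) :
    ∃ a ∈ I, a ∈ Fm n (i + 1) ∧ ∃ b ∈ Fm n i, f = a + l * b := by
  obtain ⟨a, ha, b, rfl⟩ := mem_sup_span.1 h
  refine ⟨_, hI a ha (i + 1), homogeneousComponent_mem _ _, _, homogeneousComponent_mem i b, ?_⟩
  rw [← hc_lin_mul hl, ← map_add]
  exact (homogeneousComponent_eq_self hf).symm

/-- The degree `i` part of an ideal. -/
noncomputable abbrev pc (I : Ideal (MPoly n)) (i : ℕ) : Submodule ℂ (MPoly n) := I.restrictScalars ℂ ⊓ Fm n i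

theorem finite_pc (I : Ideal (MPoly n)) (i : ℕ) : FiniteDimensional ℂ (pc I i) := by
  have := finite_Fm n i
  exact Submodule.finiteDimensional_of_le inf_le_right

theorem finrank_map_add {V W : Type*} [AddCommGroup V] [Module ℂ V] [AddCommGroup W] [Module ℂ W]
    (f : V →ₗ[ℂ] W) (A : Submodule ℂ V) [FiniteDimensional ℂ A] :
    finrank ℂ (A.map f) + finrank ℂ (LinearMap.ker f ⊓ A : Submodule ℂ V) = finrank ℂ A := by
  rw [← LinearMap.finrank_range_add_finrank_ker (f.domRestrict A)]
  congr 1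
  · rw [LinearMap.range_domRestrict]
  · rw [LinearMap.ker_domRestrict, inf_comm, ← Submodule.map_comap_subtype]
    exact (Submodule.equivMapOfInjective _ A.injective_subtype _).finrank_eq.symm

/-- The Hilbert function in terms of the forms lying in the ideal. -/
theorem finrank_degQ (I : Ideal (MPoly n)) (i : ℕ) :
    finrank ℂ (degQ I i) + finrank ℂ (pc I i) = finrank ℂ (Fm n i) := by
  have := finite_Fm n i
  rw [← finrank_map_add (Ideal.Quotient.mkₐ ℂ I).toLinearMap (Fm n i)]
  have : LinearMap.ker (Ideal.Quotient.mkₐ ℂ I).toLinearMap = I.restrictScalars ℂ := by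
    ext x; simp [Ideal.Quotient.eq_zero_iff_mem]
  rw [this]
  rfl

theorem finrank_lin_mul {l : MPoly n} (hl0 : l ≠ 0) (A : Submodule ℂ (MPoly n)) :
    finrank ℂ (A.map (LinearMap.mulLeft ℂ l)) = finrank ℂ A :=
  (LinearEquiv.finrank_eq (Submodule.equivMapOfInjective _
    (fun x y h => mul_left_cancel₀ hl0 (by simpa using h)) A)).symm

/-- The Hilbert function of a hyperplane section by a nonzerodivisor is a difference. -/
theorem finrank_degQ_sup {I : Ideal (MPoly n)} (hI : IsHomogIdeal I) {l : MPoly n}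
    (hl : l ∈ Fm n 1) (hl0 : l ≠ 0) {i : ℕ} (hreg : ∀ f ∈ Fm n i, l * f ∈ I → f ∈ I) :
    finrank ℂ (degQ (I ⊔ Ideal.span {l}) (i + 1)) + finrank ℂ (degQ I i)
      = finrank ℂ (degQ I (i + 1)) := by
  have f1 := finite_Fm n i
  have f2 := finite_pc I (i + 1)
  have e1 := finrank_degQ (I ⊔ Ideal.span {l}) (i + 1)
  have e2 := finrank_degQ I i
  have e3 := finrank_degQ I (i + 1)
  have hs : pc (I ⊔ Ideal.span {l}) (i + 1) =
      pc I (i + 1) ⊔ (Fm n i).map (LinearMap.mulLeft ℂ l) := by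
    ext f
    constructor
    · rintro ⟨h1, h2⟩
      obtain ⟨a, ha, ha', b, hb, rfl⟩ := decomp hI hl h2 h1
      exact Submodule.add_mem_sup ⟨ha, ha'⟩ ⟨b, hb, rfl⟩
    · intro h
      obtain ⟨a, ⟨ha, ha'⟩, _, ⟨b, hb, rfl⟩, rfl⟩ := Submodule.mem_sup.1 h
      exact ⟨mem_sup_span.2 ⟨a, ha, b, rfl⟩, add_mem ha' (Fm_lin_mul hl hb)⟩
  have hi : pc I (i + 1) ⊓ (Fm n i).map (LinearMap.mulLeft ℂ l) =
      (pc I i).map (LinearMap.mulLeft ℂ l) := by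
    ext f
    constructor
    · rintro ⟨⟨h1, _⟩, b, hb, rfl⟩
      exact ⟨b, ⟨hreg b hb h1, hb⟩, rfl⟩
    · rintro ⟨b, ⟨hb, hb'⟩, rfl⟩
      exact ⟨⟨I.mul_mem_left _ hb, Fm_lin_mul hl hb'⟩, b, hb', rfl⟩
  have e4 := Submodule.finrank_sup_add_finrank_inf_eq (pc I (i + 1))
    ((Fm n i).map (LinearMap.mulLeft ℂ l))
  rw [← hs, hi, finrank_lin_mul hl0, finrank_lin_mul hl0] at e4
  omega

/-- If the Hilbert function vanishes in degree `i` then all forms of degree `i` lie in `I`. -/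
theorem mem_of_finrank_degQ {I : Ideal (MPoly n)} {i : ℕ} (h : finrank ℂ (degQ I i) = 0)
    {f : MPoly n} (hf : f ∈ Fm n i) : f ∈ I := by
  have := finite_Fm n i
  have e := finrank_degQ I i
  have : pc I i = Fm n i := Submodule.eq_of_le_of_finrank_eq inf_le_right (by omega)
  have h2 : f ∈ pc I i := by rw [this]; exact hf
  exact h2.1

theorem finrank_Fm_one : finrank ℂ (Fm n 1) = n := by
  rw [show Fm n 1 = _ from homogeneousSubmodule_one_eq_span_X, finrank_span_eq_card]
  · simp
  · exact linearIndependent_X _ _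

end Forms
end CliffordBound

/-! ### Dehomogenization and adapted nets -/

namespace CliffordBound
open Module

section Chart
open MvPolynomial
variable {n : ℕ}

/-- Dehomogenization of the coordinate ring of `V(I)` with respect to the linear form `l₀`,
with values in the function field `F` of `V(I)`. -/
structure Chart (I : Ideal (MPoly n)) (l₀ : MPoly n) {F : Type} [Field F] [Algebra ℂ F]
    (ev : MPoly n →ₐ[ℂ] F) : Prop where
  one : ev l₀ = 1
  zero_iff : ∀ i, ∀ f ∈ Fm n i, (ev f = 0 ↔ f ∈ I)
  frac : ∀ x : F, ∃ a b, x = ev a / ev b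

theorem aeval_smul_of_homog {A : Type*} [CommRing A] [Algebra ℂ A] (c : A) (ξ : Fin n → A)
    {i : ℕ} {f : MPoly n} (hf : f ∈ Fm n i) :
    aeval (fun j => c * ξ j) f = c ^ i * aeval ξ f := by
  rw [aeval_def, aeval_def, eval₂_eq', eval₂_eq', Finset.mul_sum]
  refine Finset.sum_congr rfl fun d hd => ?_
  have h1 : d.degree = i := IsHomogeneous.degree_eq_sum_deg_support hf hd ▸ rfl
  have h2 : ∑ j, d j = i := by rw [← h1, Finsupp.degree_eq_sum]
  simp only [mul_pow, Finset.prod_mul_distrib, Finset.prod_pow_eq_pow_sum, h2]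
  ring

/-- The field `F` is the fraction field of the image of `X j ↦ X j / X j₀`, a map into the fraction
field of the coordinate ring. -/
theorem exists_chart {I : Ideal (MPoly n)} (hI : I.IsPrime) {j₀ : Fin n}
    (hj : (X j₀ : MPoly n) ∉ I) :
    ∃ (F : Type) (_ : Field F) (_ : Algebra ℂ F) (ev : MPoly n →ₐ[ℂ] F), Chart I (X j₀) ev := by
  let K := FractionRing (MPoly n ⧸ I)
  let q : MPoly n →ₐ[ℂ] K :=
    (IsScalarTower.toAlgHom ℂ (MPoly n ⧸ I) K).comp (Ideal.Quotient.mkₐ ℂ I)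
  have hq : ∀ f, q f = 0 ↔ f ∈ I := by
    intro f
    rw [← Ideal.Quotient.eq_zero_iff_mem]
    exact (map_eq_zero_iff _ (IsFractionRing.injective (MPoly n ⧸ I) K))
  have hx0 : q (X j₀) ≠ 0 := fun h => hj ((hq _).1 h)
  let ξ : Fin n → K := fun j => q (X j) / q (X j₀)
  have hqa : q = aeval (fun j => q (X j₀) * ξ j) := by
    apply MvPolynomial.algHom_ext
    intro j
    rw [aeval_X]
    simp only [ξ]
    exact (mul_div_cancel₀ _ hx0).symm
  let ev₀ : MPoly n →ₐ[ℂ] K := aeval ξ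
  have hz : ∀ i, ∀ f ∈ Fm n i, (ev₀ f = 0 ↔ f ∈ I) := by
    intro i f hf
    have h1 : q f = q (X j₀) ^ i * ev₀ f := by
      conv_lhs => rw [hqa]
      exact aeval_smul_of_homog _ _ hf
    rw [← hq, h1, mul_eq_zero]
    simp [hx0]
  let Q := RingHom.ker ev₀
  have hQ : Q.IsPrime := RingHom.ker_isPrime _
  let F := FractionRing (MPoly n ⧸ Q)
  let ev : MPoly n →ₐ[ℂ] F :=
    (IsScalarTower.toAlgHom ℂ (MPoly n ⧸ Q) F).comp (Ideal.Quotient.mkₐ ℂ Q)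
  have hev : ∀ f, ev f = 0 ↔ ev₀ f = 0 := by
    intro f
    have h1 : ev₀ f = 0 ↔ f ∈ Q := (RingHom.mem_ker).symm
    rw [h1, ← Ideal.Quotient.eq_zero_iff_mem (I := Q)]
    exact (map_eq_zero_iff _ (IsFractionRing.injective (MPoly n ⧸ Q) F))
  refine ⟨F, inferInstance, inferInstance, ev, ?_, ?_, ?_⟩
  · have : ev (X j₀ - 1) = 0 := by
      rw [hev, map_sub, map_one]
      simp only [ev₀, aeval_X, ξ]
      rw [div_self hx0, sub_self]
    rw [map_sub, map_one, sub_eq_zero] at this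
    exact this
  · intro i f hf
    rw [hev, hz i f hf]
  · intro x
    obtain ⟨a, b, hb, rfl⟩ := IsFractionRing.div_surjective (A := MPoly n ⧸ Q) x
    obtain ⟨a, rfl⟩ := Ideal.Quotient.mk_surjective a
    obtain ⟨b, rfl⟩ := Ideal.Quotient.mk_surjective b
    exact ⟨a, b, rfl⟩

end Chart

section Frame
variable {n : ℕ}

/-- A net of linear forms `l₀, l₁, l₂` adapted, from degree `N` on, to a surface `V(IS)` and a
curve `V(IC)` on it: `l₀, l₁` is a regular sequence modulo both ideals, the net generates the
irrelevant ideal modulo `IS`, and `l₀, l₁` already do so modulo `IC`. -/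
structure Frame (IS IC : Ideal (MPoly n)) (l₀ l₁ l₂ : MPoly n) (N : ℕ) : Prop where
  le : IS ≤ IC
  homS : IsHomogIdeal IS
  homC : IsHomogIdeal IC
  prime : IC.IsPrime
  notMem : l₀ ∉ IC
  mem₀ : l₀ ∈ Fm n 1
  mem₁ : l₁ ∈ Fm n 1
  mem₂ : l₂ ∈ Fm n 1
  regS : ∀ i, N ≤ i → ∀ f ∈ Fm n i, l₁ * f ∈ IS ⊔ Ideal.span {l₀} → f ∈ IS ⊔ Ideal.span {l₀}
  regC : ∀ i, N ≤ i → ∀ f ∈ Fm n i, l₁ * f ∈ IC ⊔ Ideal.span {l₀} → f ∈ IC ⊔ Ideal.span {l₀}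
  genS : ∀ i, N ≤ i → ∀ f ∈ Fm n (i + 1), ∃ t ∈ IS, ∃ a ∈ Fm n i, ∃ b ∈ Fm n i, ∃ c ∈ Fm n i,
    f = t + l₀ * a + l₁ * b + l₂ * c
  genC : ∀ i, N ≤ i → ∀ f ∈ Fm n (i + 1), ∃ t ∈ IC, ∃ a ∈ Fm n i, ∃ b ∈ Fm n i,
    f = t + l₀ * a + l₁ * b

variable {IS IC : Ideal (MPoly n)} {l₀ l₁ l₂ : MPoly n} {N : ℕ}
  {F : Type} [Field F] [Algebra ℂ F] {ev : MPoly n →ₐ[ℂ] F}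

/-- The dehomogenized forms of degree `i`. -/
noncomputable abbrev Uf (ev : MPoly n →ₐ[ℂ] F) (i : ℕ) : Submodule ℂ F :=
  (Fm n i).map ev.toLinearMap

/-- The dehomogenized forms of degree `i` in the ideal `I`. -/
noncomputable abbrev Vf (I : Ideal (MPoly n)) (ev : MPoly n →ₐ[ℂ] F) (i : ℕ) : Submodule ℂ F :=
  (pc I i).map ev.toLinearMap

theorem mem_Uf {i : ℕ} {x : F} : x ∈ Uf ev i ↔ ∃ a ∈ Fm n i, ev a = x := Iff.rfl

theorem mem_Vf {I : Ideal (MPoly n)} {i : ℕ} {x : F} :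
    x ∈ Vf I ev i ↔ ∃ a, (a ∈ I ∧ a ∈ Fm n i) ∧ ev a = x := Iff.rfl

theorem Vf_le {I : Ideal (MPoly n)} {i : ℕ} : Vf I ev i ≤ Uf ev i := Submodule.map_mono inf_le_right

namespace Chart

theorem mem_of_eq (h : Chart IS l₀ ev) {i : ℕ} {f g : MPoly n} (hf : f ∈ Fm n i)
    (hg : g ∈ Fm n i) (he : ev f = ev g) : f - g ∈ IS :=
  (h.zero_iff i _ (sub_mem hf hg)).1 (by rw [map_sub, he, sub_self])

theorem finrank_Uf (h : Chart IS l₀ ev) (i : ℕ) : finrank ℂ (Uf ev i) = finrank ℂ (degQ IS i) := by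
  have := finite_Fm n i
  have e1 : finrank ℂ (Uf ev i) + finrank ℂ (LinearMap.ker ev.toLinearMap ⊓ Fm n i :
      Submodule ℂ (MPoly n)) = _ := finrank_map_add ev.toLinearMap (Fm n i)
  have e2 := finrank_degQ IS i
  have e3 : (LinearMap.ker ev.toLinearMap ⊓ Fm n i : Submodule ℂ (MPoly n)) = pc IS i := by
    ext f
    constructor
    · rintro ⟨h1, h2⟩; exact ⟨(h.zero_iff i f h2).1 h1, h2⟩
    · rintro ⟨h1, h2⟩; exact ⟨(h.zero_iff i f h2).2 h1, h2⟩
  rw [e3] at e1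
  omega

theorem finrank_Vf (h : Chart IS l₀ ev) (hle : IS ≤ IC) (i : ℕ) :
    finrank ℂ (Vf IC ev i) + finrank ℂ (degQ IC i) = finrank ℂ (degQ IS i) := by
  have := finite_pc IC i
  have e1 : finrank ℂ (Vf IC ev i) + finrank ℂ (LinearMap.ker ev.toLinearMap ⊓ pc IC i :
      Submodule ℂ (MPoly n)) = _ := finrank_map_add ev.toLinearMap (pc IC i)
  have e2 := finrank_degQ IS i
  have e4 := finrank_degQ IC i
  have e3 : (LinearMap.ker ev.toLinearMap ⊓ pc IC i : Submodule ℂ (MPoly n)) = pc IS i := by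
    ext f
    constructor
    · rintro ⟨h1, _, h2⟩; exact ⟨(h.zero_iff i f h2).1 h1, h2⟩
    · rintro ⟨h1, h2⟩; exact ⟨(h.zero_iff i f h2).2 h1, hle h1, h2⟩
  rw [e3] at e1
  omega

theorem one_mem (h : Chart IS l₀ ev) (hl : l₀ ∈ Fm n 1) (i : ℕ) : (1 : F) ∈ Uf ev i := by
  refine ⟨l₀ ^ i, ?_, by simp [h.one]⟩
  have := MvPolynomial.IsHomogeneous.pow hl i
  rwa [one_mul] at this

theorem mul_mem (i j : ℕ) : ∀ x ∈ Uf ev i, ∀ y ∈ Uf ev j, x * y ∈ Uf ev (i + j) := by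
  rintro _ ⟨a, ha, rfl⟩ _ ⟨b, hb, rfl⟩
  exact ⟨a * b, Fm_mul ha hb, by simp⟩

theorem mul_mem_Vf (i j : ℕ) : ∀ x ∈ Uf ev i, ∀ y ∈ Vf IC ev j, x * y ∈ Vf IC ev (i + j) := by
  rintro _ ⟨a, ha, rfl⟩ _ ⟨b, ⟨hb, hb'⟩, rfl⟩
  exact ⟨a * b, ⟨IC.mul_mem_left _ hb, Fm_mul ha hb'⟩, by simp⟩

theorem top (h : Chart IS l₀ ev) (L : IntermediateField ℂ F)
    (hL : ∀ i, ∀ x ∈ Uf ev i, x ∈ L) : L = ⊤ := by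
  have key : ∀ a, ev a ∈ L := by
    intro a
    rw [← MvPolynomial.sum_homogeneousComponent a, map_sum]
    exact sum_mem fun i _ => hL i _ ⟨_, MvPolynomial.homogeneousComponent_mem i a, rfl⟩
  rw [eq_top_iff]
  intro x _
  obtain ⟨a, b, rfl⟩ := h.frac x
  exact div_mem (key a) (key b)

end Chart

namespace Frame

theorem mem_of_mul (h : Frame IS IC l₀ l₁ l₂ N) {f : MPoly n} (hf : l₀ * f ∈ IC) : f ∈ IC :=
  (h.prime.mem_or_mem hf).resolve_left h.notMem

theorem satU (h : Frame IS IC l₀ l₁ l₂ N) (hc : Chart IS l₀ ev) {i : ℕ} (hi : N ≤ i) {f : F}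
    (h1 : f ∈ Uf ev (i + 1)) (h2 : ev l₁ * f ∈ Uf ev (i + 1)) : f ∈ Uf ev i := by
  obtain ⟨a, ha, rfl⟩ := mem_Uf.1 h1
  obtain ⟨b, hb, hab⟩ := mem_Uf.1 h2
  have h3 : l₁ * a - l₀ * b ∈ IS := hc.mem_of_eq (Fm_lin_mul h.mem₁ ha) (Fm_lin_mul h.mem₀ hb)
    (by rw [map_mul, map_mul, hc.one, hab, one_mul])
  have h4 : a ∈ IS ⊔ Ideal.span {l₀} := h.regS (i + 1) (by omega) a ha
    (mem_sup_span.2 ⟨_, h3, b, by ring⟩)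
  obtain ⟨t, ht, ht', c, hcc, rfl⟩ := decomp h.homS h.mem₀ ha h4
  refine mem_Uf.2 ⟨c, hcc, ?_⟩
  rw [map_add, map_mul, hc.one, (hc.zero_iff _ _ ht').2 ht, one_mul, zero_add]

theorem mem_Vf_of_Uf (h : Frame IS IC l₀ l₁ l₂ N) (hc : Chart IS l₀ ev) {i : ℕ} {f : F}
    (h1 : f ∈ Uf ev i) (h2 : f ∈ Vf IC ev (i + 1)) : f ∈ Vf IC ev i := by
  obtain ⟨a, ha, rfl⟩ := mem_Uf.1 h1
  obtain ⟨b, ⟨hb, hb'⟩, hab⟩ := mem_Vf.1 h2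
  have h3 : l₀ * a - b ∈ IS := hc.mem_of_eq (Fm_lin_mul h.mem₀ ha) hb'
    (by rw [map_mul, hc.one, hab, one_mul])
  have h4 : l₀ * a ∈ IC := by simpa using add_mem (h.le h3) hb
  exact mem_Vf.2 ⟨a, ⟨h.mem_of_mul h4, ha⟩, rfl⟩

/-- Castelnuovo–Mumford type generation of the ideal of the curve: the coefficient of `l₂` is first
reduced modulo `IC` to a combination of `l₀` and `l₁`, and the remaining coefficients are corrected by regularity. -/
theorem genV (h : Frame IS IC l₀ l₁ l₂ N) {i : ℕ} (hi : N + 1 ≤ i) {f : MPoly n}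
    (hf : f ∈ Fm n (i + 1)) (hfC : f ∈ IC) : ∃ t ∈ IS, ∃ a ∈ pc IC i, ∃ b ∈ pc IC i,
      ∃ c ∈ pc IC i, f = t + l₀ * a + l₁ * b + l₂ * c := by
  obtain ⟨j, rfl⟩ : ∃ j, i = j + 1 := ⟨i - 1, by omega⟩
  obtain ⟨t, ht, a, ha, b, hb, c, hc, rfl⟩ := h.genS (j + 1) (by omega) f hf
  obtain ⟨t₁, ht₁, a₁, ha₁, b₁, hb₁, hcc⟩ := h.genC j (by omega) c hc
  have ht₁' : t₁ ∈ Fm n (j + 1) := by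
    have : t₁ = c - l₀ * a₁ - l₁ * b₁ := by rw [hcc]; ring
    rw [this]
    exact sub_mem (sub_mem hc (Fm_lin_mul h.mem₀ ha₁)) (Fm_lin_mul h.mem₁ hb₁)
  have hb' : b + l₂ * b₁ ∈ Fm n (j + 1) := add_mem hb (Fm_lin_mul h.mem₂ hb₁)
  have h1 : b + l₂ * b₁ ∈ IC ⊔ Ideal.span {l₀} := by
    refine h.regC (j + 1) (by omega) _ hb' (mem_sup_span.2
      ⟨(t + l₀ * a + l₁ * b + l₂ * c) - t - l₂ * t₁, ?_, -(a + l₂ * a₁), ?_⟩)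
    · exact sub_mem (sub_mem hfC (h.le ht)) (IC.mul_mem_left _ ht₁)
    · rw [hcc]; ring
  obtain ⟨u, hu, hu', v, hv, huv⟩ := decomp h.homC h.mem₀ hb' h1
  have h2 : a + l₂ * a₁ + l₁ * v ∈ IC := by
    apply h.mem_of_mul
    have : l₀ * (a + l₂ * a₁ + l₁ * v)
        = (t + l₀ * a + l₁ * b + l₂ * c) - t - l₂ * t₁ - l₁ * u := by
      rw [hcc]; linear_combination (-l₁) * huv
    rw [this]
    exact sub_mem (sub_mem (sub_mem hfC (h.le ht)) (IC.mul_mem_left _ ht₁)) (IC.mul_mem_left _ hu)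
  refine ⟨t, ht, _, ⟨h2, ?_⟩, u, ⟨hu, hu'⟩, t₁, ⟨ht₁, ht₁'⟩, ?_⟩
  · exact add_mem (add_mem ha (Fm_lin_mul h.mem₂ ha₁)) (Fm_lin_mul h.mem₁ hv)
  · rw [hcc]; linear_combination l₁ * huv

theorem seqU (h : Frame IS IC l₀ l₁ l₂ N) (hc : Chart IS l₀ ev) {s χ : ℤ}
    (hd : ∀ i, N ≤ i → (finrank ℂ (degQ IS (i + 1)) : ℤ)
      = finrank ℂ (degQ IS i) + s * ((i : ℤ) + 1) + χ) :
    PencilSeq (ev l₁) (ev l₂) N s χ (Uf ev) where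
  fd i := by have := finite_Fm n i; infer_instance
  mono i := by
    rintro _ ⟨a, ha, rfl⟩
    exact ⟨l₀ * a, Fm_lin_mul h.mem₀ ha, by simp [hc.one]⟩
  z₁mul i := by
    rintro _ ⟨a, ha, rfl⟩
    exact ⟨l₁ * a, Fm_lin_mul h.mem₁ ha, by simp⟩
  z₂mul i := by
    rintro _ ⟨a, ha, rfl⟩
    exact ⟨l₂ * a, Fm_lin_mul h.mem₂ ha, by simp⟩
  sat i hi f := h.satU hc hi
  gen i hi := by
    rintro _ ⟨f, hf, rfl⟩
    obtain ⟨t, ht, a, ha, b, hb, c, hcc, rfl⟩ := h.genS i hi f hf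
    have ht' : t ∈ Fm n (i + 1) := by
      have := sub_mem (sub_mem (sub_mem hf (Fm_lin_mul h.mem₀ ha)) (Fm_lin_mul h.mem₁ hb))
        (Fm_lin_mul h.mem₂ hcc)
      convert this using 1
      ring
    have e : ev.toLinearMap (t + l₀ * a + l₁ * b + l₂ * c)
        = ev a + ev l₁ * ev b + ev l₂ * ev c := by
      simp [(hc.zero_iff _ _ ht').2 ht, hc.one]
    rw [e]
    exact Submodule.add_mem_sup (Submodule.add_mem_sup ⟨a, ha, rfl⟩ (mul_mem_sc ⟨b, hb, rfl⟩))
      (mul_mem_sc ⟨c, hcc, rfl⟩)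
  diff i hi := by rw [hc.finrank_Uf, hc.finrank_Uf]; exact hd i hi

theorem seqV (h : Frame IS IC l₀ l₁ l₂ N) (hc : Chart IS l₀ ev) {s χ : ℤ} {d : ℤ}
    (hd : ∀ i, N ≤ i → (finrank ℂ (degQ IS (i + 1)) : ℤ)
      = finrank ℂ (degQ IS i) + s * ((i : ℤ) + 1) + χ)
    (hdC : ∀ i, N ≤ i → (finrank ℂ (degQ IC (i + 1)) : ℤ) = finrank ℂ (degQ IC i) + d) :
    PencilSeq (ev l₁) (ev l₂) (N + 1) s (χ - d) (Vf IC ev) where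
  fd i := by have := finite_pc IC i; infer_instance
  mono i := by
    rintro _ ⟨a, ⟨ha, ha'⟩, rfl⟩
    exact ⟨l₀ * a, ⟨IC.mul_mem_left _ ha, Fm_lin_mul h.mem₀ ha'⟩, by simp [hc.one]⟩
  z₁mul i := by
    rintro _ ⟨a, ⟨ha, ha'⟩, rfl⟩
    exact ⟨l₁ * a, ⟨IC.mul_mem_left _ ha, Fm_lin_mul h.mem₁ ha'⟩, by simp⟩
  z₂mul i := by
    rintro _ ⟨a, ⟨ha, ha'⟩, rfl⟩
    exact ⟨l₂ * a, ⟨IC.mul_mem_left _ ha, Fm_lin_mul h.mem₂ ha'⟩, by simp⟩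
  sat i hi f h1 h2 := h.mem_Vf_of_Uf hc (h.satU hc (by omega) (Vf_le h1) (Vf_le h2)) h1
  gen i hi := by
    rintro _ ⟨f, ⟨hfC, hf⟩, rfl⟩
    obtain ⟨t, ht, a, ha, b, hb, c, hcc, rfl⟩ := h.genV hi hf hfC
    have ht' : t ∈ Fm n (i + 1) := by
      have := sub_mem (sub_mem (sub_mem hf (Fm_lin_mul h.mem₀ ha.2)) (Fm_lin_mul h.mem₁ hb.2))
        (Fm_lin_mul h.mem₂ hcc.2)
      convert this using 1
      ring
    have e : ev.toLinearMap (t + l₀ * a + l₁ * b + l₂ * c)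
        = ev a + ev l₁ * ev b + ev l₂ * ev c := by
      simp [(hc.zero_iff _ _ ht').2 ht, hc.one]
    rw [e]
    exact Submodule.add_mem_sup (Submodule.add_mem_sup ⟨a, ha, rfl⟩ (mul_mem_sc ⟨b, hb, rfl⟩))
      (mul_mem_sc ⟨c, hcc, rfl⟩)
  diff i hi := by
    have e1 := hc.finrank_Vf h.le i
    have e2 := hc.finrank_Vf h.le (i + 1)
    have e3 := hd i (by omega)
    have e4 := hdC i (by omega)
    zify at e1 e2
    linarith

end Frame
end Frame
end CliffordBound

/-! ### Existence of adapted nets and the genus bound -/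

namespace CliffordBound
open Module

section Existence
variable {n : ℕ} {IS IC : Ideal (MPoly n)} {l₀ l₁ : MPoly n} {s χ d : ℤ} {N₁ : ℕ}

/-- The primes to be avoided by the second linear form of the net; the zero ideal is included
in order to exclude the zero form. -/
def badPair (IS IC : Ideal (MPoly n)) (l₀ : MPoly n) : Set (Ideal (MPoly n)) :=
  bad (IS ⊔ Ideal.span {l₀}) ∪ bad (IC ⊔ Ideal.span {l₀}) ∪ {⊥}

theorem finite_badPair : (badPair IS IC l₀).Finite :=
  ((finite_bad _).union (finite_bad _)).union (Set.finite_singleton _)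

theorem exists_not_mem_badPair (hl : l₀ ∈ Fm n 1) (hl0 : l₀ ≠ 0) :
    ∀ p ∈ badPair IS IC l₀, ∃ f ∈ Fm n 1, f ∉ p := by
  rintro p ((hp | hp) | hp)
  · exact hp.2
  · exact hp.2
  · refine ⟨l₀, hl, ?_⟩
    rw [Set.mem_singleton_iff.1 hp]
    exact hl0

/-- A form avoiding the bad primes extends to an adapted net. The generation statements hold
since the Hilbert function of successive hyperplane sections drops to zero. -/
theorem exists_frame (hle : IS ≤ IC) (homS : IsHomogIdeal IS) (homC : IsHomogIdeal IC)
    (primeS : IS.IsPrime) (primeC : IC.IsPrime) (hl₀ : l₀ ∈ Fm n 1) (hnot : l₀ ∉ IC)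
    (hd : ∀ i, N₁ ≤ i → (finrank ℂ (degQ IS (i + 1)) : ℤ)
      = finrank ℂ (degQ IS i) + s * ((i : ℤ) + 1) + χ)
    (hdC : ∀ i, N₁ ≤ i → (finrank ℂ (degQ IC (i + 1)) : ℤ) = finrank ℂ (degQ IC i) + d)
    (hl₁ : l₁ ∈ Fm n 1) (hav : ∀ p ∈ badPair IS IC l₀, l₁ ∉ p) :
    ∃ l₂ N, N₁ ≤ N ∧ Frame IS IC l₀ l₁ l₂ N := by
  have hl00 : l₀ ≠ 0 := by rintro rfl; exact hnot (zero_mem _)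
  have hl10 : l₁ ≠ 0 := fun h => hav ⊥ (Or.inr rfl) (by rw [h]; exact zero_mem _)
  obtain ⟨NS, hNS⟩ := regular_of_avoid (IS ⊔ Ideal.span {l₀}) (l := l₁)
    fun p hp => hav p (Or.inl (Or.inl hp))
  obtain ⟨NC, hNC⟩ := regular_of_avoid (IC ⊔ Ideal.span {l₀}) (l := l₁)
    fun p hp => hav p (Or.inl (Or.inr hp))
  have homJS := homog_sup homS hl₀
  have homJC := homog_sup homC hl₀
  have homJS1 := homog_sup homJS hl₁
  obtain ⟨l₂, hl₂, hav₂⟩ := exists_avoid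
    (T := bad (IS ⊔ Ideal.span {l₀} ⊔ Ideal.span {l₁}) ∪ {⊥})
    ((finite_bad _).union (Set.finite_singleton _)) (by
      rintro p (hp | hp)
      · exact hp.2
      · refine ⟨l₀, hl₀, ?_⟩
        rw [Set.mem_singleton_iff.1 hp]
        exact hl00)
  have hl20 : l₂ ≠ 0 := fun h => hav₂ ⊥ (Or.inr rfl) (by rw [h]; exact zero_mem _)
  obtain ⟨N2, hN2⟩ := regular_of_avoid (IS ⊔ Ideal.span {l₀} ⊔ Ideal.span {l₁}) (l := l₂)
    fun p hp => hav₂ p (Or.inl hp)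
  have qS : ∀ i, N₁ ≤ i → (finrank ℂ (degQ (IS ⊔ Ideal.span {l₀}) (i + 1)) : ℤ)
      = s * ((i : ℤ) + 1) + χ := by
    intro i hi
    have e1 := finrank_degQ_sup homS hl₀ hl00 (i := i)
      fun f _ h => (primeS.mem_or_mem h).resolve_left fun h => hnot (hle h)
    have e2 := hd i hi
    zify at e1
    linarith
  have qC : ∀ i, N₁ ≤ i → (finrank ℂ (degQ (IC ⊔ Ideal.span {l₀}) (i + 1)) : ℤ) = d := by
    intro i hi
    have e1 := finrank_degQ_sup homC hl₀ hl00 (i := i)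
      fun f _ h => (primeC.mem_or_mem h).resolve_left hnot
    have e2 := hdC i hi
    zify at e1
    linarith
  have qC1 : ∀ i, N₁ + NC + 2 ≤ i →
      finrank ℂ (degQ (IC ⊔ Ideal.span {l₀} ⊔ Ideal.span {l₁}) i) = 0 := by
    intro i hi
    obtain ⟨j, rfl⟩ : ∃ j, i = j + 1 + 1 := ⟨i - 2, by omega⟩
    have e1 := finrank_degQ_sup homJC hl₁ hl10 (i := j + 1) (hNC _ (by omega))
    have e2 := qC j (by omega)
    have e3 := qC (j + 1) (by omega)
    omega
  have qS1 : ∀ i, N₁ + NS ≤ i →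
      (finrank ℂ (degQ (IS ⊔ Ideal.span {l₀} ⊔ Ideal.span {l₁}) (i + 1 + 1)) : ℤ) = s := by
    intro i hi
    have e1 := finrank_degQ_sup homJS hl₁ hl10 (i := i + 1) (hNS _ (by omega))
    have e2 := qS i (by omega)
    have e3 := qS (i + 1) (by omega)
    zify at e1
    push_cast at e3
    linarith
  have qS2 : ∀ i, N₁ + NS + N2 + 3 ≤ i →
      finrank ℂ (degQ (IS ⊔ Ideal.span {l₀} ⊔ Ideal.span {l₁} ⊔ Ideal.span {l₂}) i) = 0 := by
    intro i hi
    obtain ⟨j, rfl⟩ : ∃ j, i = j + 1 + 1 + 1 := ⟨i - 3, by omega⟩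
    have e1 := finrank_degQ_sup homJS1 hl₂ hl20 (i := j + 1 + 1) (hN2 _ (by omega))
    have e2 := qS1 j (by omega)
    have e3 := qS1 (j + 1) (by omega)
    omega
  refine ⟨l₂, N₁ + NS + NC + N2 + 3, by omega,
    { le := hle, homS := homS, homC := homC, prime := primeC, notMem := hnot, mem₀ := hl₀,
      mem₁ := hl₁, mem₂ := hl₂, regS := fun i hi => hNS i (by omega),
      regC := fun i hi => hNC i (by omega), genS := ?_, genC := ?_ }⟩
  · intro i hi f hf
    have h1 := mem_of_finrank_degQ (qS2 (i + 1) (by omega)) hf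
    obtain ⟨f₂, h2, h2', c, hc, rfl⟩ := decomp homJS1 hl₂ hf h1
    obtain ⟨f₁, h3, h3', b, hb, rfl⟩ := decomp homJS hl₁ h2' h2
    obtain ⟨t, h4, h4', a, ha, rfl⟩ := decomp homS hl₀ h3' h3
    exact ⟨t, h4, a, ha, b, hb, c, hc, rfl⟩
  · intro i hi f hf
    have h1 := mem_of_finrank_degQ (qC1 (i + 1) (by omega)) hf
    obtain ⟨f₁, h3, h3', b, hb, rfl⟩ := decomp homJC hl₁ hf h1
    obtain ⟨t, h4, h4', a, ha, rfl⟩ := decomp homC hl₀ h3' h3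
    exact ⟨t, h4, a, ha, b, hb, rfl⟩

/-- All but finitely many members of a pencil avoid finitely many ideals not containing its
first member. -/
theorem infinite_avoid {T : Set (Ideal (MPoly n))} (hT : T.Finite) {x y : MPoly n}
    (hx : ∀ p ∈ T, x ∉ p) :
    {c : ℂ | ∀ p ∈ T, x + MvPolynomial.C c * y ∉ p}.Infinite := by
  have h1 : (⋃ p ∈ T, {c : ℂ | x + MvPolynomial.C c * y ∈ p}).Finite := by
    refine hT.biUnion fun p hp => Set.Subsingleton.finite ?_
    intro c hc c' hc'
    by_contra hne
    have h2 : MvPolynomial.C (c - c')⁻¹ * (MvPolynomial.C c * y - MvPolynomial.C c' * y) = y := by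
      rw [← sub_mul, ← mul_assoc, ← map_sub, ← map_mul, inv_mul_cancel₀ (sub_ne_zero.2 hne),
        map_one, one_mul]
    have h3 : MvPolynomial.C c * y - MvPolynomial.C c' * y ∈ p := by
      have := sub_mem (show _ ∈ p from hc) (show _ ∈ p from hc')
      rwa [add_sub_add_left_eq_sub] at this
    have hy : y ∈ p := by rw [← h2]; exact p.mul_mem_left _ h3
    apply hx p hp
    have := sub_mem (show _ ∈ p from hc) (p.mul_mem_left (MvPolynomial.C c) hy)
    rwa [add_sub_cancel_right] at this
  refine (h1.infinite_compl).mono ?_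
  intro c hc p hp h
  exact hc (Set.mem_biUnion hp h)

end Existence

section Final

theorem hilbZ_natCast {n : ℕ} (I : Ideal (MPoly n)) (i : ℕ) :
    hilbZ I (i : ℤ) = finrank ℂ (degQ I i) := by
  unfold hilbZ hilbNat
  rw [show degQZ I (i : ℤ) = degQ I i by simp [degQZ]]

/-- The genus bound for ideals. The linear form `l₁` is chosen in a pencil for which
`ℂ(l₁/l₀)` is algebraically closed in the function field of the surface. -/
theorem genus_le (r : ℕ) (d s π pa g : ℤ) (hs : 0 < s) (hd : 0 < d)
    (hs2 : s ≤ 2 * (r : ℤ) - 4) (IS IC : Ideal (MPoly (r + 1)))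
    (homS : IsHomogIdeal IS) (primeS : IS.IsPrime) (hsnd : Nondeg IS) (hsinv : SurfInv IS s π pa)
    (homC : IsHomogIdeal IC) (primeC : IC.IsPrime) (hcnd : Nondeg IC) (hcinv : CurveInv IC d g)
    (hsub : IS ≤ IC) : g ≤ Gstar (r : ℤ) d s π pa := by
  obtain ⟨A, hA⟩ := hsinv
  obtain ⟨B, hB⟩ := hcinv
  have hS : ∀ i : ℕ, A.toNat + B.toNat ≤ i → 2 * (finrank ℂ (degQ IS i) : ℤ)
      = s * (i * (i + 1)) + 2 * (1 - π) * i + 2 * (1 + pa) := by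
    intro i hi
    rw [← hilbZ_natCast, hA i (by omega)]
    have h2 : 2 * ((i : ℤ) * (i + 1) / 2) = i * (i + 1) :=
      Int.mul_ediv_cancel' (Int.even_mul_succ_self i).two_dvd
    linear_combination s * h2
  have hC : ∀ i : ℕ, A.toNat + B.toNat ≤ i → (finrank ℂ (degQ IC i) : ℤ) = d * i + 1 - g := by
    intro i hi
    rw [← hilbZ_natCast, hB i (by omega)]
  have hdS : ∀ i : ℕ, A.toNat + B.toNat ≤ i → (finrank ℂ (degQ IS (i + 1)) : ℤ)
      = finrank ℂ (degQ IS i) + s * ((i : ℤ) + 1) + (1 - π) := by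
    intro i hi
    have e1 := hS i hi
    have e2 := hS (i + 1) (by omega)
    push_cast at e2
    linarith
  have hdC : ∀ i : ℕ, A.toNat + B.toNat ≤ i → (finrank ℂ (degQ IC (i + 1)) : ℤ)
      = finrank ℂ (degQ IC i) + d := by
    intro i hi
    have e1 := hC i hi
    have e2 := hC (i + 1) (by omega)
    push_cast at e2
    linarith
  have hl₀ : (MvPolynomial.X 0 : MPoly (r + 1)) ∈ Fm (r + 1) 1 := MvPolynomial.isHomogeneous_X ℂ 0
  have hl00 : (MvPolynomial.X 0 : MPoly (r + 1)) ≠ 0 := MvPolynomial.X_ne_zero 0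
  have hnotC : (MvPolynomial.X 0 : MPoly (r + 1)) ∉ IC := fun h => hl00 (hcnd _ hl₀ h)
  obtain ⟨F, _, _, ev, hch⟩ := exists_chart primeS (j₀ := (0 : Fin (r + 1)))
    fun h => hnotC (hsub h)
  set l₀ : MPoly (r + 1) := MvPolynomial.X 0 with hl₀def
  -- a first adapted net, used only to find a good pencil
  obtain ⟨x, hx, hxav⟩ := exists_avoid (finite_badPair (IS := IS) (IC := IC) (l₀ := l₀))
    (exists_not_mem_badPair hl₀ hl00)
  obtain ⟨y, N, hN, hfr⟩ := exists_frame hsub homS homC primeS primeC hl₀ hnotC hdS hdC hx hxav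
  have hy : y ∈ Fm (r + 1) 1 := hfr.mem₂
  have hseq := hfr.seqU hch (s := s) (χ := 1 - π) fun i hi => hdS i (by omega)
  obtain ⟨c, hc, hclosed⟩ := hseq.exists_closed hs (hch.one_mem hl₀ 0) Chart.mul_mem hch.top
    (infinite_avoid (finite_badPair (IS := IS) (IC := IC) (l₀ := l₀)) (y := y) hxav)
  -- the net adapted to a member of that pencil
  have hl₁ : x + MvPolynomial.C c * y ∈ Fm (r + 1) 1 := by
    refine add_mem hx ?_
    rw [← MvPolynomial.smul_eq_C_mul]
    exact Submodule.smul_mem _ _ hy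
  have hev : ev (x + MvPolynomial.C c * y) = ev x + algebraMap ℂ F c * ev y := by
    rw [map_add, map_mul]
    congr 2
    exact ev.commutes c
  rw [← hev] at hclosed
  obtain ⟨l₂, N', hN', hfr'⟩ :=
    exists_frame hsub homS homC primeS primeC hl₀ hnotC hdS hdC hl₁ hc
  have hU := hfr'.seqU hch (s := s) (χ := 1 - π) fun i hi => hdS i (by omega)
  have hV := hfr'.seqV hch (s := s) (χ := 1 - π) (d := d) (fun i hi => hdS i (by omega))
    (fun i hi => hdC i (by omega))
  have hU' : PencilSeq (ev (x + MvPolynomial.C c * y)) (ev l₂) (N' + 1) s (1 - π) (Uf ev) :=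
    { hU with
      sat := fun i hi => hU.sat i (by omega)
      gen := fun i hi => hU.gen i (by omega)
      diff := fun i hi => hU.diff i (by omega) }
  have hsurf : SurfaceSeq (ev (x + MvPolynomial.C c * y)) (ev l₂) (N' + 1) s (1 - π) (Uf ev) :=
    { seq := hU', one_mem := hch.one_mem hl₀, mul_mem := Chart.mul_mem, top := hch.top,
      closed := hclosed }
  have hr : (finrank ℂ (Uf ev 1) : ℤ) = r + 1 := by
    rw [hch.finrank_Uf]
    have e := finrank_degQ IS 1
    have e0 : pc IS 1 = ⊥ := by
      rw [eq_bot_iff]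
      rintro f ⟨h1, h2⟩
      exact hsnd f h2 h1
    rw [e0, finrank_bot, finrank_Fm_one] at e
    exact_mod_cast e
  have key := core_bound (g := g) (pa := pa) (d := d) (r := r) hsurf hV Chart.mul_mem_Vf
    (fun i hi => by rw [hch.finrank_Uf]; exact hS i (by omega))
    (fun i hi => by
      have e1 := hch.finrank_Vf hsub i
      have e2 := hC i (by omega)
      rw [hch.finrank_Uf]
      zify at e1
      linarith) hs hd hr hs2
  exact key

end Final
end CliffordBound

/-- Corollary 3.10.  Let `S ⊆ ℙ^r` be an integral nondegenerate surface of
degree `s` with `2 ≤ r-1 ≤ s ≤ 2r-4`, sectional genus `π` and arithmetic genus `p_a(S)`, and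
let `C ⊆ S` be an integral nondegenerate curve of degree `d ≥ s⁴/(2(r-2))`.  Then
`p_a(C) ≤ G*(r,d,s,π,p_a(S))`. -/
theorem statement_18 (r : ℕ) (d s π pa g : ℤ) (hr : 3 ≤ r)
    (hs1 : (r : ℤ) - 1 ≤ s) (hs2 : s ≤ 2 * (r : ℤ) - 4)
    (IS IC : Ideal (MPoly (r + 1)))
    (hsurf : IsSurface IS) (hsnd : Nondeg IS) (hsinv : SurfInv IS s π pa)
    (hcurve : IsCurve IC) (hcnd : Nondeg IC) (hcinv : CurveInv IC d g)
    (hsub : IS ≤ IC)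
    (hd : (s : ℚ) ^ 4 / (2 * ((r : ℚ) - 2)) ≤ (d : ℚ)) :
    g ≤ Gstar (r : ℤ) d s π pa := by
  have hs : 0 < s := by omega
  have hd0 : 0 < d := by
    have h1 : (0 : ℚ) < s := by exact_mod_cast hs
    have h2 : (3 : ℚ) ≤ r := by exact_mod_cast hr
    have h3 : (0 : ℚ) < 2 * ((r : ℚ) - 2) := by linarith
    have h4 : (0 : ℚ) < d := lt_of_lt_of_le (by positivity) hd
    exact_mod_cast h4
  exact CliffordBound.genus_le r d s π pa g hs hd0 hs2 IS IC hsurf.1 hsurf.2.1 hsnd hsinv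
    hcurve.1 hcurve.2.1 hcnd hcinv hsub
end

section
/- Let r, s, π, ε be integers with s ≥ 1 and 0 ≤ ε ≤ s−1, set π₀ := s−r+1, and let k, d, μ, m be integers with k−1 = μs+ε and d−1 = ms+ε. Set a := −(k+s−1−ε)/s (so a = −(μ+1), an integer). Then binom(m,2)·s + m(ε+π) + π − (1/2)·a²·s + a·(π+ε−s/2) + G*(r,k,s,π, −binom(π₀−π+1, 2)) − (1−k) = G*(r,d,s,π, −binom(π₀−π+1, 2)). -/
/-! Substituting `a = -(μ + 1)` and the explicit values of `G*`, all terms of the right-hand side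
cancel against equal terms on the left, and what remains is the polynomial identity
`π - (μ+1)²s/2 - (μ+1)(π + ε - s/2) + binom(μ,2)s + μ(ε + π) + μs + ε = 0`. -/

open scoped BigOperators

/-- Since `z * (z - 1)` is even, the floor division in `binom2` is exact. -/
lemma binom2_cast (z : ℤ) : (binom2 z : ℚ) = z * (z - 1) / 2 := by
  have h : (2 : ℤ) ∣ z * (z - 1) := (Int.even_mul_pred_self z).two_dvd
  unfold binom2
  rw [Int.cast_div h (by norm_num)]
  push_cast
  ring

/-- `Gstar` evaluated through a given Euclidean division `d - 1 = m * s + ε`. -/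
lemma Gstar_of_eq (r π p : ℤ) {s ε d m : ℤ} (hε1 : 0 ≤ ε) (hε2 : ε ≤ s - 1)
    (hd : d - 1 = m * s + ε) :
    Gstar r d s π p
      = binom2 m * s + m * (ε + π) - p + max 0 ((2 * π - (s - 1 - ε)) / 2) := by
  obtain ⟨hq, hr⟩ : (d - 1) / s = m ∧ (d - 1) % s = ε :=
    (Int.ediv_emod_unique (by omega)).2 ⟨by rw [hd]; ring, hε1, by omega⟩
  rw [Gstar, hq, hr]

/-- the genus computation in the proof of Theorem 1.1(c).  With
`k-1 = μs+ε`, `d-1 = ms+ε` and `a := -(k+s-1-ε)/s`, one has `a = -(μ+1)` and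
`binom(m,2)s + m(ε+π) + π - a²s/2 + a(π+ε-s/2) + G*(r,k,s,π,-binom(π₀-π+1,2)) - (1-k)
  = G*(r,d,s,π,-binom(π₀-π+1,2))`. -/
theorem statement_19 (r s π ε k d μ m : ℤ) (hs : 1 ≤ s)
    (hε1 : 0 ≤ ε) (hε2 : ε ≤ s - 1)
    (hk : k - 1 = μ * s + ε) (hd : d - 1 = m * s + ε) :
    -(((k : ℚ) + s - 1 - ε) / s) = -((μ : ℚ) + 1) ∧
    ((binom2 m * s + m * (ε + π) + π : ℤ) : ℚ)
        - (1 / 2) * (-(((k : ℚ) + s - 1 - ε) / s)) ^ 2 * s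
        + (-(((k : ℚ) + s - 1 - ε) / s)) * ((π : ℚ) + ε - (s : ℚ) / 2)
        + (Gstar r k s π (-(binom2 (s - r + 1 - π + 1))) : ℚ)
        - (1 - (k : ℚ))
      = (Gstar r d s π (-(binom2 (s - r + 1 - π + 1))) : ℚ) := by
  have hs0 : (s : ℚ) ≠ 0 := by exact_mod_cast (by omega : s ≠ 0)
  have hkq : (k : ℚ) = μ * s + ε + 1 := by
    have h : k = μ * s + ε + 1 := by linarith
    exact_mod_cast h
  have ha : -(((k : ℚ) + s - 1 - ε) / s) = -((μ : ℚ) + 1) := by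
    rw [hkq]
    field_simp
    ring
  refine ⟨ha, ?_⟩
  rw [ha, Gstar_of_eq r π _ hε1 hε2 hk, Gstar_of_eq r π _ hε1 hε2 hd]
  push_cast
  rw [binom2_cast μ, hkq]
  ring
end
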